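/- arXiv:2506.20909 — 6 statements merged into one kernel-verified Lean document; each statement's English description precedes it below -/
import Mathlib

section
/- For every ν ∈ ℕ and every polynomial P ∈ ℤ[a, z₁, …, z_ν], there exists a polynomial Q̃ ∈ ℤ[a, z₁, …, z₁₁] in 11 unknowns such that for all a ∈ ℕ: (∃ z₁, …, z_ν ∈ ℕ with P(a, z₁, …, z_ν) = 0) if and only if (∃ z₁, …, z₁₁ ∈ ℤ with Q̃(a, z₁, …, z₁₁) = 0). -/
def pD (a C : ℤ) : ℤ := (a ^ 2 - 1) * C ^ 2 + 1
def pE (a C x : ℤ) : ℤ := 2 * C ^ 2 * pD a C * x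
def pF (a C x : ℤ) : ℤ := (a ^ 2 - 1) * (pE a C x) ^ 2 + 1
def pG (a C x : ℤ) : ℤ := 1 + 2 * C ^ 2 * pD a C * pF a C x - (a - 1) * (pF a C x - 1)
def pH (a B C x y : ℤ) : ℤ := C + B * pF a C x + (2 * y - 1) * C * pF a C x
def pI (a B C x y : ℤ) : ℤ := ((pG a C x) ^ 2 - 1) * (pH a B C x y) ^ 2 + 1

theorem pD_pos {a : ℤ} (ha : 1 ≤ a) (C : ℤ) : 1 ≤ pD a C := by
  unfold pD; nlinarith [mul_nonneg (by nlinarith : (0:ℤ) ≤ a ^ 2 - 1) (sq_nonneg C)]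

theorem pF_pos {a : ℤ} (ha : 1 ≤ a) (C x : ℤ) : 1 ≤ pF a C x := by
  unfold pF; nlinarith [mul_nonneg (by nlinarith : (0:ℤ) ≤ a ^ 2 - 1) (sq_nonneg (pE a C x))]

theorem pG_ge {a : ℤ} (ha : 1 ≤ a) {C : ℤ} (hC : C ≠ 0) (x : ℤ) : 2 ≤ pG a C x := by
  have h1 : 1 ≤ C ^ 2 := by have := sq_pos_of_ne_zero hC; omega
  have hF := pF_pos ha C x
  have hD : a ^ 2 ≤ pD a C := by
    unfold pD; nlinarith [mul_nonneg (by nlinarith : (0:ℤ) ≤ a ^ 2 - 1) (by linarith : 0 ≤ C ^ 2 - 1)]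
  have h2 : a ^ 2 ≤ C ^ 2 * pD a C := by nlinarith
  have h3 : a ^ 2 * pF a C x ≤ C ^ 2 * pD a C * pF a C x := by nlinarith
  unfold pG
  nlinarith [mul_nonneg (by nlinarith : 0 ≤ a ^ 2 - a) (by linarith : 0 ≤ pF a C x)]

theorem pI_pos {a : ℤ} (ha : 1 ≤ a) (B C x y : ℤ) : 1 ≤ pI a B C x y := by
  by_cases hC : C = 0
  · subst hC; simp [pI, pG, pH, pF, pE, pD]
  · have := pG_ge ha hC x
    unfold pI
    nlinarith [mul_nonneg (by nlinarith : (0:ℤ) ≤ pG a C x ^ 2 - 1) (sq_nonneg (pH a B C x y))]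

theorem cop_DF (a C x : ℤ) : IsCoprime (pD a C) (pF a C x) := by
  refine ⟨-((a ^ 2 - 1) * (2 * C ^ 2 * x) * pE a C x), 1, ?_⟩
  unfold pF pE; ring

theorem pG_modF (a C x : ℤ) : pF a C x ∣ pG a C x - a := by
  refine ⟨2 * C ^ 2 * pD a C - (a - 1), ?_⟩
  unfold pG; ring

theorem pH_modF (a B C x y : ℤ) : pF a C x ∣ pH a B C x y - C := by
  refine ⟨B + (2 * y - 1) * C, ?_⟩
  unfold pH; ring

theorem pI_modF (a B C x y : ℤ) : pF a C x ∣ pI a B C x y - pD a C := by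
  have h1 : pG a C x ≡ a [ZMOD pF a C x] := (Int.modEq_iff_dvd.2 (by
    rw [← dvd_neg]; simpa using pG_modF a C x))
  have h2 : pH a B C x y ≡ C [ZMOD pF a C x] := (Int.modEq_iff_dvd.2 (by
    rw [← dvd_neg]; simpa using pH_modF a B C x y))
  have h3 : pI a B C x y ≡ pD a C [ZMOD pF a C x] := by
    unfold pI pD
    exact Int.ModEq.add_right _ (Int.ModEq.mul ((h1.pow 2).sub_right _) (h2.pow 2))
  exact h3.symm.dvd

theorem cop_FI (a B C x y : ℤ) : IsCoprime (pF a C x) (pI a B C x y) := by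
  obtain ⟨k, hk⟩ := pI_modF a B C x y
  have : pI a B C x y = pD a C + pF a C x * k := by linarith
  rw [this]
  exact IsCoprime.add_mul_left_right (cop_DF a C x).symm k

theorem pF_sub_one (a C x : ℤ) : pF a C x - 1 = 2 * C * pD a C * ((a ^ 2 - 1) * C * x * pE a C x) := by
  unfold pF pE; ring

theorem pG_sub_one (a C x : ℤ) : ∃ k, pG a C x - 1 = 2 * C * pD a C * k := by
  refine ⟨C * pF a C x - (a - 1) * ((a ^ 2 - 1) * C * x * pE a C x), ?_⟩
  have := pF_sub_one a C x
  unfold pG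
  rw [this]; ring

theorem cop_DI (a B C x y : ℤ) : IsCoprime (pD a C) (pI a B C x y) := by
  obtain ⟨k, hk⟩ := pG_sub_one a C x
  refine ⟨-(2 * C * k * (pG a C x + 1) * (pH a B C x y) ^ 2), 1, ?_⟩
  have : pI a B C x y = (pG a C x - 1) * (pG a C x + 1) * (pH a B C x y) ^ 2 + 1 := by
    unfold pI; ring
  rw [this, hk]; ring

theorem sq_of_cop {p q : ℤ} (h : IsCoprime p q) (hp : 0 < p) (hq : 0 < q) (hs : IsSquare (p * q)) :
    IsSquare p ∧ IsSquare q := by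
  obtain ⟨r, hr⟩ := hs
  have key : ∀ p q : ℤ, IsCoprime p q → 0 < p → p * q = r * r → IsSquare p := by
    intro p q h hp hr
    obtain ⟨s, hs⟩ := Int.sq_of_isCoprime h (by rw [hr, sq])
    rcases hs with hs | hs
    · exact ⟨s, by rw [hs, sq]⟩
    · nlinarith [sq_nonneg s]
  exact ⟨key p q h hp hr, key q p h.symm hq (by rw [mul_comm, hr])⟩

theorem squares_of_prod {a : ℤ} (ha : 1 ≤ a) {B C x y : ℤ}
    (h : IsSquare (pD a C * pF a C x * pI a B C x y)) :
    IsSquare (pD a C) ∧ IsSquare (pF a C x) ∧ IsSquare (pI a B C x y) := by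
  have hD := pD_pos ha C
  have hF := pF_pos ha C x
  have hI := pI_pos ha B C x y
  obtain ⟨h1, h2⟩ := sq_of_cop (IsCoprime.mul_left (cop_DI a B C x y) (cop_FI a B C x y))
    (by positivity) (by linarith) h
  obtain ⟨h3, h4⟩ := sq_of_cop (cop_DF a C x) (by linarith) (by linarith) h1
  exact ⟨h3, h4, h2⟩

open Pell in
theorem eq_pell_int {a : ℕ} (a1 : 1 < a) {C s : ℤ} (h : ((a : ℤ) ^ 2 - 1) * C ^ 2 + 1 = s * s) :
    ∃ n, s.natAbs = xn a1 n ∧ C.natAbs = yn a1 n := by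
  apply eq_pell a1
  have : (((a ^ 2 - 1 : ℕ) : ℤ)) = (a : ℤ) ^ 2 - 1 := by
    rw [Nat.cast_sub (by nlinarith)]; push_cast; ring
  have h2 : s.natAbs * s.natAbs = (a * a - 1) * C.natAbs * C.natAbs + 1 := by
    zify
    rw [abs_mul_abs_self, mul_assoc, abs_mul_abs_self, ← h]
    rw [← sq a, this]; ring
  show s.natAbs * s.natAbs - (a * a - 1) * C.natAbs * C.natAbs = 1
  omega

open Pell in
theorem pell_eq_int {a : ℕ} (a1 : 1 < a) (n : ℕ) :
    ((a : ℤ) ^ 2 - 1) * (yn a1 n : ℤ) ^ 2 + 1 = (xn a1 n : ℤ) * xn a1 n := by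
  have h := pell_eqz a1 n
  rw [dz_val a1] at h
  simp only [xz, yz, az] at h
  linarith

open Pell in
theorem xn_two_mul {a : ℕ} (a1 : 1 < a) (n : ℕ) :
    ((xn a1 (2 * n) : ℕ) : ℤ) = 2 * (xn a1 n : ℤ) ^ 2 - 1 := by
  have h := pell_eqz a1 n
  have h2 := xn_add a1 n n
  simp only [xz, yz] at h
  rw [two_mul, h2]
  push_cast
  linarith

open Pell in
theorem yn_two_mul {a : ℕ} (a1 : 1 < a) (n : ℕ) :
    yn a1 (2 * n) = 2 * xn a1 n * yn a1 n := by
  rw [two_mul, yn_add]; ring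

set_option maxHeartbeats 2000000 in
open Pell in
theorem pell_suff {a : ℕ} (a1 : 1 < a) {B : ℕ} (hB : 0 < B) (hBa : 2 * B < a - 1) {C x y : ℤ}
    (hC : ((a : ℤ) - 1) ∣ C - B) (hx : x ≠ 0)
    (h : IsSquare (pD a C * pF a C x * pI a B C x y)) : C = yn a1 B := by
  have ha : (1 : ℤ) ≤ a := by exact_mod_cast a1.le
  have hBa' : 2 * (B : ℤ) < a - 1 := by omega
  obtain ⟨h1, h2, h3⟩ := squares_of_prod ha h
  have hC0 : C ≠ 0 := by
    rintro rfl
    have := Int.le_of_dvd (by omega) ((dvd_neg.2 hC))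
    omega
  obtain ⟨s, hs⟩ := h1
  obtain ⟨u, hu⟩ := h2
  obtain ⟨r, hr⟩ := h3
  obtain ⟨i, hi1, hi2⟩ := eq_pell_int a1 hs
  obtain ⟨m, hm1, hm2⟩ := eq_pell_int a1 hu
  have hG := pG_ge ha hC0 x
  obtain ⟨G, hGG⟩ := Int.eq_ofNat_of_zero_le (by linarith : 0 ≤ pG a C x)
  have G1 : 1 < G := by omega
  have hr' : ((G : ℤ) ^ 2 - 1) * (pH a B C x y) ^ 2 + 1 = r * r := by rw [← hr, pI, hGG]
  obtain ⟨j, hj1, hj2⟩ := eq_pell_int G1 hr'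
  have hipos : 0 < i := by
    rcases Nat.eq_zero_or_pos i with h0 | h0
    · subst h0; simp at hi2; exact absurd hi2 hC0
    · exact h0
  have hDpos := pD_pos ha C
  have hE0 : pE a C x ≠ 0 := by
    unfold pE
    have : pD a C ≠ 0 := by omega
    positivity
  have hCabs : (yn a1 i : ℤ) ^ 2 = C ^ 2 := by rw [← hi2]; simp
  have hDs : (xn a1 i : ℤ) ^ 2 = pD a C := by rw [← hi1, hs]; simp [sq]
  have hEm : (pE a C x).natAbs = 2 * (yn a1 i) ^ 2 * (xn a1 i) ^ 2 * x.natAbs := by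
    zify
    rw [hCabs, hDs, pE, abs_mul, abs_of_nonneg (by positivity)]
  have hx1 : 1 ≤ x.natAbs := by omega
  have hxi := x_pos a1 i
  have hyi : 0 < yn a1 i := by have := yn_ge_n a1 i; omega
  have him : 2 * i ≤ m := by
    apply (strictMono_y a1).le_iff_le.1
    rw [yn_two_mul, ← hm2, hEm]
    calc 2 * xn a1 i * yn a1 i = 2 * yn a1 i * xn a1 i * 1 := by ring
      _ ≤ 2 * (yn a1 i) ^ 2 * (xn a1 i) ^ 2 * x.natAbs := by
        gcongr
        · nlinarith
        · nlinarith
  have hym : yn a1 i ∣ m := by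
    apply dvd_of_ysq_dvd
    rw [← hm2, hEm]
    exact ⟨2 * (xn a1 i) ^ 2 * x.natAbs, by ring⟩
  -- congruences modulo `xn m`
  have hxF : (xn a1 m : ℤ) ∣ pF a C x := by
    rw [← hm1, hu]; simp
  have hGa : G ≡ a [MOD xn a1 m] := by
    rw [← Int.natCast_modEq_iff]
    apply Int.ModEq.symm
    rw [Int.modEq_iff_dvd, ← hGG]
    exact hxF.trans (pG_modF a C x)
  have hxx := (xy_modEq_of_modEq G1 a1 hGa j).1
  have hsq : (xn a1 j : ℤ) ^ 2 ≡ (xn a1 i : ℤ) ^ 2 [ZMOD xn a1 m] := by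
    have e1 : (xn a1 j : ℤ) ^ 2 ≡ (xn G1 j : ℤ) ^ 2 [ZMOD xn a1 m] :=
      ((Int.natCast_modEq_iff.2 hxx).pow 2).symm
    refine e1.trans ?_
    have e2 : (xn G1 j : ℤ) ^ 2 = pI a B C x y := by rw [← hj1, hr]; simp [sq]
    rw [e2, hDs]
    apply Int.ModEq.symm
    rw [Int.modEq_iff_dvd]
    exact hxF.trans (pI_modF a B C x y)
  have hx2 : xn a1 (2 * j) ≡ xn a1 (2 * i) [MOD xn a1 m] := by
    rw [← Int.natCast_modEq_iff, xn_two_mul, xn_two_mul]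
    exact (hsq.mul_left 2).sub_right 1
  have hji := modEq_of_xn_modEq a1 (by omega) him hx2
  -- pass to modulus `2 * yn i`
  obtain ⟨q, hq⟩ := hym
  have hji' : ((2 * yn a1 i : ℕ) : ℤ) ∣ (j : ℤ) - i ∨ ((2 * yn a1 i : ℕ) : ℤ) ∣ (j : ℤ) + i := by
    rcases hji with h | h
    · left
      have h := (Nat.modEq_iff_dvd.1 h.symm)
      obtain ⟨c, hc⟩ := h
      refine ⟨q * c, ?_⟩
      rw [hq] at hc
      push_cast at hc ⊢
      linarith
    · right
      have h := (Nat.modEq_iff_dvd.1 h.symm)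
      obtain ⟨c, hc⟩ := h
      refine ⟨q * c, ?_⟩
      rw [hq] at hc
      push_cast at hc ⊢
      linarith
  have hCd : ∀ z : ℤ, (2 * C ∣ z ↔ ((2 * yn a1 i : ℕ) : ℤ) ∣ z) := by
    intro z
    rw [← hi2]; push_cast
    rcases abs_choice C with h | h <;> rw [h]
    rw [mul_neg, neg_dvd]
  -- `j ≡ ± B`
  have hjH : ((2 * yn a1 i : ℕ) : ℤ) ∣ (j : ℤ) - (pH a B C x y).natAbs := by
    rw [← hCd]
    have h := (Nat.modEq_iff_dvd.1 (yn_modEq_a_sub_one G1 j))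
    rw [← hj2, Nat.cast_sub G1.le, ← hGG] at h
    obtain ⟨k, hk⟩ := pG_sub_one a C x
    refine Dvd.dvd.trans ?_ h
    push_cast
    rw [hk, mul_assoc]
    exact Dvd.intro _ rfl
  have hHB : ((2 * yn a1 i : ℕ) : ℤ) ∣ pH a B C x y - B := by
    rw [← hCd]
    have := pF_sub_one a C x
    have e : pH a B C x y - B = (B + (2 * y - 1) * C) * (pF a C x - 1) + 2 * C * y := by
      unfold pH; ring
    rw [e, this]
    refine ⟨(B + (2 * y - 1) * C) * pD a C * ((a ^ 2 - 1) * C * x * pE a C x) + y, by ring⟩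
  have hjB : ((2 * yn a1 i : ℕ) : ℤ) ∣ (j : ℤ) - B ∨ ((2 * yn a1 i : ℕ) : ℤ) ∣ (j : ℤ) + B := by
    push_cast at hjH
    rcases abs_choice (pH a B C x y) with h | h <;> rw [h] at hjH
    · left
      have := dvd_add hjH hHB
      ring_nf at this ⊢; exact this
    · right
      have := dvd_sub hjH hHB
      ring_nf at this ⊢; exact this
  have hiB : ((2 * yn a1 i : ℕ) : ℤ) ∣ (i : ℤ) - B ∨ ((2 * yn a1 i : ℕ) : ℤ) ∣ (i : ℤ) + B := by
    rcases hji' with h1 | h1 <;> rcases hjB with h2 | h2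
    · left; have := dvd_sub h2 h1; ring_nf at this ⊢; exact this
    · right; have := dvd_sub h2 h1; ring_nf at this ⊢; exact this
    · right; have := dvd_sub h1 h2; ring_nf at this ⊢; exact this
    · left; have := dvd_sub h1 h2; ring_nf at this ⊢; exact this
  have hBy : B ≤ yn a1 i := by
    rw [← hi2]
    obtain ⟨c, hc⟩ := hC
    rcases eq_or_ne c 0 with h0 | h0
    · subst h0; omega
    · have h5 : |(a : ℤ) - 1| ≤ |C - B| := by
        rw [hc, abs_mul]
        have := abs_pos.2 h0
        nlinarith [abs_nonneg ((a:ℤ) - 1)]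
      rw [abs_of_pos (by omega)] at h5
      rcases abs_cases (C - B) with h6 | h6 <;> omega
  have hiy := yn_ge_n a1 i
  have hiB' : i = B := by
    rcases hiB with h1 | h1
    · by_contra hne
      have h7 := Int.le_of_dvd (b := |(i : ℤ) - B|) (abs_pos.2 (by omega)) ((dvd_abs _ _).2 h1)
      rcases abs_cases ((i : ℤ) - B) with h6 | h6 <;> push_cast at * <;> omega
    · have h7 := Int.le_of_dvd (by omega) h1
      push_cast at *; omega
  subst hiB'
  rcases Int.natAbs_eq C with h6 | h6
  · rw [h6, hi2]
  · exfalso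
    rw [hi2] at h6
    have h := (Nat.modEq_iff_dvd.1 (yn_modEq_a_sub_one a1 i))
    rw [Nat.cast_sub a1.le] at h
    push_cast at h
    rw [h6] at hC
    have h8 := dvd_sub h hC
    have h8 : ((a : ℤ) - 1) ∣ 2 * i := by ring_nf at h8 ⊢; exact h8
    have := Int.le_of_dvd (by omega) h8
    omega

theorem pell_mult_exists {d : ℤ} (hd : 0 < d) (hns : ¬ IsSquare d) {M : ℤ} (hM : M ≠ 0) :
    ∃ v : ℤ, v ≠ 0 ∧ IsSquare (d * (M * v) ^ 2 + 1) := by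
  have h1 : 0 < d * M ^ 2 := by positivity
  have h2 : ¬ IsSquare (d * M ^ 2) := by
    rintro ⟨r, hr⟩
    apply hns
    have : M ^ 2 ∣ r ^ 2 := ⟨d, by rw [sq r, ← hr]; ring⟩
    obtain ⟨c, hc⟩ := (Int.pow_dvd_pow_iff two_ne_zero).1 this
    refine ⟨c, ?_⟩
    have hM2 : M ^ 2 ≠ 0 := by positivity
    apply mul_right_cancel₀ hM2
    rw [hr, hc]; ring
  obtain ⟨u, v, huv, hv⟩ := Pell.exists_of_not_isSquare h1 h2
  exact ⟨v, hv, u, by linarith [huv]⟩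

theorem not_sq_sq_sub_one {a : ℤ} (ha : 2 ≤ a) : ¬ IsSquare (a ^ 2 - 1) := by
  rintro ⟨r, hr⟩
  rw [← abs_mul_abs_self r] at hr
  have := abs_nonneg r
  rcases lt_or_ge (|r|) a with h | h
  · nlinarith
  · nlinarith

open Pell in
theorem pell_nec {a : ℕ} (a1 : 1 < a) {B : ℕ} (hB : 0 < B) {C : ℤ} (hC : C = yn a1 B) :
    ∃ x y : ℤ, x ≠ 0 ∧ IsSquare (pD a C * pF a C x * pI a B C x y) := by
  have ha : (1 : ℤ) ≤ a := by exact_mod_cast a1.le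
  have hC0 : 0 < C := by have := yn_ge_n a1 B; omega
  have hDpos := pD_pos ha C
  obtain ⟨x, hx, hF⟩ := pell_mult_exists (d := (a : ℤ) ^ 2 - 1) (by nlinarith)
    (not_sq_sq_sub_one (by omega)) (M := 2 * C ^ 2 * pD a C) (by positivity)
  have hF' : IsSquare (pF a C x) := hF
  have hG := pG_ge ha hC0.ne' x
  obtain ⟨G, hGG⟩ := Int.eq_ofNat_of_zero_le (by linarith : 0 ≤ pG a C x)
  have G1 : 1 < G := by omega
  have hFpos := pF_pos ha C x
  have e1 : pF a C x ∣ (yn G1 B : ℤ) - C := by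
    obtain ⟨F, hFF⟩ := Int.eq_ofNat_of_zero_le (by linarith : 0 ≤ pF a C x)
    have hGa : a ≡ G [MOD F] := by
      rw [← Int.natCast_modEq_iff, Int.modEq_iff_dvd, ← hGG, ← hFF]
      exact pG_modF a C x
    have := Nat.modEq_iff_dvd.1 (xy_modEq_of_modEq a1 G1 hGa B).2
    rw [hC, ← hC, hFF]; rwa [← hC] at this
  have e2 : 2 * C ∣ (yn G1 B : ℤ) - B := by
    have h := (Nat.modEq_iff_dvd.1 (yn_modEq_a_sub_one G1 B).symm)
    rw [Nat.cast_sub G1.le, ← hGG] at h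
    obtain ⟨k, hk⟩ := pG_sub_one a C x
    refine Dvd.dvd.trans ?_ h
    push_cast
    rw [hk, mul_assoc]
    exact Dvd.intro _ rfl
  have hF1 := pF_sub_one a C x
  have cop : IsCoprime (pF a C x) (2 * C) :=
    ⟨1, -(pD a C * ((a ^ 2 - 1) * C * x * pE a C x)), by linear_combination hF1⟩
  have f1 : pF a C x ∣ (yn G1 B : ℤ) - C - B * pF a C x + C * pF a C x := by
    obtain ⟨c, hc⟩ := e1
    exact ⟨c - B + C, by rw [hc]; ring⟩
  have f2 : 2 * C ∣ (yn G1 B : ℤ) - C - B * pF a C x + C * pF a C x := by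
    obtain ⟨c, hc⟩ := e2
    refine ⟨c + (C - B) * pD a C * ((a ^ 2 - 1) * C * x * pE a C x), ?_⟩
    linear_combination hc + (C - B) * hF1
  obtain ⟨y, hy⟩ := cop.mul_dvd f1 f2
  refine ⟨x, y, hx, ?_⟩
  have hH : pH a B C x y = yn G1 B := by unfold pH; linear_combination -hy
  have hD : IsSquare (pD a C) := ⟨xn a1 B, by rw [pD, hC, pell_eq_int]⟩
  have hI : IsSquare (pI a B C x y) := ⟨xn G1 B, by rw [pI, hH, hGG, pell_eq_int]⟩
  exact (hD.mul hF').mul hI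


def sg (n : ℕ) : ℕ := (Nat.digits 2 n).sum

theorem sg_zero : sg 0 = 0 := by simp [sg]

theorem sg_two_mul (n : ℕ) : sg (2 * n) = sg n := by
  rcases Nat.eq_zero_or_pos n with h | h
  · subst h; rfl
  · unfold sg
    rw [Nat.digits_base_mul (by norm_num) h]; simp

theorem sg_two_mul_add_one (n : ℕ) : sg (2 * n + 1) = sg n + 1 := by
  unfold sg
  have h : 2 * n + 1 ≠ 0 := by omega
  rw [Nat.digits_def' (by norm_num) (by omega)]
  have h1 : (2 * n + 1) % 2 = 1 := by omega
  have h2 : (2 * n + 1) / 2 = n := by omega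
  rw [h1, h2, List.sum_cons, add_comm]

theorem sg_succ_le (n : ℕ) : sg (n + 1) ≤ sg n + 1 := by
  induction n using Nat.strong_induction_on with
  | _ n ih =>
    rcases Nat.even_or_odd' n with ⟨k, h | h⟩
    · subst h; rw [sg_two_mul_add_one, sg_two_mul]
    · subst h
      rw [show 2 * k + 1 + 1 = 2 * (k + 1) by ring, sg_two_mul, sg_two_mul_add_one]
      have := ih k (by omega)
      omega

theorem sg_add (S T : ℕ) : sg (S + T) ≤ sg S + sg T ∧ (sg (S + T) = sg S + sg T ↔ S &&& T = 0) := by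
  induction S using Nat.strong_induction_on generalizing T with
  | _ S ih =>
    rcases Nat.eq_zero_or_pos S with h0 | h0
    · subst h0; simp [sg_zero]
    have hand : S &&& T = 0 ↔ (S / 2 &&& T / 2 = 0 ∧ ¬ (S % 2 = 1 ∧ T % 2 = 1)) := by
      rw [← Nat.and_div_two]
      have := Nat.and_mod_two_eq_one (a := S) (b := T)
      constructor
      · intro h; rw [h] at this ⊢; simp at this ⊢; tauto
      · rintro ⟨h1, h2⟩
        rw [← this] at h2; omega
    obtain ⟨h1, h2⟩ := ih (S / 2) (by omega) (T / 2)
    rw [hand, ← h2]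
    generalize hs : S / 2 = s at *
    generalize ht : T / 2 = t at *
    rcases Nat.mod_two_eq_zero_or_one S with e1 | e1 <;>
      rcases Nat.mod_two_eq_zero_or_one T with e2 | e2
    · rw [show S + T = 2 * (s + t) by omega, show S = 2 * s by omega, show T = 2 * t by omega]
      simp only [sg_two_mul]; omega
    · rw [show S + T = 2 * (s + t) + 1 by omega, show S = 2 * s by omega, show T = 2 * t + 1 by omega]
      simp only [sg_two_mul, sg_two_mul_add_one]; omega
    · rw [show S + T = 2 * (s + t) + 1 by omega, show S = 2 * s + 1 by omega, show T = 2 * t by omega]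
      simp only [sg_two_mul, sg_two_mul_add_one]; omega
    · rw [show S + T = 2 * (s + t + 1) by omega, show S = 2 * s + 1 by omega, show T = 2 * t + 1 by omega]
      simp only [sg_two_mul, sg_two_mul_add_one]
      have := sg_succ_le (s + t)
      omega

theorem sg_split (k x y : ℕ) (hx : x < 2 ^ k) : sg (x + 2 ^ k * y) = sg x + sg y := by
  induction k generalizing x with
  | zero => 
    have : x = 0 := by omega
    subst this; simp [sg_zero]
  | succ k ih =>
    have hx2 : x / 2 < 2 ^ k := by rw [pow_succ] at hx; omega
    have h := ih (x / 2) hx2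
    rcases Nat.mod_two_eq_zero_or_one x with e | e
    · have e1 : x = 2 * (x / 2) := by omega
      have : x + 2 ^ (k + 1) * y = 2 * (x / 2 + 2 ^ k * y) := by rw [pow_succ]; nlinarith
      rw [this, sg_two_mul, h]; conv_rhs => rw [e1, sg_two_mul]
    · have e1 : x = 2 * (x / 2) + 1 := by omega
      have : x + 2 ^ (k + 1) * y = 2 * (x / 2 + 2 ^ k * y) + 1 := by rw [pow_succ]; nlinarith
      rw [this, sg_two_mul_add_one, h]; conv_rhs => rw [e1, sg_two_mul_add_one]
      ring

theorem sg_compl (k x : ℕ) (hx : x < 2 ^ k) : sg (2 ^ k - 1 - x) + sg x = k := by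
  induction k generalizing x with
  | zero => 
    have : x = 0 := by omega
    subst this; simp [sg_zero]
  | succ k ih =>
    have hx2 : x / 2 < 2 ^ k := by rw [pow_succ] at hx; omega
    have h := ih (x / 2) hx2
    rcases Nat.mod_two_eq_zero_or_one x with e | e
    · have e1 : x = 2 * (x / 2) := by omega
      have : 2 ^ (k + 1) - 1 - x = 2 * (2 ^ k - 1 - x / 2) + 1 := by rw [pow_succ] at *; omega
      rw [this, sg_two_mul_add_one, e1, sg_two_mul, ← e1]; omega
    · have e1 : x = 2 * (x / 2) + 1 := by omega
      have : 2 ^ (k + 1) - 1 - x = 2 * (2 ^ k - 1 - x / 2) := by rw [pow_succ] at *; omega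
      rw [this, sg_two_mul]
      have : sg x = sg (x / 2) + 1 := by conv_lhs => rw [e1, sg_two_mul_add_one]
      omega

theorem two_pow_dvd_central (m X : ℕ) : 2 ^ m ∣ Nat.choose (2 * X) X ↔ m ≤ sg X := by
  have hp : Fact (Nat.Prime 2) := ⟨Nat.prime_two⟩
  have h := sub_one_mul_padicValNat_choose_eq_sub_sum_digits (p := 2) (k := X) (n := 2 * X) (by omega)
  have e : 2 * X - X = X := by omega
  rw [e] at h
  change (2 - 1) * _ = sg X + sg X - sg (2 * X) at h
  rw [sg_two_mul] at h
  have h : padicValNat 2 (Nat.choose (2 * X) X) = sg X := by omega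
  rw [← h]
  exact padicValNat_dvd_iff_le (Nat.choose_pos (by omega)).ne'

def concatX (N S1 T1 S2 T2 : ℕ) : ℕ :=
  (N - 1 - S1) + 2 * N * ((N - 1 - T1) + 2 * N * ((S1 + T1) + 2 * N * ((N - 1 - S2) +
    2 * N * ((N - 1 - T2) + 2 * N * (S2 + T2)))))

theorem concat_main (k S1 T1 S2 T2 : ℕ) (h1 : S1 < 2 ^ k) (h2 : T1 < 2 ^ k) (h3 : S2 < 2 ^ k)
    (h4 : T2 < 2 ^ k) :
    (2 ^ k) ^ 4 ∣ Nat.choose (2 * concatX (2 ^ k) S1 T1 S2 T2) (concatX (2 ^ k) S1 T1 S2 T2) ↔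
      (S1 &&& T1 = 0 ∧ S2 &&& T2 = 0) := by
  rw [← pow_mul, two_pow_dvd_central]
  unfold concatX
  have e : 2 * 2 ^ k = 2 ^ (k + 1) := by rw [pow_succ]; ring
  rw [e, sg_split, sg_split, sg_split, sg_split, sg_split]
  · have c1 := sg_compl k S1 h1
    have c2 := sg_compl k T1 h2
    have c3 := sg_compl k S2 h3
    have c4 := sg_compl k T2 h4
    obtain ⟨a1, a2⟩ := sg_add S1 T1
    obtain ⟨b1, b2⟩ := sg_add S2 T2
    rw [← a2, ← b2]
    omega
  all_goals rw [pow_succ]; omega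

theorem and_mask_iff (q t K : ℕ) : K &&& ((2 ^ q - 1) * 2 ^ t) = 0 ↔ (K / 2 ^ t) % 2 ^ q = 0 := by
  have hb : ∀ i, ((2 ^ q - 1) * 2 ^ t).testBit i = (decide (t ≤ i) && decide (i - t < q)) := by
    intro i
    rw [mul_comm, Nat.testBit_two_pow_mul, Nat.testBit_two_pow_sub_one]
  constructor
  · intro h
    apply Nat.eq_of_testBit_eq
    intro i
    have := congrArg (fun x => Nat.testBit x (i + t)) h
    simp only [Nat.testBit_and, hb, Nat.zero_testBit] at this
    simp only [Nat.testBit_mod_two_pow, Nat.testBit_div_two_pow, Nat.zero_testBit]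
    simp at this ⊢
    intro hi
    by_contra hc
    simp at hc
    exact absurd (this hc) (by omega)
  · intro h
    apply Nat.eq_of_testBit_eq
    intro i
    simp only [Nat.testBit_and, hb, Nat.zero_testBit]
    by_cases hi : t ≤ i ∧ i - t < q
    · have := congrArg (fun x => Nat.testBit x (i - t)) h
      simp only [Nat.testBit_mod_two_pow, Nat.testBit_div_two_pow, Nat.zero_testBit] at this
      rw [Nat.sub_add_cancel hi.1] at this
      simp [hi.2] at this
      simp [this]
    · simp; intro _ h2; by_contra h3; exact hi ⟨h2, by omega⟩

theorem and_compl_iff (k g m : ℕ) (hg : g < 2 ^ k) (hm : m < 2 ^ k) :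
    g &&& (2 ^ k - 1 - m) = 0 ↔ ∀ i, g.testBit i = true → m.testBit i = true := by
  have hb : ∀ i, (2 ^ k - 1 - m).testBit i = (decide (i < k) && !m.testBit i) := by
    intro i
    rw [← Nat.testBit_two_pow_sub_succ hm, Nat.sub_sub, add_comm 1 m]
  have hgk : ∀ i, g.testBit i = true → i < k := by
    intro i hi
    by_contra h
    have := Nat.testBit_lt_two_pow (lt_of_lt_of_le hg (Nat.pow_le_pow_right (by norm_num) (not_lt.1 h)))
    rw [this] at hi; simp at hi
  constructor
  · intro h i hi
    have := congrArg (fun x => Nat.testBit x i) h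
    simp only [Nat.testBit_and, hb, Nat.zero_testBit, hi, hgk i hi] at this
    simpa using this
  · intro h
    apply Nat.eq_of_testBit_eq
    intro i
    simp only [Nat.testBit_and, hb, Nat.zero_testBit]
    by_cases hi : g.testBit i = true
    · simp [h i hi]
    · simp at hi; simp [hi]

theorem sum_digits_lt {p q : ℕ} (hpq : p ≤ q) {e : ℕ → ℕ} (he : StrictMono e) (z : ℕ → ℕ)
    (hz : ∀ i, z i < 2 ^ p) (n : ℕ) :
    ∑ i ∈ Finset.range n, z i * (2 ^ q) ^ e i < (2 ^ q) ^ e n := by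
  induction n with
  | zero => simp
  | succ n ih =>
    rw [Finset.sum_range_succ]
    calc _ < (2 ^ q) ^ e n + z n * (2 ^ q) ^ e n := by omega
      _ = (z n + 1) * (2 ^ q) ^ e n := by ring
      _ ≤ 2 ^ q * (2 ^ q) ^ e n := by
        gcongr
        exact (hz n).trans_le (Nat.pow_le_pow_right (by norm_num) hpq)
      _ = (2 ^ q) ^ (e n + 1) := by rw [pow_succ (2 ^ q)]; ring
      _ ≤ _ := Nat.pow_le_pow_right (by positivity) (he (Nat.lt_succ_self n))

theorem submask_iff {p q : ℕ} (hpq : p ≤ q) {e : ℕ → ℕ} (he : StrictMono e) (n g : ℕ) :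
    (∀ i, g.testBit i = true →
      (∑ i ∈ Finset.range n, (2 ^ p - 1) * (2 ^ q) ^ e i).testBit i = true) ↔
    ∃ z : ℕ → ℕ, (∀ i, z i < 2 ^ p) ∧ g = ∑ i ∈ Finset.range n, z i * (2 ^ q) ^ e i := by
  have hpp : 2 ^ p - 1 < 2 ^ p := Nat.sub_lt (by positivity) one_pos
  induction n generalizing g with
  | zero =>
    simp
    constructor
    · intro h
      have : g = 0 := Nat.eq_of_testBit_eq (by intro i; rw [h i]; simp)
      exact ⟨⟨fun _ => 0, by simp⟩, this⟩
    · rintro ⟨_, h⟩ i; simp [h]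
  | succ n ih =>
    have hlt := sum_digits_lt hpq he (fun _ => 2 ^ p - 1) (fun _ => hpp) n
    have hpow : (2 ^ q) ^ e n = 2 ^ (q * e n) := by rw [pow_mul]
    have htb : ∀ i, (∑ i ∈ Finset.range (n + 1), (2 ^ p - 1) * (2 ^ q) ^ e i).testBit i =
        if i < q * e n then (∑ i ∈ Finset.range n, (2 ^ p - 1) * (2 ^ q) ^ e i).testBit i
        else decide (i - q * e n < p) := by
      intro i
      rw [Finset.sum_range_succ]
      rw [hpow] at hlt
      rw [add_comm, hpow, mul_comm, Nat.testBit_two_pow_mul_add _ hlt, Nat.testBit_two_pow_sub_one]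
    constructor
    · intro h
      have h1 : ∀ i, (g % 2 ^ (q * e n)).testBit i = true →
          (∑ i ∈ Finset.range n, (2 ^ p - 1) * (2 ^ q) ^ e i).testBit i = true := by
        intro i hi
        rw [Nat.testBit_mod_two_pow] at hi
        simp at hi
        have := h i hi.2
        rw [htb, if_pos hi.1] at this
        exact this
      obtain ⟨z, hz, hzs⟩ := (ih _).1 h1
      have h2 : g / 2 ^ (q * e n) < 2 ^ p := by
        apply Nat.lt_pow_two_of_testBit
        intro i hi
        rw [Nat.testBit_div_two_pow]
        by_contra hc
        simp at hc
        have := h _ hc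
        rw [htb, if_neg (by omega)] at this
        simp at this
        omega
      refine ⟨fun i => if i = n then g / 2 ^ (q * e n) else z i, ?_, ?_⟩
      · intro i; dsimp only; split_ifs
        · exact h2
        · exact hz i
      · rw [Finset.sum_range_succ]; beta_reduce; rw [if_pos rfl]
        rw [Finset.sum_congr rfl (g := fun i => z i * (2 ^ q) ^ e i), ← hzs, hpow]
        · exact (Nat.mod_add_div' _ _).symm
        · intro i hi
          rw [if_neg (by simp at hi; omega)]
    · rintro ⟨z, hz, hg⟩ i hi
      have hlt2 := sum_digits_lt hpq he z hz n
      rw [Finset.sum_range_succ] at hg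
      rw [hpow] at hlt2
      rw [hg, add_comm, hpow, mul_comm, Nat.testBit_two_pow_mul_add _ hlt2] at hi
      rw [htb]
      split_ifs with hc
      · rw [if_pos hc] at hi
        exact (ih _).2 ⟨z, hz, rfl⟩ i hi
      · rw [if_neg hc] at hi
        simp
        by_contra hcc
        have := Nat.testBit_lt_two_pow ((hz n).trans_le (Nat.pow_le_pow_right (by norm_num) (not_lt.1 hcc)))
        rw [this] at hi; simp at hi


def bV (Y b Θ w : ℤ) : ℤ := 16 * Y * b ^ 2 * Θ * (1 + w ^ 2)
def bu (X Y l : ℤ) : ℤ := (1 + X ^ 2) * (1 + Y ^ 2) * (1 + l ^ 2)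
def ba (X Y b Θ l w : ℤ) : ℤ := bu X Y l * (bV Y b Θ w + 1)
def ba' (X Y b Θ l w : ℤ) : ℤ := 2 * (bu X Y l) ^ 2 * bV Y b Θ w
def bC (X Y b Θ l w h : ℤ) : ℤ := 2 * X + 1 + (ba X Y b Θ l w - 1) * h
def bK (X Y b Θ l w k : ℤ) : ℤ := X + 1 + (ba' X Y b Θ l w - 1) * k
def bA1 (X Y b Θ l w h x y : ℤ) : ℤ :=
  pD (ba X Y b Θ l w) (bC X Y b Θ l w h) * pF (ba X Y b Θ l w) (bC X Y b Θ l w h) x *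
    pI (ba X Y b Θ l w) (2 * X + 1) (bC X Y b Θ l w h) x y
def bA2 (X Y b Θ l w k : ℤ) : ℤ :=
  ((ba' X Y b Θ l w) ^ 2 - 1) * (bK X Y b Θ l w k) ^ 2 + 1
def bS (X Y b Θ l w : ℤ) : ℤ := 4 * ba X Y b Θ l w - 5
def bT (X Y b Θ l w h : ℤ) : ℤ := 3 * (b * w) * bC X Y b Θ l w h - 2 * ((b * w) ^ 2 - 1)

open Pell in
theorem yn_upper {a : ℕ} (a1 : 1 < a) (n : ℕ) : yn a1 (n + 1) ≤ (2 * a) ^ n := by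
  induction n with
  | zero => simp
  | succ n ih =>
    have := yn_succ_succ a1 n
    rw [pow_succ]
    nlinarith

open Pell in
theorem yn_lower {a : ℕ} (a1 : 1 < a) (n : ℕ) : (2 * a - 1) ^ n ≤ yn a1 (n + 1) := by
  induction n with
  | zero => simp
  | succ n ih =>
    have h1 := yn_succ_succ a1 n
    have h2 : yn a1 n ≤ yn a1 (n + 1) := (strictMono_y a1).monotone (Nat.le_succ n)
    obtain ⟨c, hc⟩ : ∃ c, 2 * a = c + 1 := ⟨2 * a - 1, by omega⟩
    rw [hc] at h1 ih ⊢
    simp only [Nat.add_sub_cancel] at ih ⊢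
    rw [pow_succ]
    nlinarith

open Pell in
theorem yn_pow_two {a : ℕ} (a1 : 1 < a) (n : ℕ) :
    (4 * (a : ℤ) - 5) ∣ 3 * 2 ^ n * (yn a1 n : ℤ) - 2 * ((2 ^ n) ^ 2 - 1) := by
  induction n using Nat.strong_induction_on with
  | _ n ih =>
    match n with
    | 0 => simp
    | 1 => simp
    | n + 2 =>
      obtain ⟨c0, h0⟩ := ih n (by omega)
      obtain ⟨c1, h1⟩ := ih (n + 1) (by omega)
      have h2 : (yn a1 (n + 2) : ℤ) + yn a1 n = 2 * a * yn a1 (n + 1) := by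
        exact_mod_cast yn_succ_succ a1 n
      have h2' : (yn a1 (n + 2) : ℤ) = 2 * a * yn a1 (n + 1) - yn a1 n := by linarith
      refine ⟨3 * 2 ^ (n + 1) * yn a1 (n + 1) + 5 * c1 - 4 * c0, ?_⟩
      rw [h2']
      rw [pow_succ] at h1 ⊢
      rw [pow_succ]
      linear_combination 5 * h1 - 4 * h0

theorem expand_central (V X : ℕ) (hX : 1 ≤ X) :
    ∃ Z r q : ℕ, (V + 1) ^ (2 * X) = V ^ X * Z + r ∧ r * V ≤ 4 ^ X * V ^ X ∧
      Z = Nat.choose (2 * X) X + V * q := by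
  rcases Nat.eq_zero_or_pos V with h0 | hV
  · subst h0
    refine ⟨Nat.choose (2 * X) X, 1, 0, ?_, ?_, ?_⟩
    · simp; omega
    · simp
    · simp
  have h := add_pow V 1 (2 * X)
  rw [show 2 * X + 1 = X + (X + 1) by ring, Finset.sum_range_add, Finset.sum_range_succ'] at h
  simp only [one_pow, mul_one, Nat.cast_id] at h
  refine ⟨Nat.choose (2 * X) X + V * ∑ i ∈ Finset.range X, V ^ i * Nat.choose (2 * X) (X + (i + 1)),
    ∑ i ∈ Finset.range X, V ^ i * Nat.choose (2 * X) i,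
    ∑ i ∈ Finset.range X, V ^ i * Nat.choose (2 * X) (X + (i + 1)), ?_, ?_, rfl⟩
  · rw [h, mul_add, Finset.mul_sum, Finset.mul_sum]
    have : ∀ i ∈ Finset.range X, V ^ (X + (i + 1)) * ((2 * X).choose (X + (i + 1))) =
      V ^ X * (V * (V ^ i * Nat.choose (2 * X) (X + (i + 1)))) := by
      intro i _; ring
    rw [Finset.sum_congr rfl this, add_zero]
    ring
  · rw [Finset.sum_mul]
    calc _ ≤ ∑ i ∈ Finset.range X, V ^ X * Nat.choose (2 * X) i := by
          apply Finset.sum_le_sum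
          intro i hi
          rw [Finset.mem_range] at hi
          calc V ^ i * (2 * X).choose i * V = V ^ (i + 1) * (2 * X).choose i := by ring
            _ ≤ _ := Nat.mul_le_mul_right _ (Nat.pow_le_pow_right hV (by omega))
      _ ≤ V ^ X * ∑ i ∈ Finset.range (2 * X + 1), Nat.choose (2 * X) i := by
          rw [← Finset.mul_sum]
          gcongr
          omega
      _ = _ := by rw [Nat.sum_range_choose, pow_mul]; norm_num; ring

theorem real_est {X : ℕ} {L U V C K ρ : ℝ} (hX : 1 ≤ X) (hL : 1 ≤ L) (hV : 16 ≤ V)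
    (hU : 16 * X * L ≤ U) (hK : 0 < K)
    (hC1 : (U * (V + 1) - 1) ^ (2 * X) ≤ C) (hC2 : C ≤ (U * (V + 1)) ^ (2 * X))
    (hK1 : (U ^ 2 * V - 1) ^ X ≤ K) (hK2 : K ≤ (U ^ 2 * V) ^ X)
    (hρ : ρ * V ^ X = (V + 1) ^ (2 * X)) (hor : ρ ≤ 2 * L ∨ C / K ≤ 2 * L) :
    |C / K - ρ| ≤ 1 / (2 * V) ∧ ρ ≤ 4 * L := by
  have hX' : (1 : ℝ) ≤ X := by exact_mod_cast hX
  have hXL : 1 ≤ (X : ℝ) * L := by nlinarith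
  have hU16 : 16 ≤ U := by nlinarith
  set ε : ℝ := 1 / (8 * L * V) with hε
  have hLV : 0 < 8 * L * V := by positivity
  have hε0 : 0 < ε := by positivity
  have hε1 : ε ≤ 1 / 2 := by
    rw [hε, div_le_div_iff₀ hLV (by norm_num)]; nlinarith
  have hρ0 : 0 < ρ := by
    have h1 : 0 < ρ * V ^ X := by rw [hρ]; positivity
    exact (pos_iff_pos_of_mul_pos h1).2 (by positivity)
  have hA0 : 0 < U * (V + 1) := by positivity
  have hUV0 : 0 < U ^ 2 * V := by positivity
  -- lower bound
  have hlow : ρ * (1 - ε) ≤ C / K := by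
    rw [le_div_iff₀ hK]
    have b1 : 1 + ((2 * X : ℕ) : ℝ) * (-(1 / (U * (V + 1)))) ≤ (1 + -(1 / (U * (V + 1)))) ^ (2 * X) := by
      apply one_add_mul_le_pow
      have : 1 / (U * (V + 1)) ≤ 1 := by rw [div_le_one hA0]; nlinarith
      linarith
    have b2 : 1 - ε ≤ 1 + ((2 * X : ℕ) : ℝ) * (-(1 / (U * (V + 1)))) := by
      have : ((2 * X : ℕ) : ℝ) * (1 / (U * (V + 1))) ≤ ε := by
        rw [hε, mul_one_div, div_le_div_iff₀ hA0 hLV]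
        push_cast
        have := mul_le_mul_of_nonneg_right hU (by linarith : 0 ≤ V)
        nlinarith
      linarith
    have b3 : (U * (V + 1) - 1) ^ (2 * X) = (U * (V + 1)) ^ (2 * X) * (1 + -(1 / (U * (V + 1)))) ^ (2 * X) := by
      rw [← mul_pow]; congr 1; field_simp; ring
    have b4 : (U * (V + 1)) ^ (2 * X) = ρ * (U ^ 2 * V) ^ X := by
      rw [mul_pow, ← hρ, mul_pow, ← pow_mul]; ring
    calc ρ * (1 - ε) * K ≤ ρ * (1 - ε) * (U ^ 2 * V) ^ X := by
          apply mul_le_mul_of_nonneg_left hK2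
          have : 0 ≤ 1 - ε := by linarith
          positivity
      _ = (U * (V + 1)) ^ (2 * X) * (1 - ε) := by rw [b4]; ring
      _ ≤ (U * (V + 1)) ^ (2 * X) * (1 + -(1 / (U * (V + 1)))) ^ (2 * X) := by
          apply mul_le_mul_of_nonneg_left (b2.trans b1); positivity
      _ ≤ C := by rw [← b3]; exact hC1
  have hup : C / K * (1 - ε) ≤ ρ := by
    rw [div_mul_eq_mul_div, div_le_iff₀ hK]
    have b1 : 1 + (X : ℝ) * (-(1 / (U ^ 2 * V))) ≤ (1 + -(1 / (U ^ 2 * V))) ^ X := by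
      apply one_add_mul_le_pow
      have : 1 / (U ^ 2 * V) ≤ 1 := by rw [div_le_one hUV0]; nlinarith
      linarith
    have b2 : 1 - ε ≤ 1 + (X : ℝ) * (-(1 / (U ^ 2 * V))) := by
      have : (X : ℝ) * (1 / (U ^ 2 * V)) ≤ ε := by
        rw [hε, mul_one_div, div_le_div_iff₀ hUV0 hLV]
        have := mul_le_mul_of_nonneg_right hU (by linarith : 0 ≤ V)
        have h2 : U * V ≤ U ^ 2 * V := by nlinarith
        nlinarith
      linarith
    have b3 : (U ^ 2 * V - 1) ^ X = (U ^ 2 * V) ^ X * (1 + -(1 / (U ^ 2 * V))) ^ X := by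
      rw [← mul_pow]; congr 1; field_simp; ring
    have b4 : (U * (V + 1)) ^ (2 * X) = ρ * (U ^ 2 * V) ^ X := by
      rw [mul_pow, ← hρ, mul_pow, ← pow_mul]; ring
    calc C * (1 - ε) ≤ (U * (V + 1)) ^ (2 * X) * (1 - ε) := by
          apply mul_le_mul_of_nonneg_right hC2; linarith
      _ = ρ * ((U ^ 2 * V) ^ X * (1 - ε)) := by rw [b4]; ring
      _ ≤ ρ * ((U ^ 2 * V) ^ X * (1 + -(1 / (U ^ 2 * V))) ^ X) := by
          apply mul_le_mul_of_nonneg_left _ hρ0.le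
          apply mul_le_mul_of_nonneg_left (b2.trans b1); positivity
      _ ≤ ρ * K := by rw [← b3]; exact mul_le_mul_of_nonneg_left hK1 hρ0.le
  have hCK0 : 0 < C / K := lt_of_lt_of_le (mul_pos hρ0 (by linarith)) hlow
  have hb : ρ ≤ 4 * L ∧ C / K ≤ 4 * L := by
    rcases hor with h | h
    · exact ⟨by linarith, by nlinarith⟩
    · exact ⟨by nlinarith, by linarith⟩
  have hεL : ε * (4 * L) = 1 / (2 * V) := by rw [hε]; field_simp; ring
  refine ⟨?_, hb.1⟩
  rw [abs_le]
  constructor <;> nlinarith [hb.1, hb.2]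

theorem pow_part {X : ℕ} (hX : 1 ≤ X) {a V W C : ℤ}
    (h1 : 4 * a - 5 ∣ 3 * W * C - 2 * (W ^ 2 - 1))
    (h2 : 4 * a - 5 ∣ 3 * 2 ^ (2 * X + 1) * C - 2 * ((2 ^ (2 * X + 1)) ^ 2 - 1))
    (hV : 16 * (1 + W ^ 2) ≤ V) (ha : V ^ (X + 1) ≤ a) : W = 2 ^ (2 * X + 1) := by
  obtain ⟨P, hP⟩ : ∃ P : ℤ, P = 2 ^ (2 * X + 1) := ⟨_, rfl⟩
  rw [← hP] at h2 ⊢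
  have hP2 : 2 ≤ P := by
    rw [hP, pow_succ]
    have : (1 : ℤ) ≤ 2 ^ (2 * X) := one_le_pow₀ (by norm_num)
    linarith
  have hd : 4 * a - 5 ∣ 2 * ((P - W) * (1 + P * W)) := by
    have := dvd_sub (h1.mul_left P) (h2.mul_left W)
    refine this.trans (dvd_of_eq ?_)
    ring
  have hodd : IsCoprime (4 * a - 5) 2 := ⟨1, -2 * a + 3, by ring⟩
  have hd' := hodd.dvd_of_dvd_mul_left hd
  have hbig : 4 * P ^ 2 * (1 + W ^ 2) ^ 2 ≤ a := by
    calc 4 * P ^ 2 * (1 + W ^ 2) ^ 2 = 16 ^ (X + 1) * (1 + W ^ 2) ^ 2 := by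
          rw [hP, show (16 : ℤ) = 2 ^ 4 by norm_num, ← pow_mul, ← pow_mul]
          congr 1
          rw [show 4 * (X + 1) = (2 * X + 1) * 2 + 2 by ring, pow_add]; ring
      _ ≤ 16 ^ (X + 1) * (1 + W ^ 2) ^ (X + 1) := by
          gcongr
          · nlinarith [sq_nonneg W]
          · omega
      _ = (16 * (1 + W ^ 2)) ^ (X + 1) := by rw [mul_pow]
      _ ≤ V ^ (X + 1) := by gcongr
      _ ≤ a := ha
  have hWab : |W| ≤ 1 + W ^ 2 := by
    rw [abs_le]; constructor <;> nlinarith [sq_nonneg (W - 1), sq_nonneg (W + 1)]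
  have hW1 : 1 ≤ 1 + W ^ 2 := by nlinarith [sq_nonneg W]
  have hsmall : |(P - W) * (1 + P * W)| ≤ 4 * P ^ 2 * (1 + W ^ 2) ^ 2 := by
    rw [abs_mul]
    have e1 : |P - W| ≤ 2 * (P * (1 + W ^ 2)) := by
      calc |P - W| ≤ |P| + |W| := abs_sub _ _
        _ ≤ P + (1 + W ^ 2) := by rw [abs_of_pos (by linarith : 0 < P)]; linarith
        _ ≤ _ := by nlinarith
    have e2 : |1 + P * W| ≤ 2 * (P * (1 + W ^ 2)) := by
      calc |1 + P * W| ≤ |1| + |P * W| := abs_add_le _ _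
        _ ≤ 1 + P * (1 + W ^ 2) := by
          rw [abs_mul, abs_of_pos (by linarith : 0 < P), abs_one]; nlinarith
        _ ≤ _ := by nlinarith
    calc _ ≤ (2 * (P * (1 + W ^ 2))) * (2 * (P * (1 + W ^ 2))) := by
          apply mul_le_mul e1 e2 (abs_nonneg _); positivity
      _ = _ := by ring
  have ha2 : 2 ≤ a := by
    have e1 : 1 ≤ (1 + W ^ 2) ^ 2 := one_le_pow₀ hW1
    have e2 : 4 ≤ P ^ 2 := by nlinarith
    nlinarith
  have hz := Int.eq_zero_of_abs_lt_dvd hd' (by linarith)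
  rcases mul_eq_zero.1 hz with h | h
  · linarith
  · exfalso
    have : P ∣ 1 := ⟨-W, by linarith⟩
    have := Int.le_of_dvd one_pos this
    linarith

theorem bu_ge {X Y : ℤ} (l : ℤ) (hX : 1 ≤ X) (hY : 1 ≤ Y) : 4 ≤ bu X Y l ∧ 1 + X ^ 2 ≤ bu X Y l := by
  unfold bu
  have h1 : 1 ≤ 1 + l ^ 2 := by nlinarith [sq_nonneg l]
  have h2 : 2 ≤ 1 + Y ^ 2 := by nlinarith
  have h3 : 2 ≤ 1 + X ^ 2 := by nlinarith
  have h4 : 2 * (1 + X ^ 2) ≤ (1 + X ^ 2) * (1 + Y ^ 2) := by nlinarith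
  have h5 : (1 + X ^ 2) * (1 + Y ^ 2) ≤ (1 + X ^ 2) * (1 + Y ^ 2) * (1 + l ^ 2) := by nlinarith
  constructor <;> linarith

theorem bu_ge1 (X Y l : ℤ) : 1 ≤ bu X Y l := by
  unfold bu
  have h1 : 1 ≤ 1 + l ^ 2 := by nlinarith [sq_nonneg l]
  have h2 : 1 ≤ 1 + Y ^ 2 := by nlinarith [sq_nonneg Y]
  have h3 : 1 ≤ 1 + X ^ 2 := by nlinarith [sq_nonneg X]
  exact one_le_mul_of_one_le_of_one_le (one_le_mul_of_one_le_of_one_le h3 h2) h1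

theorem bu_ge2 {X Y l : ℤ} (hX : 1 ≤ X) (hY : 1 ≤ Y) (hl : 1 ≤ l) : 8 * X * (l * Y) ≤ bu X Y l := by
  unfold bu
  have h1 : 2 * l ≤ 1 + l ^ 2 := by nlinarith [sq_nonneg (l - 1)]
  have h2 : 2 * Y ≤ 1 + Y ^ 2 := by nlinarith [sq_nonneg (Y - 1)]
  have h3 : 2 * X ≤ 1 + X ^ 2 := by nlinarith [sq_nonneg (X - 1)]
  calc 8 * X * (l * Y) = (2 * X) * (2 * Y) * (2 * l) := by ring
    _ ≤ _ := by gcongr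

theorem bV_ge {Y b Θ : ℤ} (w : ℤ) (hY : 1 ≤ Y) (hb : 1 ≤ b) (hΘ : 1 ≤ Θ) :
    16 * Y * Θ * (b ^ 2 + (b * w) ^ 2) ≤ bV Y b Θ w ∧ 16 * (1 + (b * w) ^ 2) ≤ bV Y b Θ w := by
  unfold bV
  refine ⟨le_of_eq (by ring), ?_⟩
  have h2 : 1 ≤ Y * Θ := one_le_mul_of_one_le_of_one_le hY hΘ
  have h3 : 1 ≤ b ^ 2 := one_le_pow₀ hb
  have h4 : 0 ≤ (b * w) ^ 2 := sq_nonneg _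
  nlinarith

theorem b_sizes {X Y b Θ : ℤ} (l w : ℤ) (hX : 1 ≤ X) (hY : 1 ≤ Y) (hb : 1 ≤ b) (hΘ : 1 ≤ Θ) :
    4 * X + 4 < ba X Y b Θ l w ∧ 3 * X + 4 < ba' X Y b Θ l w ∧
      2 * ba X Y b Θ l w ≤ 2 * ba' X Y b Θ l w - 1 := by
  obtain ⟨h1, h2⟩ := bu_ge l hX hY
  have h3 := (bV_ge w hY hb hΘ).2
  have h4 : 16 ≤ bV Y b Θ w := by nlinarith [sq_nonneg (b * w)]
  unfold ba ba'
  generalize bu X Y l = u at *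
  generalize bV Y b Θ w = V at *
  have h5 : 2 * X ≤ 1 + X ^ 2 := by nlinarith [sq_nonneg (X - 1)]
  refine ⟨by nlinarith, ?_, ?_⟩
  · have : 4 * u ≤ u ^ 2 := by nlinarith
    nlinarith
  · have : 4 * u ≤ u ^ 2 := by nlinarith
    nlinarith

theorem b_pos (X : ℤ) {Y b Θ : ℤ} (l w : ℤ) (hY : 1 ≤ Y) (hb : 1 ≤ b) (hΘ : 1 ≤ Θ) :
    17 ≤ ba X Y b Θ l w ∧ 1 ≤ ba' X Y b Θ l w := by
  have h1 := bu_ge1 X Y l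
  have h3 := (bV_ge w hY hb hΘ).2
  have h4 : 16 ≤ bV Y b Θ w := by nlinarith [sq_nonneg (b * w)]
  unfold ba ba'
  generalize bu X Y l = u at *
  generalize bV Y b Θ w = V at *
  constructor
  · nlinarith
  · have : 1 ≤ u ^ 2 := one_le_pow₀ h1
    nlinarith

/-- recover the K side -/
theorem k_part {X : ℕ} {a' : ℕ} (a1 : 1 < a') (ha' : 3 * (X : ℤ) + 4 < a') {K k : ℤ}
    (hK : K = X + 1 + ((a' : ℤ) - 1) * k) (hsq : IsSquare (((a' : ℤ) ^ 2 - 1) * K ^ 2 + 1))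
    (hbd : |K| < ((2 * a' - 1 : ℕ) : ℤ) ^ (2 * X + 1)) : K = Pell.yn a1 (X + 1) := by
  obtain ⟨s, hs⟩ := hsq
  obtain ⟨n, -, hn⟩ := eq_pell_int a1 hs
  have hn2 : n < 2 * X + 2 := by
    by_contra hcon
    push Not at hcon
    have h1 := yn_lower a1 (2 * X + 1)
    have h2 : Pell.yn a1 (2 * X + 1 + 1) ≤ Pell.yn a1 n := (Pell.strictMono_y a1).monotone hcon
    have h3 : ((2 * a' - 1 : ℕ) : ℤ) ^ (2 * X + 1) ≤ (K.natAbs : ℤ) := by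
      rw [hn]; exact_mod_cast h1.trans h2
    rw [Int.natCast_natAbs] at h3
    linarith
  have hmod : ((a' : ℤ) - 1) ∣ (Pell.yn a1 n : ℤ) - n := by
    have h := Pell.yn_modEq_a_sub_one a1 n
    have h2 := (Nat.modEq_iff_dvd.1 h.symm)
    rwa [Nat.cast_sub a1.le, Nat.cast_one] at h2
  rw [← hn] at hmod
  have hKd : ((a' : ℤ) - 1) ∣ K - (X + 1) := ⟨k, by rw [hK]; ring⟩
  rcases Int.natAbs_eq K with h | h
  · have h1 : ((a' : ℤ) - 1) ∣ (X + 1) - n := by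
      have := dvd_sub hmod hKd
      rw [← h] at this
      exact this.trans (dvd_of_eq (by ring))
    have h2 := Int.eq_zero_of_abs_lt_dvd h1 (by rw [abs_lt]; constructor <;> push_cast <;> omega)
    have h3 : n = X + 1 := by omega
    rw [h, hn, h3]
  · exfalso
    have h1 : ((a' : ℤ) - 1) ∣ (X + 1) + n := by
      have := dvd_add hmod hKd
      rw [show (K.natAbs : ℤ) = -K by omega] at this
      rw [← dvd_neg]
      exact this.trans (dvd_of_eq (by ring))
    have := Int.le_of_dvd (by omega) h1
    omega


theorem est_pack {X a a' u V L : ℕ} (hX : 1 ≤ X) (hL : 1 ≤ L) (hV : 16 ≤ V) (hu : 8 * X * L ≤ u)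
    (a1 : 1 < a) (a1' : 1 < a') (ha : a = u * (V + 1)) (ha' : a' = 2 * u ^ 2 * V) {ρ : ℝ}
    (hρ : ρ * (V : ℝ) ^ X = ((V : ℝ) + 1) ^ (2 * X))
    (hor : ρ ≤ 2 * L ∨ (Pell.yn a1 (2 * X + 1) : ℝ) / Pell.yn a1' (X + 1) ≤ 2 * L) :
    |(Pell.yn a1 (2 * X + 1) : ℝ) / Pell.yn a1' (X + 1) - ρ| ≤ 1 / (2 * V) ∧ ρ ≤ 4 * L := by
  have hKpos : 0 < Pell.yn a1' (X + 1) := Pell.strictMono_y a1' (Nat.succ_pos X)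
  have c1 := yn_lower a1 (2 * X)
  have c2 := yn_upper a1 (2 * X)
  have k1 := yn_lower a1' X
  have k2 := yn_upper a1' X
  have ra : (2 * (a : ℝ)) = (2 * u : ℝ) * (V + 1) := by rw [ha]; push_cast; ring
  have ra' : (2 * (a' : ℝ)) = (2 * u : ℝ) ^ 2 * V := by rw [ha']; push_cast; ring
  have s1 : ((2 * a - 1 : ℕ) : ℝ) = 2 * (a : ℝ) - 1 := by
    rw [Nat.cast_sub (by omega)]; push_cast; ring
  have s2 : ((2 * a' - 1 : ℕ) : ℝ) = 2 * (a' : ℝ) - 1 := by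
    rw [Nat.cast_sub (by omega)]; push_cast; ring
  apply real_est (U := 2 * u) hX (by exact_mod_cast hL) (by exact_mod_cast hV) _
    (by exact_mod_cast hKpos) _ _ _ _ hρ hor
  · have : (8 * X * L : ℝ) ≤ u := by exact_mod_cast hu
    linarith
  · rw [← ra, ← s1]; exact_mod_cast c1
  · rw [← ra]; exact_mod_cast c2
  · rw [← ra', ← s2]; exact_mod_cast k1
  · rw [← ra']; exact_mod_cast k2

set_option maxHeartbeats 2000000 in
theorem bridge_suff {X Y b Θ : ℕ} (hX : 1 ≤ X) (hY : 1 ≤ Y) (hb : 1 ≤ b) (hΘ : 1 ≤ Θ)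
    {h k l w x y : ℤ} (hl : l ≠ 0) (hx : x ≠ 0)
    (h1 : IsSquare (bA1 X Y b Θ l w h x y)) (h2 : IsSquare (bA2 X Y b Θ l w k))
    (h3 : bS X Y b Θ l w ∣ bT X Y b Θ l w h)
    (h4 : 4 * (bC X Y b Θ l w h - bK X Y b Θ l w k * l * Y) ^ 2 < (bK X Y b Θ l w k) ^ 2) :
    b ∣ 2 ^ (2 * X + 1) ∧ Y ∣ Nat.choose (2 * X) X := by
  have hX' : (1 : ℤ) ≤ X := by exact_mod_cast hX
  have hY' : (1 : ℤ) ≤ Y := by exact_mod_cast hY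
  have hb' : (1 : ℤ) ≤ b := by exact_mod_cast hb
  have hΘ' : (1 : ℤ) ≤ Θ := by exact_mod_cast hΘ
  obtain ⟨z1, z2, z3⟩ := b_sizes l w hX' hY' hb' hΘ'
  obtain ⟨v1, v2⟩ := bV_ge w hY' hb' hΘ'
  have hv16 : 16 ≤ bV Y b Θ w := by have := sq_nonneg ((b : ℤ) * w); linarith
  obtain ⟨u1, u2⟩ := bu_ge l hX' hY'
  obtain ⟨V, hV⟩ := Int.eq_ofNat_of_zero_le (a := bV Y b Θ w) (by linarith)
  obtain ⟨u, hu⟩ := Int.eq_ofNat_of_zero_le (a := bu X Y l) (by linarith)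
  have haN : ba X Y b Θ l w = ((u * (V + 1) : ℕ) : ℤ) := by
    unfold ba; rw [hV, hu]; push_cast; ring
  have haN' : ba' X Y b Θ l w = ((2 * u ^ 2 * V : ℕ) : ℤ) := by
    unfold ba'; rw [hV, hu]; push_cast; ring
  obtain ⟨a, ha⟩ : ∃ a, a = u * (V + 1) := ⟨_, rfl⟩
  obtain ⟨a', ha'⟩ : ∃ a', a' = 2 * u ^ 2 * V := ⟨_, rfl⟩
  rw [← ha] at haN
  rw [← ha'] at haN'
  have a1 : 1 < a := by omega
  have a1' : 1 < a' := by omega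
  have hCd : bC X Y b Θ l w h = 2 * X + 1 + ((a : ℤ) - 1) * h := by unfold bC; rw [haN]
  have hKd : bK X Y b Θ l w k = X + 1 + ((a' : ℤ) - 1) * k := by unfold bK; rw [haN']
  unfold bA1 at h1
  unfold bA2 at h2
  unfold bS bT at h3
  rw [haN] at h1 h3
  rw [haN'] at h2
  generalize hCg : bC X Y b Θ l w h = C at *
  generalize hKg : bK X Y b Θ l w k = K at *
  have hC : C = Pell.yn a1 (2 * X + 1) := by
    apply pell_suff a1 (B := 2 * X + 1) (by omega) (by omega) ⟨h, by rw [hCd]; push_cast; ring⟩ hx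
    exact_mod_cast h1
  have c2 : C ≤ (2 * (a : ℤ)) ^ (2 * X) := by rw [hC]; exact_mod_cast yn_upper a1 (2 * X)
  have hCpos : 0 < C := by
    rw [hC]; exact_mod_cast (Pell.strictMono_y a1 (Nat.succ_pos (2 * X)) : Pell.yn a1 0 < _)
  have habs : 2 * |C - K * l * Y| < |K| := by
    have : (2 * (C - K * l * Y)) ^ 2 < K ^ 2 := by linarith
    have := sq_lt_sq.1 this
    rwa [abs_mul, abs_two] at this
  have hlY : 1 ≤ |l * Y| := Int.one_le_abs (mul_ne_zero hl (by omega))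
  have hK2C : |K| < 2 * C := by
    have e1 : |K| ≤ |K * l * Y| := by
      rw [mul_assoc, abs_mul]; exact le_mul_of_one_le_right (abs_nonneg K) hlY
    have e2 : |K * l * Y| ≤ |C| + |C - K * l * Y| := by
      have := abs_sub C (C - K * l * Y)
      rwa [show C - (C - K * l * Y) = K * l * Y by ring] at this
    rw [abs_of_pos hCpos] at e2
    linarith
  have hK : K = Pell.yn a1' (X + 1) := by
    apply k_part a1' (by omega) hKd h2
    have e1 : 2 * (a : ℤ) ≤ ((2 * a' - 1 : ℕ) : ℤ) := by omega
    have e2 : (2 : ℤ) ≤ ((2 * a' - 1 : ℕ) : ℤ) := by omega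
    calc |K| < 2 * C := hK2C
      _ ≤ 2 * (2 * (a : ℤ)) ^ (2 * X) := by linarith
      _ ≤ ((2 * a' - 1 : ℕ) : ℤ) * ((2 * a' - 1 : ℕ) : ℤ) ^ (2 * X) := by gcongr
      _ = _ := by rw [pow_succ]; ring
  have hKpos : 0 < K := by
    rw [hK]; exact_mod_cast (Pell.strictMono_y a1' (Nat.succ_pos X) : Pell.yn a1' 0 < _)
  rw [abs_of_pos hKpos] at habs
  obtain ⟨ab1, ab2⟩ := abs_lt.1 (show |C - K * l * Y| < K by linarith [abs_nonneg (C - K * l * Y)])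
  have hlpos : 1 ≤ l := by
    by_contra hcon
    have hl1 : l ≤ -1 := by omega
    have e0 : l * Y ≤ (-1) * 1 := by
      have : 1 * 1 ≤ (-l) * Y := mul_le_mul (by linarith) hY' (by norm_num) (by linarith)
      linarith
    have e1 : K * (l * Y) ≤ K * ((-1) * 1) := mul_le_mul_of_nonneg_left e0 hKpos.le
    rw [mul_assoc] at ab2
    linarith
  obtain ⟨L, hL⟩ := Int.eq_ofNat_of_zero_le (a := l * Y) (mul_nonneg (by linarith) (by linarith))
  have hL1 : 1 ≤ L := by
    have : 1 ≤ l * Y := one_le_mul_of_one_le_of_one_le hlpos hY'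
    omega
  have hub := bu_ge2 hX' hY' hlpos
  rw [hL, hu] at hub
  have hV16 : 16 ≤ V := by omega
  have hVr : (16 : ℝ) ≤ V := by exact_mod_cast hV16
  obtain ⟨Z, r, q, hZ1, hZ2, hZ3⟩ := expand_central V X hX
  have hVX : (0 : ℝ) < (V : ℝ) ^ X := by positivity
  obtain ⟨ρ, hρ⟩ : ∃ ρ : ℝ, ρ = ((V : ℝ) + 1) ^ (2 * X) / (V : ℝ) ^ X := ⟨_, rfl⟩
  have hρ1 : ρ * (V : ℝ) ^ X = ((V : ℝ) + 1) ^ (2 * X) := by rw [hρ]; field_simp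
  have hKr : (0 : ℝ) < Pell.yn a1' (X + 1) := by
    have := hKpos
    rw [hK] at this
    exact_mod_cast this
  have hab : |(Pell.yn a1 (2 * X + 1) : ℝ) / Pell.yn a1' (X + 1) - L| < 1 / 2 := by
    have e : 2 * |(Pell.yn a1 (2 * X + 1) : ℝ) - Pell.yn a1' (X + 1) * L| < Pell.yn a1' (X + 1) := by
      have := habs
      rw [mul_assoc, hL, hC, hK] at this
      exact_mod_cast this
    rw [div_sub' hKr.ne', abs_div, abs_of_pos hKr, div_lt_iff₀ hKr]
    linarith
  have hLr : (1 : ℝ) ≤ L := by exact_mod_cast hL1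
  obtain ⟨es1, es2⟩ := est_pack hX hL1 hV16 (by exact_mod_cast hub) a1 a1' ha ha' hρ1
    (Or.inr (by have := (abs_lt.1 hab).2; linarith))
  -- V ^ X ≤ 4 L
  have hVX4 : (V : ℝ) ^ X ≤ 4 * L := by
    refine le_trans ?_ es2
    have : (V : ℝ) ^ X * (V : ℝ) ^ X ≤ ρ * (V : ℝ) ^ X := by
      rw [hρ1, ← pow_add, ← two_mul]; gcongr; linarith
    exact le_of_mul_le_mul_right this hVX
  have hVX4' : V ^ X ≤ 4 * L := by exact_mod_cast hVX4
  have hW : (b : ℤ) * w = 2 ^ (2 * X + 1) := by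
    apply pow_part hX (a := a) (V := V) (C := C) h3
    · rw [hC]; exact_mod_cast yn_pow_two a1 (2 * X + 1)
    · rw [← hV]; exact v2
    · rw [ha]
      have hub' : 8 * X * L ≤ u := by exact_mod_cast hub
      have : V ^ (X + 1) ≤ u * (V + 1) := by
        rw [pow_succ]
        apply Nat.mul_le_mul _ (by omega)
        have : 1 * L ≤ X * L := Nat.mul_le_mul_right L hX
        linarith
      exact_mod_cast this
  refine ⟨by
    have : (b : ℤ) ∣ ((2 ^ (2 * X + 1) : ℕ) : ℤ) := ⟨w, by push_cast; exact hW.symm⟩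
    exact_mod_cast this, ?_⟩
  -- size of V
  have hVP : 16 * 4 ^ X ≤ V := by
    have e1 : (16 : ℤ) * (2 ^ (2 * X + 1)) ^ 2 ≤ V := by rw [← hW, ← hV]; linarith
    have e2 : (4 : ℤ) ^ X ≤ (2 ^ (2 * X + 1)) ^ 2 := by
      rw [show (4 : ℤ) = 2 ^ 2 by norm_num, ← pow_mul, ← pow_mul]
      exact pow_le_pow_right₀ (by norm_num) (by omega)
    have : (16 : ℤ) * 4 ^ X ≤ V := by linarith
    exact_mod_cast this
  have hVP' : 16 * (4 : ℝ) ^ X ≤ V := by exact_mod_cast hVP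
  have hρZ : ρ - Z = r / (V : ℝ) ^ X := by
    have : ((V : ℝ) + 1) ^ (2 * X) = (V : ℝ) ^ X * Z + r := by exact_mod_cast hZ1
    rw [hρ, this]; field_simp; ring
  have hr : (r : ℝ) / (V : ℝ) ^ X ≤ 1 / 16 := by
    rw [div_le_iff₀ hVX]
    have : (r : ℝ) * V ≤ 4 ^ X * (V : ℝ) ^ X := by exact_mod_cast hZ2
    have h5 : (r : ℝ) * (16 * 4 ^ X) ≤ 4 ^ X * (V : ℝ) ^ X := le_trans (by gcongr) this
    have h6 : (0 : ℝ) < 4 ^ X := by positivity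
    have h7 : (4 : ℝ) ^ X * (16 * r) ≤ 4 ^ X * (V : ℝ) ^ X := by linarith
    have := le_of_mul_le_mul_left h7 h6
    linarith
  have hr0 : 0 ≤ (r : ℝ) / (V : ℝ) ^ X := by positivity
  have hV2 : 1 / (2 * (V : ℝ)) ≤ 1 / 32 := by
    apply one_div_le_one_div_of_le <;> linarith
  have hLZ : |((L : ℤ) : ℝ) - ((Z : ℤ) : ℝ)| < 1 := by
    push_cast
    rw [abs_lt] at hab ⊢
    rw [abs_le] at es1
    constructor <;> linarith
  have hLZ' : (L : ℤ) = Z := by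
    have : |(L : ℤ) - Z| < 1 := by exact_mod_cast hLZ
    have := Int.abs_lt_one_iff.1 this
    linarith
  have hd1 : (Y : ℤ) ∣ Z := by rw [← hLZ', ← hL]; exact Dvd.intro_left _ rfl
  have hd2 : (Y : ℤ) ∣ V := by
    rw [← hV]; unfold bV
    exact ⟨16 * b ^ 2 * Θ * (1 + w ^ 2), by ring⟩
  have hd1' : Y ∣ Z := by exact_mod_cast hd1
  have hd2' : Y ∣ V := by exact_mod_cast hd2
  rw [hZ3] at hd1'
  exact (Nat.dvd_add_left (hd2'.mul_right q)).1 hd1'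


set_option maxHeartbeats 1000000 in
theorem bridge_nec {X Y b Θ : ℕ} (hX : 1 ≤ X) (hY : 1 ≤ Y) (hb : 1 ≤ b) (hΘ : 1 ≤ Θ)
    (hbd : b ∣ 2 ^ (2 * X + 1)) (hYd : Y ∣ Nat.choose (2 * X) X) :
    ∃ h k l w x y : ℤ, l ≠ 0 ∧ x ≠ 0 ∧ IsSquare (bA1 X Y b Θ l w h x y) ∧
      IsSquare (bA2 X Y b Θ l w k) ∧ bS X Y b Θ l w ∣ bT X Y b Θ l w h ∧
      Θ * (bC X Y b Θ l w h - bK X Y b Θ l w k * l * Y) ^ 2 < (bK X Y b Θ l w k) ^ 2 := by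
  have hX' : (1 : ℤ) ≤ X := by exact_mod_cast hX
  have hY' : (1 : ℤ) ≤ Y := by exact_mod_cast hY
  have hb' : (1 : ℤ) ≤ b := by exact_mod_cast hb
  have hΘ' : (1 : ℤ) ≤ Θ := by exact_mod_cast hΘ
  obtain ⟨w, hw⟩ := hbd
  obtain ⟨v1, v2⟩ := bV_ge (w : ℤ) hY' hb' hΘ'
  have hv16 : 16 ≤ bV Y b Θ w := by have := sq_nonneg ((b : ℤ) * w); linarith
  obtain ⟨V, hV⟩ := Int.eq_ofNat_of_zero_le (a := bV Y b Θ w) (by linarith)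
  have hV16 : 16 ≤ V := by omega
  have hVr : (16 : ℝ) ≤ V := by exact_mod_cast hV16
  obtain ⟨Z, r, q, hZ1, hZ2, hZ3⟩ := expand_central V X hX
  have hd2 : (Y : ℤ) ∣ V := by
    rw [← hV]; unfold bV
    exact ⟨16 * b ^ 2 * Θ * (1 + w ^ 2), by ring⟩
  have hd2' : Y ∣ V := by exact_mod_cast hd2
  have hYZ : Y ∣ Z := by rw [hZ3]; exact dvd_add hYd (hd2'.mul_right q)
  have hZpos : 1 ≤ Z := by
    rw [hZ3]
    have : 0 < Nat.choose (2 * X) X := Nat.choose_pos (by omega)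
    omega
  obtain ⟨l, hl⟩ := hYZ
  have hl1 : 1 ≤ l := by
    rcases Nat.eq_zero_or_pos l with h | h
    · subst h; omega
    · exact h
  have hl1' : (1 : ℤ) ≤ l := by exact_mod_cast hl1
  obtain ⟨z1, z2, z3⟩ := b_sizes (l : ℤ) (w : ℤ) hX' hY' hb' hΘ'
  obtain ⟨u1, u2⟩ := bu_ge (l : ℤ) hX' hY'
  obtain ⟨u, hu⟩ := Int.eq_ofNat_of_zero_le (a := bu X Y l) (by linarith)
  have haN : ba X Y b Θ l w = ((u * (V + 1) : ℕ) : ℤ) := by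
    unfold ba; rw [hV, hu]; push_cast; ring
  have haN' : ba' X Y b Θ l w = ((2 * u ^ 2 * V : ℕ) : ℤ) := by
    unfold ba'; rw [hV, hu]; push_cast; ring
  obtain ⟨a, ha⟩ : ∃ a, a = u * (V + 1) := ⟨_, rfl⟩
  obtain ⟨a', ha'⟩ : ∃ a', a' = 2 * u ^ 2 * V := ⟨_, rfl⟩
  rw [← ha] at haN
  rw [← ha'] at haN'
  have a1 : 1 < a := by omega
  have a1' : 1 < a' := by omega
  have hmod : ∀ {a : ℕ} (a1 : 1 < a) (n : ℕ), ((a : ℤ) - 1) ∣ (Pell.yn a1 n : ℤ) - n := by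
    intro a a1 n
    have h := Pell.yn_modEq_a_sub_one a1 n
    have h2 := (Nat.modEq_iff_dvd.1 h.symm)
    rwa [Nat.cast_sub a1.le, Nat.cast_one] at h2
  obtain ⟨h, hh⟩ := hmod a1 (2 * X + 1)
  obtain ⟨k, hk⟩ := hmod a1' (X + 1)
  obtain ⟨x, y, hx, hsq⟩ := pell_nec a1 (B := 2 * X + 1) (by omega) rfl
  have hCd : bC X Y b Θ l w h = Pell.yn a1 (2 * X + 1) := by
    unfold bC; rw [haN]; push_cast at hh; linarith
  have hKd : bK X Y b Θ l w k = Pell.yn a1' (X + 1) := by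
    unfold bK; rw [haN']; push_cast at hk; linarith
  have hub := bu_ge2 hX' hY' hl1'
  rw [hu] at hub
  have hub' : 8 * X * Z ≤ u := by rw [hl, mul_comm Y]; exact_mod_cast hub
  have hVX : (0 : ℝ) < (V : ℝ) ^ X := by positivity
  obtain ⟨ρ, hρ⟩ : ∃ ρ : ℝ, ρ = ((V : ℝ) + 1) ^ (2 * X) / (V : ℝ) ^ X := ⟨_, rfl⟩
  have hρ1 : ρ * (V : ℝ) ^ X = ((V : ℝ) + 1) ^ (2 * X) := by rw [hρ]; field_simp
  have hKr : (0 : ℝ) < Pell.yn a1' (X + 1) := by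
    have : 0 < Pell.yn a1' (X + 1) := Pell.strictMono_y a1' (Nat.succ_pos X)
    exact_mod_cast this
  have hZr : (1 : ℝ) ≤ Z := by exact_mod_cast hZpos
  have hVP : 64 * Θ * 16 ^ X ≤ V := by
    have e0 : (b : ℤ) * w = 2 ^ (2 * X + 1) := by exact_mod_cast hw.symm
    have e1 : (16 : ℤ) * Θ * (2 ^ (2 * X + 1)) ^ 2 ≤ V := by
      rw [← e0, ← hV]
      refine le_trans ?_ v1
      have : ((b : ℤ) * w) ^ 2 ≤ (b : ℤ) ^ 2 + (b * w) ^ 2 := by nlinarith [sq_nonneg (b : ℤ)]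
      calc (16 : ℤ) * Θ * ((b : ℤ) * w) ^ 2 ≤ 16 * Θ * ((b : ℤ) ^ 2 + (b * w) ^ 2) := by gcongr
        _ ≤ Y * (16 * Θ * ((b : ℤ) ^ 2 + (b * w) ^ 2)) := le_mul_of_one_le_left (by positivity) hY'
        _ = _ := by ring
    have e2 : ((2 : ℤ) ^ (2 * X + 1)) ^ 2 = 4 * 16 ^ X := by
      rw [show (16 : ℤ) = 2 ^ 4 by norm_num, ← pow_mul, ← pow_mul, show (2 * X + 1) * 2 = 2 + 4 * X by ring,
        pow_add]; norm_num
    rw [e2] at e1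
    have : (64 : ℤ) * Θ * 16 ^ X ≤ V := by linarith
    exact_mod_cast this
  have hVP' : 64 * (Θ : ℝ) * 16 ^ X ≤ V := by exact_mod_cast hVP
  have hρZ : ρ - Z = r / (V : ℝ) ^ X := by
    have : ((V : ℝ) + 1) ^ (2 * X) = (V : ℝ) ^ X * Z + r := by exact_mod_cast hZ1
    rw [hρ, this]; field_simp; ring
  have hr : (r : ℝ) / (V : ℝ) ^ X ≤ 4 ^ X / V := by
    rw [div_le_div_iff₀ hVX (by linarith)]
    exact_mod_cast hZ2
  have hr0 : 0 ≤ (r : ℝ) / (V : ℝ) ^ X := by positivity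
  have h41 : (1 : ℝ) ≤ 4 ^ X := one_le_pow₀ (by norm_num)
  have hΘr : (1 : ℝ) ≤ Θ := by exact_mod_cast hΘ
  have h416 : (4 : ℝ) ^ X * 4 ^ X = 16 ^ X := by rw [← mul_pow]; norm_num
  have h4V : (4 : ℝ) ^ X / V ≤ 1 := by
    rw [div_le_one (by linarith)]
    nlinarith
  obtain ⟨es1, -⟩ := est_pack hX hZpos hV16 hub' a1 a1' ha ha' hρ1 (Or.inl (by linarith))
  refine ⟨h, k, l, w, x, y, by omega, hx, ?_, ?_, ?_, ?_⟩
  · unfold bA1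
    rw [haN, hCd]; exact_mod_cast hsq
  · unfold bA2
    rw [haN', hKd, pell_eq_int a1' (X + 1)]
    exact ⟨_, rfl⟩
  · unfold bS bT
    have e0 : (b : ℤ) * w = 2 ^ (2 * X + 1) := by exact_mod_cast hw.symm
    rw [haN, hCd, e0]
    exact yn_pow_two a1 (2 * X + 1)
  · rw [hCd, hKd]
    have hLZ : (l : ℤ) * Y = Z := by rw [hl]; push_cast; ring
    rw [mul_assoc, hLZ]
    have e2 : |(Pell.yn a1 (2 * X + 1) : ℝ) / Pell.yn a1' (X + 1) - Z| ≤ 2 * (4 ^ X / V) := by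
      have e3 : 1 / (2 * (V : ℝ)) ≤ 4 ^ X / V := by
        rw [div_le_div_iff₀ (by linarith) (by linarith)]; nlinarith
      rw [abs_le] at es1 ⊢
      constructor <;> linarith
    rw [div_sub' hKr.ne', abs_div, abs_of_pos hKr, div_le_iff₀ hKr] at e2
    generalize (Pell.yn a1 (2 * X + 1)) = C at *
    generalize (Pell.yn a1' (X + 1)) = K at *
    have e4 : ((C : ℝ) - K * Z) ^ 2 ≤ (2 * (4 ^ X / V) * K) ^ 2 := by
      rw [← sq_abs]
      exact pow_le_pow_left₀ (abs_nonneg _) e2 2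
    have hV0 : (0 : ℝ) < V := by linarith
    have e5 : (Θ : ℝ) * (2 * (4 ^ X / V) * K) ^ 2 < (K : ℝ) ^ 2 := by
      have e6 : (Θ : ℝ) * (2 * (4 ^ X / V)) ^ 2 < 1 := by
        have : (Θ : ℝ) * (2 * (4 ^ X / V)) ^ 2 = (4 * Θ * 16 ^ X) / V ^ 2 := by
          rw [← h416]; field_simp; ring
        rw [this, div_lt_one (by positivity)]
        have : (0 : ℝ) < 16 ^ X := by positivity
        nlinarith
      calc (Θ : ℝ) * (2 * (4 ^ X / V) * K) ^ 2 = (Θ : ℝ) * (2 * (4 ^ X / V)) ^ 2 * K ^ 2 := by ring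
        _ < 1 * (K : ℝ) ^ 2 := by gcongr
        _ = _ := one_mul _
    have e7 : (Θ : ℝ) * ((C : ℝ) - K * Z) ^ 2 < (K : ℝ) ^ 2 :=
      lt_of_le_of_lt (mul_le_mul_of_nonneg_left e4 (by linarith)) e5
    exact_mod_cast e7


def wt {n : ℕ} (δ : ℕ) (α : Fin n → ℕ) : ℕ := ∑ i, α i * (δ + 1) ^ (i : ℕ)

theorem wt_succ {n : ℕ} (δ : ℕ) (α : Fin (n + 1) → ℕ) :
    wt δ α = α 0 + (δ + 1) * wt δ (fun i : Fin n => α i.succ) := by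
  unfold wt
  rw [Fin.sum_univ_succ, Finset.mul_sum]
  simp only [Fin.val_zero, pow_zero, mul_one, Fin.val_succ]
  congr 1
  apply Finset.sum_congr rfl
  intro i _
  ring

theorem wt_inj {n : ℕ} (δ : ℕ) (α α' : Fin n → ℕ) (h : ∀ i, α i ≤ δ) (h' : ∀ i, α' i ≤ δ)
    (hw : wt δ α = wt δ α') : α = α' := by
  induction n with
  | zero => exact Subsingleton.elim _ _
  | succ n ih =>
    rw [wt_succ, wt_succ] at hw
    have h0 : α 0 = α' 0 := by
      have := congrArg (· % (δ + 1)) hw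
      simp only [Nat.add_mul_mod_self_left] at this
      rwa [Nat.mod_eq_of_lt (Nat.lt_succ_of_le (h 0)), Nat.mod_eq_of_lt (Nat.lt_succ_of_le (h' 0))] at this
    rw [h0] at hw
    have h1 := Nat.eq_of_mul_eq_mul_left (Nat.succ_pos δ) (Nat.add_left_cancel hw)
    have h2 := ih _ _ (fun i => h i.succ) (fun i => h' i.succ) h1
    funext i
    refine Fin.cases h0 (fun j => ?_) i
    exact congrFun h2 j

theorem decomp {n δ E : ℕ} (A : Finset (Fin n → ℕ)) (q : (Fin n → ℕ) → ℤ)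
    (hA : ∀ α ∈ A, ∑ i, α i = δ) (hE : ∀ α ∈ A, wt δ α ≤ E) (hE1 : 1 ≤ E) {β : ℤ} (hβ : 1 ≤ β)
    (x : Fin n → ℤ) (hx : ∀ i, 0 ≤ x i)
    (hQ : 4 * ((∑ α ∈ A, |q α| * ∏ i, ((α i).factorial : ℤ)) * (∑ i, x i) ^ δ) ≤ β) :
    ∃ Low High : ℤ,
      (∑ α ∈ A, q α * (∏ i, ((α i).factorial : ℤ)) * β ^ (E - wt δ α)) *
        (∑ i, x i * β ^ ((δ + 1) ^ (i : ℕ))) ^ δ =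
      Low + (δ.factorial * ∑ α ∈ A, q α * ∏ i, x i ^ α i) * β ^ E + High * β ^ (E + 1) ∧
      4 * |Low| ≤ β ^ E ∧ 4 * |(δ.factorial * ∑ α ∈ A, q α * ∏ i, x i ^ α i : ℤ)| ≤ β := by
  classical
  let Q : (Fin n → ℕ) → ℤ := fun α => q α * ∏ i, ((α i).factorial : ℤ)
  let g : (Fin n → ℕ) → ℤ := fun α' => (Nat.multinomial Finset.univ α' : ℤ) * ∏ i, x i ^ α' i
  have hg0 : ∀ α', 0 ≤ g α' := fun α' =>
    mul_nonneg (Int.natCast_nonneg _) (Finset.prod_nonneg fun i _ => pow_nonneg (hx i) _)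
  let B := Finset.piAntidiag (Finset.univ : Finset (Fin n)) δ
  have hB : ∀ α, α ∈ B ↔ ∑ i, α i = δ := by
    intro α; simp [B, Finset.mem_piAntidiag]
  have hsum : ∑ α' ∈ B, g α' = (∑ i, x i) ^ δ := by
    rw [Finset.sum_pow_eq_sum_piAntidiag]
  have hpow : (∑ i, x i * β ^ ((δ + 1) ^ (i : ℕ))) ^ δ = ∑ α' ∈ B, g α' * β ^ wt δ α' := by
    rw [Finset.sum_pow_eq_sum_piAntidiag]
    apply Finset.sum_congr rfl
    intro α' _
    simp only [g, mul_pow, Finset.prod_mul_distrib]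
    rw [mul_assoc]
    congr 2
    unfold wt
    rw [← Finset.prod_pow_eq_pow_sum]
    apply Finset.prod_congr rfl
    intro i _
    rw [← pow_mul, mul_comm]
  have hle : ∀ α : Fin n → ℕ, ∑ i, α i = δ → ∀ i, α i ≤ δ := by
    intro α h i
    rw [← h]
    exact Finset.single_le_sum (f := α) (fun _ _ => Nat.zero_le _) (Finset.mem_univ i)
  have habsQ : ∀ α, |Q α| = |q α| * ∏ i, ((α i).factorial : ℤ) := by
    intro α
    simp only [Q]
    rw [abs_mul, abs_of_nonneg (Finset.prod_nonneg fun i _ => Int.natCast_nonneg _)]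
  have hmid : ∀ α ∈ A, Q α * g α = δ.factorial * (q α * ∏ i, x i ^ α i) := by
    intro α hα
    have := Nat.multinomial_spec (Finset.univ : Finset (Fin n)) α
    rw [hA α hα] at this
    rw [← this]
    simp only [Q, g]
    push_cast
    ring
  refine ⟨∑ α ∈ A, ∑ α' ∈ B, (if wt δ α' < wt δ α then Q α * g α' * β ^ (E - wt δ α + wt δ α') else 0),
    ∑ α ∈ A, ∑ α' ∈ B, (if wt δ α < wt δ α' then Q α * g α' * β ^ (wt δ α' - wt δ α - 1) else 0),
    ?_, ?_, ?_⟩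
  · rw [hpow, Finset.sum_mul, Finset.mul_sum, Finset.sum_mul, Finset.sum_mul, ← Finset.sum_add_distrib,
      ← Finset.sum_add_distrib]
    apply Finset.sum_congr rfl
    intro α hα
    have hself : Q α * g α * β ^ E = ∑ α' ∈ B, if α = α' then Q α * g α' * β ^ E else 0 := by
      rw [Finset.sum_ite_eq]
      rw [if_pos ((hB α).2 (hA α hα))]
    rw [← hmid α hα, hself, Finset.mul_sum, Finset.sum_mul, ← Finset.sum_add_distrib,
      ← Finset.sum_add_distrib]
    apply Finset.sum_congr rfl
    intro α' hα'
    have hEα := hE α hα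
    rcases lt_trichotomy (wt δ α') (wt δ α) with h | h | h
    · have hne : α ≠ α' := by rintro rfl; exact lt_irrefl _ h
      rw [if_pos h, if_neg hne, if_neg (not_lt.2 h.le)]
      simp only [Q]; rw [pow_add]; ring
    · have he : α' = α := wt_inj δ α' α (hle _ ((hB _).1 hα')) (hle _ (hA α hα)) h
      subst he
      rw [if_neg (lt_irrefl _), if_pos rfl, if_neg (lt_irrefl _)]
      have : β ^ E = β ^ (E - wt δ α') * β ^ wt δ α' := by rw [← pow_add]; congr 1; omega
      rw [this]
      simp only [Q]; ring
    · have hne : α ≠ α' := by rintro rfl; exact lt_irrefl _ h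
      rw [if_neg (not_lt.2 h.le), if_neg hne, if_pos h]
      have : β ^ (E - wt δ α) * β ^ wt δ α' = β ^ (wt δ α' - wt δ α - 1) * β ^ (E + 1) := by
        rw [← pow_add, ← pow_add]; congr 1; omega
      simp only [Q]
      linear_combination (q α * (∏ i, ((α i).factorial : ℤ)) * g α') * this
  · have hb : |∑ α ∈ A, ∑ α' ∈ B, (if wt δ α' < wt δ α then Q α * g α' * β ^ (E - wt δ α + wt δ α') else 0)|
        ≤ ∑ α ∈ A, ∑ α' ∈ B, |Q α| * g α' * β ^ (E - 1) := by
      refine (Finset.abs_sum_le_sum_abs _ _).trans (Finset.sum_le_sum fun α hα => ?_)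
      refine (Finset.abs_sum_le_sum_abs _ _).trans (Finset.sum_le_sum fun α' hα' => ?_)
      have hpos : 0 ≤ |Q α| * g α' := mul_nonneg (abs_nonneg _) (hg0 _)
      split_ifs with h
      · rw [abs_mul, abs_mul, abs_of_nonneg (hg0 α'), abs_of_nonneg (by positivity : 0 ≤ β ^ (E - wt δ α + wt δ α'))]
        apply mul_le_mul_of_nonneg_left _ hpos
        have := hE α hα
        exact pow_le_pow_right₀ hβ (by omega)
      · rw [abs_zero]
        exact mul_nonneg hpos (by positivity)
    have he : ∑ α ∈ A, ∑ α' ∈ B, |Q α| * g α' * β ^ (E - 1) =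
        ((∑ α ∈ A, |q α| * ∏ i, ((α i).factorial : ℤ)) * (∑ i, x i) ^ δ) * β ^ (E - 1) := by
      rw [← hsum, Finset.sum_mul_sum, Finset.sum_mul]
      apply Finset.sum_congr rfl
      intro α _
      rw [Finset.sum_mul, habsQ]
    rw [he] at hb
    calc _ ≤ 4 * (((∑ α ∈ A, |q α| * ∏ i, ((α i).factorial : ℤ)) * (∑ i, x i) ^ δ) * β ^ (E - 1)) := by
          linarith
      _ = 4 * ((∑ α ∈ A, |q α| * ∏ i, ((α i).factorial : ℤ)) * (∑ i, x i) ^ δ) * β ^ (E - 1) := by ring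
      _ ≤ β * β ^ (E - 1) := by
          apply mul_le_mul_of_nonneg_right hQ; positivity
      _ = β ^ E := by rw [← pow_succ']; congr 1; omega
  · refine le_trans ?_ hQ
    apply mul_le_mul_of_nonneg_left _ (by norm_num)
    rw [Finset.mul_sum, Finset.sum_mul]
    refine (Finset.abs_sum_le_sum_abs _ _).trans (Finset.sum_le_sum fun α hα => ?_)
    rw [← hmid α hα, abs_mul, ← habsQ, abs_of_nonneg (hg0 α), ← hsum]
    apply mul_le_mul_of_nonneg_left _ (abs_nonneg _)
    exact Finset.single_le_sum (f := g) (fun _ _ => hg0 _) ((hB α).2 (hA α hα))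


theorem digit_zero {β E s K : ℕ} {Low D High H : ℤ} (hβ : 1 ≤ β) (hs : E + 1 ≤ s)
    (hK : (K : ℤ) = Low + D * β ^ E + High * β ^ (E + 1) + H + β ^ s) (hH : 2 * H = β ^ E)
    (hL : 4 * |Low| ≤ (β : ℤ) ^ E) (hD : 4 * |D| ≤ β) : (K / β ^ E) % β = 0 ↔ D = 0 := by
  have hβE : (0 : ℤ) < (β : ℤ) ^ E := by positivity
  obtain ⟨t, rfl⟩ : ∃ t, s = E + 1 + t := ⟨s - (E + 1), by omega⟩
  have hdiv : ((K / β ^ E : ℕ) : ℤ) = D + β * (High + β ^ t) := by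
    push_cast
    obtain ⟨l1, l2⟩ := abs_le.1 (show |Low| ≤ |Low| from le_rfl)
    have e : (K : ℤ) = (Low + H) + β ^ E * (D + β * (High + β ^ t)) := by
      rw [hK]; ring
    rw [e, Int.add_mul_ediv_left _ _ hβE.ne', Int.ediv_eq_zero_of_lt (by linarith) (by linarith), zero_add]
  constructor
  · intro h
    have h1 : β ∣ K / β ^ E := Nat.dvd_of_mod_eq_zero h
    have h2 : (β : ℤ) ∣ ((K / β ^ E : ℕ) : ℤ) := by exact_mod_cast h1
    rw [hdiv, Int.dvd_add_left (Dvd.intro _ rfl)] at h2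
    apply Int.eq_zero_of_abs_lt_dvd h2
    have : (1 : ℤ) ≤ β := by exact_mod_cast hβ
    linarith [abs_nonneg D]
  · intro h
    rw [h, zero_add] at hdiv
    have h2 : (β : ℤ) ∣ ((K / β ^ E : ℕ) : ℤ) := ⟨_, hdiv⟩
    exact Nat.mod_eq_zero_of_dvd (by exact_mod_cast h2)

def cβ (δ γ : ℕ) (b : ℤ) : ℤ := 2 ^ γ * b ^ (δ + 1)

def cD {n : ℕ} (δ γ E : ℕ) (A : Finset (Fin n → ℕ)) (q : (Fin n → ℕ) → ℤ) (b : ℤ) : ℤ :=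
  ∑ α ∈ A, q α * (∏ i, ((α i).factorial : ℤ)) * (cβ δ γ b) ^ (E - wt δ α)

def cc (δ γ : ℕ) (a b g : ℤ) : ℤ := cβ δ γ b + a * (cβ δ γ b) ^ (δ + 1) + g

def cH (δ γ E : ℕ) (b : ℤ) : ℤ := 2 ^ (γ - 1) * b ^ (δ + 1) * (cβ δ γ b) ^ (E - 1)

def cK {n : ℕ} (δ γ E s : ℕ) (A : Finset (Fin n → ℕ)) (q : (Fin n → ℕ) → ℤ) (a b g : ℤ) : ℤ :=
  cD δ γ E A q b * (cc δ γ a b g) ^ δ + cH δ γ E b + (cβ δ γ b) ^ s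

def cm (ν δ γ : ℕ) (b : ℤ) : ℤ := ∑ i ∈ Finset.range ν, (b - 1) * (cβ δ γ b) ^ ((δ + 1) ^ (i + 2))

def cM (ν δ γ r : ℕ) (b : ℤ) : ℤ := (cβ δ γ b) ^ r - 1 - cm ν δ γ b

def cT (δ γ E : ℕ) (b : ℤ) : ℤ := (cβ δ γ b - 1) * (cβ δ γ b) ^ E

def concatZ (N S1 T1 S2 T2 : ℤ) : ℤ :=
  (N - 1 - S1) + 2 * N * ((N - 1 - T1) + 2 * N * ((S1 + T1) + 2 * N * ((N - 1 - S2) +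
    2 * N * ((N - 1 - T2) + 2 * N * (S2 + T2)))))

theorem concat_cast {N S1 T1 S2 T2 : ℕ} (h1 : S1 < N) (h2 : T1 < N) (h3 : S2 < N) (h4 : T2 < N) :
    ((concatX N S1 T1 S2 T2 : ℕ) : ℤ) = concatZ N S1 T1 S2 T2 := by
  unfold concatX concatZ
  have key : ∀ S : ℕ, S < N → ((N - 1 - S : ℕ) : ℤ) = N - 1 - S := by
    intro S hS; omega
  push_cast [key _ h1, key _ h2, key _ h3, key _ h4]
  ring

theorem concat_ge {N S1 T1 S2 T2 : ℕ} (h : 1 ≤ N) : T2 ≤ concatX N S1 T1 S2 T2 := by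
  have key : ∀ u v : ℕ, v ≤ u + 2 * N * v := by
    intro u v
    have : 1 * v ≤ 2 * N * v := Nat.mul_le_mul_right v (by omega)
    omega
  unfold concatX
  refine le_trans ?_ (key _ _)
  refine le_trans ?_ (key _ _)
  refine le_trans ?_ (key _ _)
  refine le_trans ?_ (key _ _)
  refine le_trans ?_ (key _ _)
  exact Nat.le_add_left _ _

theorem cm_lt (δ γ : ℕ) (hδ : 1 ≤ δ) {b : ℤ} (hb : 1 ≤ b) (hbβ : b ≤ cβ δ γ b) (n : ℕ) :
    0 ≤ cm n δ γ b ∧ cm n δ γ b < (cβ δ γ b) ^ ((δ + 1) ^ (n + 2)) := by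
  unfold cm
  generalize cβ δ γ b = β at *
  have hβ0 : 0 < β := by linarith
  induction n with
  | zero => simp; positivity
  | succ n ih =>
    rw [Finset.sum_range_succ]
    have hp : 0 < β ^ ((δ + 1) ^ (n + 2)) := by positivity
    refine ⟨add_nonneg ih.1 (mul_nonneg (by linarith) hp.le), ?_⟩
    have h1 : β ^ ((δ + 1) ^ (n + 2) + 1) ≤ β ^ ((δ + 1) ^ (n + 1 + 2)) := by
      apply pow_le_pow_right₀ (by linarith)
      have : 1 ≤ (δ + 1) ^ (n + 2) := Nat.one_le_pow _ _ (by omega)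
      have : (δ + 1) ^ (n + 1 + 2) = (δ + 1) ^ (n + 2) * (δ + 1) := by ring
      rw [this]
      nlinarith
    rw [pow_succ] at h1
    nlinarith [ih.2]

theorem code_bounds {n : ℕ} (ν δ γ E r s : ℕ) (A : Finset (Fin n → ℕ)) (q : (Fin n → ℕ) → ℤ) {Q : ℕ}
    (hQ : (∑ α ∈ A, |q α| * ∏ i, ((α i).factorial : ℤ)) = Q) (hδ : 1 ≤ δ) (hE : 1 ≤ E)
    (hr : r = (δ + 1) ^ (ν + 2)) (hs : s = E + 2 + (r + 2) * δ) (hγ : 2 ≤ γ) (hγQ : Q ≤ 2 ^ γ)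
    {a b g : ℤ} (ha : 0 ≤ a) (hab : a < b) (hg : 0 ≤ g) (hg2 : g < (cβ δ γ b) ^ r) :
    b + 1 ≤ cβ δ γ b ∧ g < (cβ δ γ b) ^ (s + 2) ∧ (0 ≤ cM ν δ γ r b ∧ cM ν δ γ r b < (cβ δ γ b) ^ (s + 2)) ∧
    (0 ≤ cK δ γ E s A q a b g ∧ cK δ γ E s A q a b g < (cβ δ γ b) ^ (s + 2)) ∧
    (b ≤ cT δ γ E b ∧ cT δ γ E b < (cβ δ γ b) ^ (s + 2)) := by
  have hb : 1 ≤ b := by linarith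
  have hbp : b ≤ b ^ (δ + 1) := le_self_pow₀ hb (by omega)
  have hbp1 : 1 ≤ b ^ (δ + 1) := by linarith
  have h2γ : (4 : ℤ) ≤ 2 ^ γ := by
    calc (4 : ℤ) = 2 ^ 2 := by norm_num
      _ ≤ _ := pow_le_pow_right₀ (by norm_num) hγ
  have hβdef : cβ δ γ b = 2 ^ γ * b ^ (δ + 1) := rfl
  have hβ4b : 4 * b ≤ cβ δ γ b := by rw [hβdef]; exact mul_le_mul h2γ hbp (by linarith) (by linarith)
  have hβQ : (Q : ℤ) ≤ cβ δ γ b := by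
    have : (Q : ℤ) ≤ 2 ^ γ := by exact_mod_cast hγQ
    rw [hβdef]; exact le_trans this (le_mul_of_one_le_right (by linarith) hbp1)
  have hm := cm_lt δ γ hδ hb (by linarith) ν
  rw [← hr] at hm
  have hH : 2 * cH δ γ E b = (cβ δ γ b) ^ E := by
    obtain ⟨γ', rfl⟩ : ∃ γ', γ = γ' + 1 := ⟨γ - 1, by omega⟩
    obtain ⟨E', rfl⟩ : ∃ E', E = E' + 1 := ⟨E - 1, by omega⟩
    unfold cH
    rw [pow_succ (cβ δ (γ' + 1) b) E']
    simp only [Nat.add_sub_cancel]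
    rw [hβdef]; ring
  unfold cM cK cT
  have hD : |cD δ γ E A q b| ≤ (cβ δ γ b) ^ (E + 1) := by
    unfold cD
    have hβ1 : 1 ≤ cβ δ γ b := by linarith
    calc _ ≤ ∑ α ∈ A, (|q α| * ∏ i, ((α i).factorial : ℤ)) * (cβ δ γ b) ^ E := by
          refine (Finset.abs_sum_le_sum_abs _ _).trans (Finset.sum_le_sum fun α hα => ?_)
          rw [abs_mul, abs_mul, abs_of_nonneg (Finset.prod_nonneg fun i _ => Int.natCast_nonneg _),
            abs_of_nonneg (by positivity : 0 ≤ (cβ δ γ b) ^ (E - wt δ α))]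
          apply mul_le_mul_of_nonneg_left _
            (mul_nonneg (abs_nonneg _) (Finset.prod_nonneg fun i _ => Int.natCast_nonneg _))
          exact pow_le_pow_right₀ hβ1 (by omega)
      _ = Q * (cβ δ γ b) ^ E := by rw [← Finset.sum_mul, hQ]
      _ ≤ cβ δ γ b * (cβ δ γ b) ^ E := by apply mul_le_mul_of_nonneg_right hβQ; positivity
      _ = _ := by rw [← pow_succ']
  have hc : 0 ≤ cc δ γ a b g ∧ cc δ γ a b g ≤ (cβ δ γ b) ^ (r + 2) := by
    unfold cc
    generalize cβ δ γ b = β at *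
    have hβ0 : 1 ≤ β := by linarith
    have hr' : δ + 1 ≤ r := by rw [hr]; exact Nat.le_self_pow (by omega) _
    have p1 : β ^ (δ + 1) ≤ β ^ r := pow_le_pow_right₀ hβ0 hr'
    have p2 : β ^ 1 ≤ β ^ r := pow_le_pow_right₀ hβ0 (by omega)
    have p3 : 0 ≤ β ^ (δ + 1) := by positivity
    have p4 : a * β ^ (δ + 1) ≤ β * β ^ r := mul_le_mul (by linarith) p1 p3 (by linarith)
    have p5 : β ^ r * 1 ≤ β ^ r * β := mul_le_mul_of_nonneg_left hβ0 (by positivity)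
    rw [pow_one] at p2
    constructor
    · have := mul_nonneg ha p3
      linarith
    · have p6 : 4 * (β * β ^ r) ≤ β * (β * β ^ r) := mul_le_mul_of_nonneg_right (by linarith) (by positivity)
      have p7 : β ^ (r + 2) = β * (β * β ^ r) := by ring
      rw [p7]
      have : 0 ≤ β ^ r := by positivity
      linarith
  have hT : |cD δ γ E A q b * (cc δ γ a b g) ^ δ| ≤ (cβ δ γ b) ^ (E + 1 + (r + 2) * δ) := by
    rw [abs_mul, abs_pow, abs_of_nonneg hc.1, pow_add, pow_mul]
    apply mul_le_mul hD (pow_le_pow_left₀ hc.1 hc.2 _) (by have := hc.1; positivity)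
    have : 0 ≤ cβ δ γ b := by linarith
    positivity
  generalize cβ δ γ b = β at *
  generalize cD δ γ E A q b * (cc δ γ a b g) ^ δ = T at *
  generalize cH δ γ E b = H at *
  have hβ4 : 4 ≤ β := by linarith
  have hβ0 : 1 ≤ β := by linarith
  have hss : E + 1 + (r + 2) * δ + 1 = s := by omega
  obtain ⟨t1, t2⟩ := abs_le.1 hT
  have hrs : r ≤ s := by rw [hs]; nlinarith
  have q1 : β ^ r ≤ β ^ s := pow_le_pow_right₀ hβ0 hrs
  have q2 : β ^ E ≤ β ^ s := pow_le_pow_right₀ hβ0 (by omega)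
  have q3 : β ^ (E + 1) ≤ β ^ s := pow_le_pow_right₀ hβ0 (by omega)
  have q4 : β ^ (E + 1 + (r + 2) * δ) ≤ β ^ s := pow_le_pow_right₀ hβ0 (by omega)
  have q5 : 0 < β ^ s := by positivity
  have q6 : β ^ (s + 2) = β * (β * β ^ s) := by ring
  have q7 : 4 * β ^ s ≤ β * β ^ s := mul_le_mul_of_nonneg_right hβ4 q5.le
  have q8 : 1 * (β * β ^ s) ≤ β * (β * β ^ s) := mul_le_mul_of_nonneg_right hβ0 (by positivity)
  have q9 : 1 ≤ β ^ E := one_le_pow₀ hβ0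
  have q10 : (β - 1) * 1 ≤ (β - 1) * β ^ E := mul_le_mul_of_nonneg_left q9 (by linarith)
  have q11 : (β - 1) * β ^ E = β ^ (E + 1) - β ^ E := by ring
  rw [q6]
  refine ⟨by linarith, by linarith, ⟨by linarith, by linarith⟩, ⟨by linarith, by linarith⟩, by linarith, by linarith⟩


theorem code_nat {n : ℕ} (ν δ γ E r s : ℕ) (A : Finset (Fin n → ℕ)) (q : (Fin n → ℕ) → ℤ) {Q : ℕ}
    (hQ : (∑ α ∈ A, |q α| * ∏ i, ((α i).factorial : ℤ)) = Q) (hδ : 1 ≤ δ) (hE : 1 ≤ E)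
    (hr : r = (δ + 1) ^ (ν + 2)) (hs : s = E + 2 + (r + 2) * δ) (hγ : 2 ≤ γ) (hγQ : Q ≤ 2 ^ γ)
    {a b g : ℕ} (hab : a < b) (hg2 : (g : ℤ) < (cβ δ γ b) ^ r) :
    ∃ N M K T : ℕ, (N : ℤ) = (cβ δ γ b) ^ (s + 2) ∧ (M : ℤ) = cM ν δ γ r b ∧
      (K : ℤ) = cK δ γ E s A q a b g ∧ (T : ℤ) = cT δ γ E b ∧ g < N ∧ M < N ∧ K < N ∧ T < N ∧
      ((concatX N g M K T : ℕ) : ℤ) = concatZ ((cβ δ γ b) ^ (s + 2)) g (cM ν δ γ r b)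
        (cK δ γ E s A q a b g) (cT δ γ E b) ∧ b ≤ concatX N g M K T := by
  obtain ⟨h1, h2, ⟨h3, h4⟩, ⟨h5, h6⟩, h7, h8⟩ := code_bounds ν δ γ E r s A q hQ hδ hE hr hs hγ hγQ
    (a := a) (b := b) (g := g) (by positivity) (by exact_mod_cast hab) (by positivity) hg2
  obtain ⟨N, hN⟩ := Int.eq_ofNat_of_zero_le (a := (cβ δ γ b) ^ (s + 2)) (by linarith)
  obtain ⟨M, hM⟩ := Int.eq_ofNat_of_zero_le h3
  obtain ⟨K, hK⟩ := Int.eq_ofNat_of_zero_le h5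
  obtain ⟨T, hT⟩ := Int.eq_ofNat_of_zero_le (a := cT δ γ E b) (by linarith)
  rw [hN] at h2 h4 h6 h8
  rw [hM] at h4
  rw [hK] at h6
  rw [hT] at h8 h7
  have g1 : g < N := by exact_mod_cast h2
  have g2 : M < N := by exact_mod_cast h4
  have g3 : K < N := by exact_mod_cast h6
  have g4 : T < N := by exact_mod_cast h8
  refine ⟨N, M, K, T, hN.symm, hM.symm, hK.symm, hT.symm, g1, g2, g3, g4, ?_, ?_⟩
  · rw [concat_cast g1 g2 g3 g4, hN, hM, hK, hT]
  · exact le_trans (by exact_mod_cast h7) (concat_ge (by omega))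

theorem e_mono {δ : ℕ} (hδ : 1 ≤ δ) : StrictMono (fun i : ℕ => (δ + 1) ^ (i + 2)) := by
  intro i j hij
  exact Nat.pow_lt_pow_right (by omega) (by omega)

theorem cc_eq {ν δ γ : ℕ} {a b g : ℤ} (z : Fin ν → ℕ)
    (hg : g = ∑ i : Fin ν, (z i : ℤ) * (cβ δ γ b) ^ ((δ + 1) ^ ((i : ℕ) + 2))) :
    cc δ γ a b g = ∑ i, (Fin.cons 1 (Fin.cons a (fun i => (z i : ℤ)) : Fin (ν + 1) → ℤ) : Fin (ν + 2) → ℤ) i *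
      (cβ δ γ b) ^ ((δ + 1) ^ (i : ℕ)) := by
  rw [Fin.sum_univ_succ, Fin.sum_univ_succ]
  simp only [Fin.cons_zero, Fin.cons_succ, Fin.val_zero, Fin.val_succ, pow_zero, pow_one, zero_add, one_mul]
  unfold cc
  rw [hg, add_assoc]

set_option maxHeartbeats 1000000 in
theorem code_iff (ν δ γ E r s : ℕ) (A : Finset (Fin (ν + 2) → ℕ)) (q : (Fin (ν + 2) → ℕ) → ℤ) {Q : ℕ}
    (hQ : (∑ α ∈ A, |q α| * ∏ i, ((α i).factorial : ℤ)) = Q) (hδ : 1 ≤ δ) (hE : 1 ≤ E)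
    (hA : ∀ α ∈ A, ∑ i, α i = δ) (hwE : ∀ α ∈ A, wt δ α ≤ E)
    (hr : r = (δ + 1) ^ (ν + 2)) (hs : s = E + 2 + (r + 2) * δ) (hγ : 2 ≤ γ)
    (hγQ : 4 * Q * (ν + 2) ^ δ ≤ 2 ^ γ)
    {a b g j : ℕ} (hb : b = 2 ^ j) (hab : a < b) (hg2 : (g : ℤ) < (cβ δ γ b) ^ r)
    {N M K T : ℕ} (hN : (N : ℤ) = (cβ δ γ b) ^ (s + 2)) (hM : (M : ℤ) = cM ν δ γ r b)
    (hK : (K : ℤ) = cK δ γ E s A q a b g) (hT : (T : ℤ) = cT δ γ E b) (hgN : g < N) (hMN : M < N)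
    (hKN : K < N) (hTN : T < N) :
    N ^ 4 ∣ Nat.choose (2 * concatX N g M K T) (concatX N g M K T) ↔
    ∃ z : Fin ν → ℕ, (∀ i, z i < b) ∧
      (g : ℤ) = ∑ i : Fin ν, (z i : ℤ) * (cβ δ γ b) ^ ((δ + 1) ^ ((i : ℕ) + 2)) ∧
      ∑ α ∈ A, q α * ∏ i, (Fin.cons 1 (Fin.cons (a : ℤ) (fun i => (z i : ℤ)) : Fin (ν + 1) → ℤ) :
        Fin (ν + 2) → ℤ) i ^ α i = 0 := by
  obtain ⟨qq, hqq⟩ : ∃ qq, qq = γ + j * (δ + 1) := ⟨_, rfl⟩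
  have hβ : cβ δ γ b = ((2 ^ qq : ℕ) : ℤ) := by
    unfold cβ; rw [hb, hqq]; push_cast; rw [pow_add 2 γ, pow_mul]
  have hjq : j ≤ qq := by rw [hqq]; nlinarith
  have hNk : N = 2 ^ (qq * (s + 2)) := by
    rw [hβ] at hN
    rw [pow_mul]; exact_mod_cast hN
  have hb1 : 1 ≤ b := by omega
  have hm : ∃ m : ℕ, m = ∑ i ∈ Finset.range ν, (2 ^ j - 1) * (2 ^ qq) ^ ((δ + 1) ^ (i + 2)) := ⟨_, rfl⟩
  obtain ⟨m, hm⟩ := hm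
  have hmz : (m : ℤ) = cm ν δ γ b := by
    rw [hm]; unfold cm
    rw [hβ]; push_cast
    rw [Nat.cast_sub Nat.one_le_two_pow, hb]; push_cast; rfl
  have hpp : 2 ^ j - 1 < 2 ^ j := Nat.sub_lt (by positivity) one_pos
  have hmlt : m < (2 ^ qq) ^ r := by
    rw [hm, hr]
    exact sum_digits_lt hjq (e_mono hδ) (fun _ => 2 ^ j - 1) (fun _ => hpp) ν
  have hglt : g < (2 ^ qq) ^ r := by
    rw [hβ] at hg2; exact_mod_cast hg2
  have hMm : M = 2 ^ (qq * r) - 1 - m := by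
    unfold cM at hM
    rw [hβ, ← hmz] at hM
    rw [pow_mul]
    have : (((2 ^ qq) ^ r : ℕ) : ℤ) = ((2 ^ qq : ℕ) : ℤ) ^ r := by push_cast; rfl
    rw [← this] at hM
    omega
  have hTm : T = (2 ^ qq - 1) * 2 ^ (qq * E) := by
    unfold cT at hT
    rw [hβ] at hT
    have : ((2 ^ qq - 1 : ℕ) : ℤ) = ((2 ^ qq : ℕ) : ℤ) - 1 := by
      rw [Nat.cast_sub Nat.one_le_two_pow]; push_cast; rfl
    rw [← this] at hT
    rw [pow_mul]; exact_mod_cast hT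
  have hmain := concat_main (qq * (s + 2)) g M K T (by rw [← hNk]; exact hgN) (by rw [← hNk]; exact hMN)
    (by rw [← hNk]; exact hKN) (by rw [← hNk]; exact hTN)
  rw [← hNk] at hmain
  rw [hmain, hMm, and_compl_iff (qq * r) g m (by rw [pow_mul]; exact hglt) (by rw [pow_mul]; exact hmlt), hm,
    submask_iff hjq (e_mono hδ) ν g, hTm, and_mask_iff]
  -- the key equivalence for a given z
  have key : ∀ z : Fin ν → ℕ, (∀ i, z i < b) →
      (g : ℤ) = ∑ i : Fin ν, (z i : ℤ) * (cβ δ γ b) ^ ((δ + 1) ^ ((i : ℕ) + 2)) →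
      ((K / 2 ^ (qq * E)) % 2 ^ qq = 0 ↔
        ∑ α ∈ A, q α * ∏ i, (Fin.cons 1 (Fin.cons (a : ℤ) (fun i => (z i : ℤ)) : Fin (ν + 1) → ℤ) :
        Fin (ν + 2) → ℤ) i ^ α i = 0) := by
    intro z hz hgz
    have hcc := cc_eq (a := (a : ℤ)) z hgz
    have hx0 : ∀ i, 0 ≤ (Fin.cons 1 (Fin.cons (a : ℤ) (fun i => (z i : ℤ)) : Fin (ν + 1) → ℤ) : Fin (ν + 2) → ℤ) i := by
      intro i
      refine Fin.cases (by simp) (fun i => ?_) i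
      refine Fin.cases (by simp) (fun i => ?_) i
      simp
    have hxb : ∀ i, (Fin.cons 1 (Fin.cons (a : ℤ) (fun i => (z i : ℤ)) : Fin (ν + 1) → ℤ) : Fin (ν + 2) → ℤ) i ≤ b := by
      intro i
      refine Fin.cases (by simpa using by exact_mod_cast hb1) (fun i => ?_) i
      refine Fin.cases (by simpa using hab.le) (fun i => ?_) i
      simpa using (hz i).le
    generalize (Fin.cons 1 (Fin.cons (a : ℤ) (fun i => (z i : ℤ)) : Fin (ν + 1) → ℤ) : Fin (ν + 2) → ℤ) = x at *
    have hsx : ∑ i, x i ≤ (ν + 2) * b := by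
      calc ∑ i, x i ≤ ∑ i : Fin (ν + 2), (b : ℤ) := Finset.sum_le_sum fun i _ => hxb i
        _ = _ := by simp
    have hsx0 : 0 ≤ ∑ i, x i := Finset.sum_nonneg fun i _ => hx0 i
    have hβ1 : 1 ≤ cβ δ γ b := by rw [hβ]; exact_mod_cast Nat.one_le_two_pow
    have hQb : 4 * ((∑ α ∈ A, |q α| * ∏ i, ((α i).factorial : ℤ)) * (∑ i, x i) ^ δ) ≤ cβ δ γ b := by
      rw [hQ]
      have hbz : (1 : ℤ) ≤ b := by exact_mod_cast hb1
      have hγz : (4 * Q * (ν + 2) ^ δ : ℤ) ≤ 2 ^ γ := by exact_mod_cast hγQ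
      calc 4 * ((Q : ℤ) * (∑ i, x i) ^ δ) ≤ 4 * (Q * ((ν + 2) * b) ^ δ) := by gcongr
        _ = (4 * Q * (ν + 2) ^ δ) * (b : ℤ) ^ δ := by rw [mul_pow]; ring
        _ ≤ 2 ^ γ * (b : ℤ) ^ (δ + 1) := by
          apply mul_le_mul hγz (pow_le_pow_right₀ hbz (by omega)) (by positivity) (by positivity)
    obtain ⟨Low, High, d1, d2, d3⟩ := decomp A q hA hwE hE hβ1 x hx0 hQb
    have hH : 2 * cH δ γ E b = (cβ δ γ b) ^ E := by
      obtain ⟨γ', rfl⟩ : ∃ γ', γ = γ' + 1 := ⟨γ - 1, by omega⟩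
      obtain ⟨E', rfl⟩ : ∃ E', E = E' + 1 := ⟨E - 1, by omega⟩
      unfold cH
      rw [pow_succ (cβ δ (γ' + 1) b) E']
      simp only [Nat.add_sub_cancel]
      rw [show cβ δ (γ' + 1) b = 2 ^ (γ' + 1) * (b : ℤ) ^ (δ + 1) from rfl]; ring
    have hKz : (K : ℤ) = Low + (δ.factorial * ∑ α ∈ A, q α * ∏ i, x i ^ α i) * (cβ δ γ b) ^ E +
        High * (cβ δ γ b) ^ (E + 1) + cH δ γ E b + (cβ δ γ b) ^ s := by
      rw [← d1, hK]
      unfold cK cD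
      rw [hcc]
    rw [hβ] at hKz d2 d3
    rw [hβ] at hH
    rw [pow_mul, digit_zero Nat.one_le_two_pow (by omega) hKz hH d2 d3]
    have : (δ.factorial : ℤ) ≠ 0 := by exact_mod_cast δ.factorial_ne_zero
    rw [mul_eq_zero, or_iff_right this]
  constructor
  · rintro ⟨⟨z, hz1, hz2⟩, h0⟩
    have hgz : (g : ℤ) = ∑ i : Fin ν, (z i : ℤ) * (cβ δ γ b) ^ ((δ + 1) ^ ((i : ℕ) + 2)) := by
      rw [hz2, hβ, Finset.sum_range]; push_cast; rfl
    have hzb : ∀ i : Fin ν, z i < b := fun i => by rw [hb]; exact hz1 i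
    exact ⟨fun i => z i, hzb, hgz, (key (fun i => z i) hzb hgz).1 h0⟩
  · rintro ⟨z, hz, hgz, h0⟩
    refine ⟨⟨fun i => if h : i < ν then z ⟨i, h⟩ else 0, ?_, ?_⟩, (key z hz hgz).2 h0⟩
    · intro i
      dsimp only
      split_ifs with h
      · rw [← hb]; exact hz _
      · positivity
    · rw [hβ] at hgz
      rw [Finset.sum_range]
      simp only [Fin.is_lt, dite_true, Fin.eta]
      exact_mod_cast hgz


theorem homog_poly (ν : ℕ) (P : MvPolynomial (Fin (ν + 1)) ℤ) :
    ∃ (δ : ℕ) (A : Finset (Fin (ν + 2) → ℕ)) (q : (Fin (ν + 2) → ℕ) → ℤ), 1 ≤ δ ∧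
      (∀ α ∈ A, ∑ i, α i = δ) ∧
      ∀ v : Fin (ν + 1) → ℤ,
        ∑ α ∈ A, q α * ∏ i, (Fin.cons 1 v : Fin (ν + 2) → ℤ) i ^ α i = MvPolynomial.eval v P := by
  classical
  let em : (Fin (ν + 1) →₀ ℕ) → (Fin (ν + 2) → ℕ) := fun m =>
    Fin.cons (P.totalDegree + 1 - ∑ i, m i) (fun i => m i)
  have hem : Function.Injective em := by
    intro m m' h
    ext i
    have := congrFun h i.succ
    simpa [em] using this
  have hdeg : ∀ m ∈ P.support, ∑ i, m i ≤ P.totalDegree := by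
    intro m hm
    have := MvPolynomial.le_totalDegree hm
    rwa [Finsupp.sum_fintype _ _ (fun _ => rfl)] at this
  refine ⟨P.totalDegree + 1, P.support.image em,
    fun α => P.coeff (Finsupp.equivFunOnFinite.symm (fun i : Fin (ν + 1) => α i.succ)), by omega, ?_, ?_⟩
  · intro α hα
    obtain ⟨m, hm, rfl⟩ := Finset.mem_image.1 hα
    have := hdeg m hm
    rw [Fin.sum_univ_succ]
    simp only [em, Fin.cons_zero, Fin.cons_succ]
    omega
  · intro v
    rw [Finset.sum_image (fun _ _ _ _ h => hem h), MvPolynomial.eval_eq']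
    apply Finset.sum_congr rfl
    intro m _
    rw [Fin.prod_univ_succ]
    simp only [em, Fin.cons_zero, Fin.cons_succ, one_pow, one_mul]
    congr 2
    ext i
    simp

theorem code_params (ν : ℕ) (P : MvPolynomial (Fin (ν + 1)) ℤ) :
    ∃ (δ γ E r s Q : ℕ) (A : Finset (Fin (ν + 2) → ℕ)) (q : (Fin (ν + 2) → ℕ) → ℤ),
      (∑ α ∈ A, |q α| * ∏ i, ((α i).factorial : ℤ)) = Q ∧ 1 ≤ δ ∧ 1 ≤ E ∧
      (∀ α ∈ A, ∑ i, α i = δ) ∧ (∀ α ∈ A, wt δ α ≤ E) ∧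
      r = (δ + 1) ^ (ν + 2) ∧ s = E + 2 + (r + 2) * δ ∧ 2 ≤ γ ∧ Q ≤ 2 ^ γ ∧ 4 * Q * (ν + 2) ^ δ ≤ 2 ^ γ ∧
      ∀ v : Fin (ν + 1) → ℤ,
        ∑ α ∈ A, q α * ∏ i, (Fin.cons 1 v : Fin (ν + 2) → ℤ) i ^ α i = MvPolynomial.eval v P := by
  obtain ⟨δ, A, q, h1, h2, h3⟩ := homog_poly ν P
  obtain ⟨Q, hQ⟩ := Int.eq_ofNat_of_zero_le (a := ∑ α ∈ A, |q α| * ∏ i, ((α i).factorial : ℤ))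
    (Finset.sum_nonneg fun α _ => mul_nonneg (abs_nonneg _) (Finset.prod_nonneg fun i _ => Int.natCast_nonneg _))
  refine ⟨δ, 4 * Q * (ν + 2) ^ δ + 2, ∑ α ∈ A, wt δ α + 1, (δ + 1) ^ (ν + 2), _, Q, A, q, hQ, h1, by omega,
    h2, ?_, rfl, rfl, by omega, ?_, ?_, h3⟩
  · intro α hα
    have := Finset.single_le_sum (f := fun α => wt δ α) (fun _ _ => Nat.zero_le _) hα
    omega
  · have h4 := (Nat.lt_two_pow_self (n := 4 * Q * (ν + 2) ^ δ + 2)).le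
    refine le_trans ?_ h4
    have : 1 ≤ (ν + 2) ^ δ := Nat.one_le_pow _ _ (by omega)
    nlinarith
  · exact le_trans (by omega) (Nat.lt_two_pow_self (n := 4 * Q * (ν + 2) ^ δ + 2)).le


theorem odd_split {v : ℤ} (hv : v ≠ 0) : ∃ s t : ℤ, v = (2 * s + 1) * (3 * t + 1) := by
  obtain ⟨k, m, hm, hvm⟩ : ∃ (k : ℕ) (m : ℤ), Odd m ∧ v = 2 ^ k * m := by
    obtain ⟨k, m, hm, h⟩ := Nat.exists_eq_two_pow_mul_odd (n := v.natAbs) (by omega)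
    rcases Int.natAbs_eq v with h' | h'
    · refine ⟨k, m, by exact_mod_cast hm, ?_⟩
      rw [h', h]; push_cast; ring
    · refine ⟨k, -m, ?_, ?_⟩
      · have : Odd (m : ℤ) := by exact_mod_cast hm
        exact this.neg
      · rw [h', h]; push_cast; ring
  obtain ⟨c, hc⟩ : ∃ c : ℤ, (2 : ℤ) ^ k = 3 * c + 1 ∨ -(2 : ℤ) ^ k = 3 * c + 1 := by
    clear hvm
    induction k with
    | zero => exact ⟨0, by simp⟩
    | succ k ih =>
      obtain ⟨c, h | h⟩ := ih
      · exact ⟨-2 * c - 1, Or.inr (by rw [pow_succ, h]; ring)⟩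
      · refine ⟨-2 * c - 1, Or.inl ?_⟩
        rw [pow_succ]; linarith
  obtain ⟨o, ho⟩ := hm
  rcases hc with h | h
  · exact ⟨o, c, by rw [hvm, h, ho]; ring⟩
  · exact ⟨-o - 1, c, by rw [hvm, ← h, ho]; ring⟩

def qA3 (A1 A2 R s t : ℤ) : ℤ := (4 * R - 2) * (A1 * A2 * ((2 * s + 1) * (3 * t + 1))) ^ 2 + 1
def qQ (A1 A2 A3 S T n : ℤ) : ℤ :=
  ((S * n - T) ^ 2 - S ^ 2 * (A1 * A3 + ((A1 * A3) ^ 2 + 1) ^ 2 * A2)) ^ 2 -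
    4 * S ^ 4 * ((A1 * A3) ^ 2 + 1) ^ 2 * (A1 * A3) * A2

theorem sq_of_mul_sq {p r m : ℤ} (hr : r ≠ 0) (h : p * r ^ 2 = m ^ 2) : IsSquare p := by
  have : r ^ 2 ∣ m ^ 2 := ⟨p, by linarith⟩
  obtain ⟨k, hk⟩ := (Int.pow_dvd_pow_iff two_ne_zero).1 this
  refine ⟨k, ?_⟩
  have hr2 : r ^ 2 ≠ 0 := pow_ne_zero 2 hr
  apply mul_right_cancel₀ hr2
  rw [h, hk]; ring

theorem comb_suff {A1 A2 S T R s t n : ℤ} (h1 : 0 < A1) (h2 : 0 < A2) (hS : 0 < S)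
    (h : qQ A1 A2 (qA3 A1 A2 R s t) S T n = 0) : IsSquare A1 ∧ IsSquare A2 ∧ S ∣ T ∧ 0 < R := by
  obtain ⟨A3, hA3⟩ : ∃ A3, A3 = qA3 A1 A2 R s t := ⟨_, rfl⟩
  rw [← hA3] at h
  have hA3' := hA3
  unfold qA3 at hA3
  obtain ⟨v, hv⟩ : ∃ v, v = (2 * s + 1) * (3 * t + 1) := ⟨_, rfl⟩
  rw [← hv] at hA3
  have hv0 : v ≠ 0 := by
    rw [hv]; apply mul_ne_zero <;> omega
  have hA30 : A3 ≠ 0 := by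
    intro h0
    rw [h0] at hA3
    have : (2 : ℤ) ∣ 1 := ⟨-((2 * R - 1) * (A1 * A2 * v) ^ 2), by linarith⟩
    norm_num at this
  have hcop : IsCoprime A1 A3 := ⟨-((4 * R - 2) * A1 * (A2 * v) ^ 2), 1, by rw [hA3]; ring⟩
  unfold qQ at h
  obtain ⟨p, hp⟩ : ∃ p, p = A1 * A3 := ⟨_, rfl⟩
  rw [← hp] at h
  obtain ⟨M, hM⟩ : ∃ M, M = p ^ 2 + 1 := ⟨_, rfl⟩
  rw [← hM] at h
  have hp0 : p ≠ 0 := by rw [hp]; exact mul_ne_zero h1.ne' hA30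
  have hMpos : 0 < M := by rw [hM]; positivity
  obtain ⟨W, hW⟩ : ∃ W, W = (S * n - T) ^ 2 - S ^ 2 * (p + M ^ 2 * A2) := ⟨_, rfl⟩
  rw [← hW] at h
  have hpm : p * A2 * (2 * S ^ 2 * M) ^ 2 = W ^ 2 := by linarith
  have hppos : 0 < p := by
    by_contra hcon
    have hneg : p < 0 := lt_of_le_of_ne (not_lt.1 hcon) hp0
    have : p * A2 * (2 * S ^ 2 * M) ^ 2 < 0 :=
      mul_neg_of_neg_of_pos (mul_neg_of_neg_of_pos hneg h2) (by positivity)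
    linarith [sq_nonneg W]
  -- the integer root
  have hd : (2 * S ^ 2 * M) ^ 2 ∣ W ^ 2 := ⟨p * A2, by linarith⟩
  obtain ⟨m, hm⟩ := (Int.pow_dvd_pow_iff two_ne_zero).1 hd
  have hc0 : (2 * S ^ 2 * M) ^ 2 ≠ 0 := by positivity
  have hm2 : p * A2 = m ^ 2 := by
    apply mul_right_cancel₀ hc0
    rw [hpm, hm]; ring
  have hD : (S * n - T) ^ 2 = S ^ 2 * (p + M ^ 2 * A2 + 2 * M * m) := by
    have : W = 2 * S ^ 2 * M * m := hm
    rw [hW] at this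
    linarith
  obtain ⟨r, hr⟩ := (Int.pow_dvd_pow_iff two_ne_zero).1 (⟨_, hD⟩ : S ^ 2 ∣ (S * n - T) ^ 2)
  have hr2 : r ^ 2 = p + M ^ 2 * A2 + 2 * M * m := by
    have hS2 : S ^ 2 ≠ 0 := by positivity
    apply mul_left_cancel₀ hS2
    rw [← hD, hr]; ring
  have hpr : p * r ^ 2 = (p + M * m) ^ 2 := by
    rw [hr2]; linear_combination M ^ 2 * hm2
  have hr0 : r ≠ 0 := by
    intro h0
    rw [h0] at hpr
    have h5 : p + M * m = 0 := by
      have : (p + M * m) ^ 2 = 0 := by rw [← hpr]; ring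
      exact pow_eq_zero_iff two_ne_zero |>.1 this
    have h6 : M ∣ p := ⟨-m, by linarith⟩
    have := Int.le_of_dvd hppos h6
    rw [hM] at this
    nlinarith
  have hpsq : IsSquare p := sq_of_mul_sq hr0 hpr
  have hA2sq : IsSquare A2 := by
    obtain ⟨p', hp'⟩ := hpsq
    have : p' ≠ 0 := by rintro rfl; simp at hp'; exact hp0 hp'
    apply sq_of_mul_sq this (m := m)
    rw [← hm2, hp']; ring
  have hA3pos : 0 < A3 := by
    rw [hp] at hppos
    exact (pos_iff_pos_of_mul_pos hppos).1 h1
  rw [hp] at hpsq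
  obtain ⟨q1, q3⟩ := sq_of_cop hcop h1 hA3pos hpsq
  refine ⟨q1, hA2sq, ⟨n - r, by linarith⟩, ?_⟩
  by_contra hcon
  have hz : A1 * A2 * v ≠ 0 := mul_ne_zero (mul_ne_zero h1.ne' h2.ne') hv0
  have : 1 ≤ (A1 * A2 * v) ^ 2 := by
    have : 0 < (A1 * A2 * v) ^ 2 := by positivity
    omega
  nlinarith

theorem comb_nec {A1 A2 S T R : ℤ} (h1 : 0 < A1) (h2 : 0 < A2)
    (q1 : IsSquare A1) (q2 : IsSquare A2) (hST : S ∣ T) (hR : 0 < R) :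
    ∃ s t n, qQ A1 A2 (qA3 A1 A2 R s t) S T n = 0 := by
  have hd : ¬ IsSquare (4 * R - 2) := by
    rintro ⟨y, hy⟩
    rcases Int.even_or_odd' y with ⟨c, h | h⟩ <;> rw [h] at hy <;> ring_nf at hy <;> omega
  obtain ⟨v, hv, a3, ha3⟩ := pell_mult_exists (by linarith : 0 < 4 * R - 2) hd
    (mul_ne_zero h1.ne' h2.ne' : A1 * A2 ≠ 0)
  obtain ⟨s, t, hst⟩ := odd_split hv
  obtain ⟨a1, rfl⟩ := q1
  obtain ⟨a2, rfl⟩ := q2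
  obtain ⟨c, rfl⟩ := hST
  have hA3 : qA3 (a1 * a1) (a2 * a2) R s t = a3 * a3 := by
    unfold qA3; rw [← hst, ← ha3]
  refine ⟨s, t, c + a1 * a3 + ((a1 * a1 * (a3 * a3)) ^ 2 + 1) * a2, ?_⟩
  rw [hA3]
  unfold qQ
  ring


def IsPolyF (F : (Fin 12 → ℤ) → ℤ) : Prop :=
  ∃ p : MvPolynomial (Fin 12) ℤ, ∀ v, MvPolynomial.eval v p = F v

namespace IsPolyF

theorem const (c : ℤ) : IsPolyF (fun _ => c) := ⟨MvPolynomial.C c, fun v => by simp⟩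
theorem coord (i : Fin 12) : IsPolyF (fun v => v i) := ⟨MvPolynomial.X i, fun v => by simp⟩
theorem add {F G : (Fin 12 → ℤ) → ℤ} (hF : IsPolyF F) (hG : IsPolyF G) : IsPolyF (fun v => F v + G v) := by
  obtain ⟨p, hp⟩ := hF
  obtain ⟨q, hq⟩ := hG
  exact ⟨p + q, fun v => by simp [hp, hq]⟩
theorem sub {F G : (Fin 12 → ℤ) → ℤ} (hF : IsPolyF F) (hG : IsPolyF G) : IsPolyF (fun v => F v - G v) := by
  obtain ⟨p, hp⟩ := hF
  obtain ⟨q, hq⟩ := hG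
  exact ⟨p - q, fun v => by simp [hp, hq]⟩
theorem mul {F G : (Fin 12 → ℤ) → ℤ} (hF : IsPolyF F) (hG : IsPolyF G) : IsPolyF (fun v => F v * G v) := by
  obtain ⟨p, hp⟩ := hF
  obtain ⟨q, hq⟩ := hG
  exact ⟨p * q, fun v => by simp [hp, hq]⟩
theorem pow {F : (Fin 12 → ℤ) → ℤ} (hF : IsPolyF F) (n : ℕ) : IsPolyF (fun v => F v ^ n) := by
  obtain ⟨p, hp⟩ := hF
  exact ⟨p ^ n, fun v => by simp [hp]⟩
theorem sum {ι : Type} (s : Finset ι) {F : ι → (Fin 12 → ℤ) → ℤ} (hF : ∀ i, IsPolyF (F i)) :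
    IsPolyF (fun v => ∑ i ∈ s, F i v) := by
  choose p hp using hF
  exact ⟨∑ i ∈ s, p i, fun v => by simp [hp]⟩

variable {a b g h k l w x y n s t X Y Θ B C A1 A2 A3 R S T N S1 S2 T1 T2 : (Fin 12 → ℤ) → ℤ}

theorem pD_isPoly (ha : IsPolyF a) (hC : IsPolyF C) :
    IsPolyF (fun v => pD (a v) (C v)) := by
  unfold pD
  repeat' first | assumption | with_reducible apply const | with_reducible apply add | with_reducible apply sub | with_reducible apply pow | with_reducible apply mul

theorem pE_isPoly (ha : IsPolyF a) (hC : IsPolyF C) (hx : IsPolyF x) :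
    IsPolyF (fun v => pE (a v) (C v) (x v)) := by
  unfold pE
  repeat' first | assumption | with_reducible apply const | with_reducible apply add | with_reducible apply sub | with_reducible apply pow | with_reducible apply mul | with_reducible apply pD_isPoly

theorem pF_isPoly (ha : IsPolyF a) (hC : IsPolyF C) (hx : IsPolyF x) :
    IsPolyF (fun v => pF (a v) (C v) (x v)) := by
  unfold pF
  repeat' first | assumption | with_reducible apply const | with_reducible apply add | with_reducible apply sub | with_reducible apply pow | with_reducible apply mul | with_reducible apply pE_isPoly

theorem pG_isPoly (ha : IsPolyF a) (hC : IsPolyF C) (hx : IsPolyF x) :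
    IsPolyF (fun v => pG (a v) (C v) (x v)) := by
  unfold pG
  repeat' first | assumption | with_reducible apply const | with_reducible apply add | with_reducible apply sub | with_reducible apply pow | with_reducible apply mul | with_reducible apply pD_isPoly | with_reducible apply pF_isPoly

theorem pH_isPoly (ha : IsPolyF a) (hB : IsPolyF B) (hC : IsPolyF C) (hx : IsPolyF x) (hy : IsPolyF y) :
    IsPolyF (fun v => pH (a v) (B v) (C v) (x v) (y v)) := by
  unfold pH
  repeat' first | assumption | with_reducible apply const | with_reducible apply add | with_reducible apply sub | with_reducible apply pow | with_reducible apply mul | with_reducible apply pF_isPoly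

theorem pI_isPoly (ha : IsPolyF a) (hB : IsPolyF B) (hC : IsPolyF C) (hx : IsPolyF x) (hy : IsPolyF y) :
    IsPolyF (fun v => pI (a v) (B v) (C v) (x v) (y v)) := by
  unfold pI
  repeat' first | assumption | with_reducible apply const | with_reducible apply add | with_reducible apply sub | with_reducible apply pow | with_reducible apply mul | with_reducible apply pG_isPoly | with_reducible apply pH_isPoly

theorem bV_isPoly (hY : IsPolyF Y) (hb : IsPolyF b) (hΘ : IsPolyF Θ) (hw : IsPolyF w) :
    IsPolyF (fun v => bV (Y v) (b v) (Θ v) (w v)) := by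
  unfold bV
  repeat' first | assumption | with_reducible apply const | with_reducible apply add | with_reducible apply sub | with_reducible apply pow | with_reducible apply mul

theorem bu_isPoly (hX : IsPolyF X) (hY : IsPolyF Y) (hl : IsPolyF l) :
    IsPolyF (fun v => bu (X v) (Y v) (l v)) := by
  unfold bu
  repeat' first | assumption | with_reducible apply const | with_reducible apply add | with_reducible apply sub | with_reducible apply pow | with_reducible apply mul

theorem ba_isPoly (hX : IsPolyF X) (hY : IsPolyF Y) (hb : IsPolyF b) (hΘ : IsPolyF Θ) (hl : IsPolyF l) (hw : IsPolyF w) :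
    IsPolyF (fun v => ba (X v) (Y v) (b v) (Θ v) (l v) (w v)) := by
  unfold ba
  repeat' first | assumption | with_reducible apply const | with_reducible apply add | with_reducible apply sub | with_reducible apply pow | with_reducible apply mul | with_reducible apply bV_isPoly | with_reducible apply bu_isPoly

theorem ba2_isPoly (hX : IsPolyF X) (hY : IsPolyF Y) (hb : IsPolyF b) (hΘ : IsPolyF Θ) (hl : IsPolyF l) (hw : IsPolyF w) :
    IsPolyF (fun v => ba' (X v) (Y v) (b v) (Θ v) (l v) (w v)) := by
  unfold ba'
  repeat' first | assumption | with_reducible apply const | with_reducible apply add | with_reducible apply sub | with_reducible apply pow | with_reducible apply mul | with_reducible apply bV_isPoly | with_reducible apply bu_isPoly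

theorem bC_isPoly (hX : IsPolyF X) (hY : IsPolyF Y) (hb : IsPolyF b) (hΘ : IsPolyF Θ) (hl : IsPolyF l) (hw : IsPolyF w) (hh : IsPolyF h) :
    IsPolyF (fun v => bC (X v) (Y v) (b v) (Θ v) (l v) (w v) (h v)) := by
  unfold bC
  repeat' first | assumption | with_reducible apply const | with_reducible apply add | with_reducible apply sub | with_reducible apply pow | with_reducible apply mul | with_reducible apply ba_isPoly

theorem bK_isPoly (hX : IsPolyF X) (hY : IsPolyF Y) (hb : IsPolyF b) (hΘ : IsPolyF Θ) (hl : IsPolyF l) (hw : IsPolyF w) (hk : IsPolyF k) :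
    IsPolyF (fun v => bK (X v) (Y v) (b v) (Θ v) (l v) (w v) (k v)) := by
  unfold bK
  repeat' first | assumption | with_reducible apply const | with_reducible apply add | with_reducible apply sub | with_reducible apply pow | with_reducible apply mul | with_reducible apply ba2_isPoly

theorem bA1_isPoly (hX : IsPolyF X) (hY : IsPolyF Y) (hb : IsPolyF b) (hΘ : IsPolyF Θ) (hl : IsPolyF l) (hw : IsPolyF w) (hh : IsPolyF h) (hx : IsPolyF x) (hy : IsPolyF y) :
    IsPolyF (fun v => bA1 (X v) (Y v) (b v) (Θ v) (l v) (w v) (h v) (x v) (y v)) := by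
  unfold bA1
  repeat' first | assumption | with_reducible apply const | with_reducible apply add | with_reducible apply sub | with_reducible apply pow | with_reducible apply mul | with_reducible apply pD_isPoly | with_reducible apply pF_isPoly | with_reducible apply pI_isPoly | with_reducible apply ba_isPoly | with_reducible apply bC_isPoly

theorem bA2_isPoly (hX : IsPolyF X) (hY : IsPolyF Y) (hb : IsPolyF b) (hΘ : IsPolyF Θ) (hl : IsPolyF l) (hw : IsPolyF w) (hk : IsPolyF k) :
    IsPolyF (fun v => bA2 (X v) (Y v) (b v) (Θ v) (l v) (w v) (k v)) := by
  unfold bA2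
  repeat' first | assumption | with_reducible apply const | with_reducible apply add | with_reducible apply sub | with_reducible apply pow | with_reducible apply mul | with_reducible apply ba2_isPoly | with_reducible apply bK_isPoly

theorem bS_isPoly (hX : IsPolyF X) (hY : IsPolyF Y) (hb : IsPolyF b) (hΘ : IsPolyF Θ) (hl : IsPolyF l) (hw : IsPolyF w) :
    IsPolyF (fun v => bS (X v) (Y v) (b v) (Θ v) (l v) (w v)) := by
  unfold bS
  repeat' first | assumption | with_reducible apply const | with_reducible apply add | with_reducible apply sub | with_reducible apply pow | with_reducible apply mul | with_reducible apply ba_isPoly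

theorem bT_isPoly (hX : IsPolyF X) (hY : IsPolyF Y) (hb : IsPolyF b) (hΘ : IsPolyF Θ) (hl : IsPolyF l) (hw : IsPolyF w) (hh : IsPolyF h) :
    IsPolyF (fun v => bT (X v) (Y v) (b v) (Θ v) (l v) (w v) (h v)) := by
  unfold bT
  repeat' first | assumption | with_reducible apply const | with_reducible apply add | with_reducible apply sub | with_reducible apply pow | with_reducible apply mul | with_reducible apply bC_isPoly

theorem qA3_isPoly (hA1 : IsPolyF A1) (hA2 : IsPolyF A2) (hR : IsPolyF R) (hs : IsPolyF s) (ht : IsPolyF t) :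
    IsPolyF (fun v => qA3 (A1 v) (A2 v) (R v) (s v) (t v)) := by
  unfold qA3
  repeat' first | assumption | with_reducible apply const | with_reducible apply add | with_reducible apply sub | with_reducible apply pow | with_reducible apply mul

theorem qQ_isPoly (hA1 : IsPolyF A1) (hA2 : IsPolyF A2) (hA3 : IsPolyF A3) (hS : IsPolyF S) (hT : IsPolyF T) (hn : IsPolyF n) :
    IsPolyF (fun v => qQ (A1 v) (A2 v) (A3 v) (S v) (T v) (n v)) := by
  unfold qQ
  repeat' first | assumption | with_reducible apply const | with_reducible apply add | with_reducible apply sub | with_reducible apply pow | with_reducible apply mul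

theorem concatZ_isPoly (hN : IsPolyF N) (hS1 : IsPolyF S1) (hT1 : IsPolyF T1) (hS2 : IsPolyF S2) (hT2 : IsPolyF T2) :
    IsPolyF (fun v => concatZ (N v) (S1 v) (T1 v) (S2 v) (T2 v)) := by
  unfold concatZ
  repeat' first | assumption | with_reducible apply const | with_reducible apply add | with_reducible apply sub | with_reducible apply pow | with_reducible apply mul


theorem cβ_isPoly (δ γ : ℕ) (hb : IsPolyF b) : IsPolyF (fun v => cβ δ γ (b v)) := by
  unfold cβ
  repeat' first | assumption | with_reducible apply const | with_reducible apply pow | with_reducible apply mul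

theorem cD_isPoly {m : ℕ} (δ γ E : ℕ) (A : Finset (Fin m → ℕ)) (q : (Fin m → ℕ) → ℤ) (hb : IsPolyF b) :
    IsPolyF (fun v => cD δ γ E A q (b v)) := by
  unfold cD
  refine sum _ fun α => ?_
  exact mul (const _) (pow (cβ_isPoly _ _ hb) _)

theorem cM_isPoly (ν δ γ r : ℕ) (hb : IsPolyF b) : IsPolyF (fun v => cM ν δ γ r (b v)) := by
  unfold cM cm
  refine sub (sub (pow (cβ_isPoly _ _ hb) _) (const _)) (sum _ fun i => ?_)
  exact mul (sub hb (const _)) (pow (cβ_isPoly _ _ hb) _)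

theorem cK_isPoly {m : ℕ} (δ γ E s : ℕ) (A : Finset (Fin m → ℕ)) (q : (Fin m → ℕ) → ℤ) (ha : IsPolyF a)
    (hb : IsPolyF b) (hg : IsPolyF g) : IsPolyF (fun v => cK δ γ E s A q (a v) (b v) (g v)) := by
  unfold cK cc cH
  have h1 := cβ_isPoly δ γ hb
  have h2 := cD_isPoly δ γ E A q hb
  repeat' first | assumption | with_reducible apply const | with_reducible apply add | with_reducible apply pow | with_reducible apply mul

theorem cT_isPoly (δ γ E : ℕ) (hb : IsPolyF b) : IsPolyF (fun v => cT δ γ E (b v)) := by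
  unfold cT
  have h1 := cβ_isPoly δ γ hb
  repeat' first | assumption | with_reducible apply const | with_reducible apply sub | with_reducible apply pow | with_reducible apply mul

end IsPolyF


def mR (K N1 bJ aJ g D l x : ℤ) : ℤ :=
  l ^ 2 * x ^ 2 * (K ^ 2 * N1 ^ 2 * bJ - K ^ 2 * bJ * (2 * g + 1 - N1) ^ 2 -
    4 * N1 ^ 2 * bJ * D ^ 2 - K ^ 2 * N1 ^ 2 * aJ)

theorem mR_suff {K N1 bJ aJ g D l x : ℤ} (hN : 0 < N1) (hb : 0 < bJ) (ha : 0 ≤ aJ)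
    (h : 0 < mR K N1 bJ aJ g D l x) :
    l ≠ 0 ∧ x ≠ 0 ∧ (0 ≤ g ∧ g < N1) ∧ aJ < bJ ∧ 4 * D ^ 2 < K ^ 2 := by
  unfold mR at h
  have hl : l ≠ 0 := by rintro rfl; simp at h
  have hx : x ≠ 0 := by rintro rfl; simp at h
  have h0 := pos_of_mul_pos_right h (by positivity)
  have e1 : 0 ≤ K ^ 2 * bJ * (2 * g + 1 - N1) ^ 2 := by positivity
  have e2 : 0 ≤ N1 ^ 2 * bJ * (4 * D ^ 2) := by positivity
  have e3 : 0 ≤ K ^ 2 * N1 ^ 2 * aJ := by positivity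
  have e4 : 4 * N1 ^ 2 * bJ * D ^ 2 = N1 ^ 2 * bJ * (4 * D ^ 2) := by ring
  rw [e4] at h0
  have f1 : K ^ 2 * bJ * (2 * g + 1 - N1) ^ 2 < K ^ 2 * bJ * N1 ^ 2 := by
    have : K ^ 2 * bJ * N1 ^ 2 = K ^ 2 * N1 ^ 2 * bJ := by ring
    linarith
  have f2 : N1 ^ 2 * bJ * (4 * D ^ 2) < N1 ^ 2 * bJ * K ^ 2 := by
    have : N1 ^ 2 * bJ * K ^ 2 = K ^ 2 * N1 ^ 2 * bJ := by ring
    linarith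
  have f3 : K ^ 2 * N1 ^ 2 * aJ < K ^ 2 * N1 ^ 2 * bJ := by linarith
  have g1 := lt_of_mul_lt_mul_left f1 (by positivity)
  have g2 := lt_of_mul_lt_mul_left f2 (by positivity)
  have g3 := lt_of_mul_lt_mul_left f3 (by positivity)
  obtain ⟨g4, g5⟩ := abs_lt_of_sq_lt_sq' g1 hN.le
  exact ⟨hl, hx, ⟨by linarith, by linarith⟩, g3, g2⟩

theorem mR_nec {K N1 bJ aJ g D l x : ℤ} (hN : 0 < N1) (hb : 0 < bJ)
    (hl : l ≠ 0) (hx : x ≠ 0) (hg : 0 ≤ g) (hg2 : g < N1) (haJ : 4 * N1 * aJ ≤ bJ)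
    (hD : 8 * N1 * D ^ 2 < K ^ 2) : 0 < mR K N1 bJ aJ g D l x := by
  unfold mR
  refine mul_pos (by positivity) ?_
  have h1 : (2 * g + 1 - N1) ^ 2 ≤ N1 ^ 2 - N1 := by
    have := mul_nonneg hg (by linarith : 0 ≤ N1 - 1 - g)
    nlinarith
  have e1 : K ^ 2 * bJ * (2 * g + 1 - N1) ^ 2 ≤ K ^ 2 * bJ * (N1 ^ 2 - N1) :=
    mul_le_mul_of_nonneg_left h1 (by positivity)
  have e2 : N1 * bJ * (8 * N1 * D ^ 2) < N1 * bJ * K ^ 2 := mul_lt_mul_of_pos_left hD (by positivity)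
  have e3 : K ^ 2 * N1 * (4 * N1 * aJ) ≤ K ^ 2 * N1 * bJ := mul_le_mul_of_nonneg_left haJ (by positivity)
  have e4 : 0 ≤ K ^ 2 * N1 * bJ := by positivity
  linarith

theorem IsPolyF.mR_isPoly {K N1 bJ aJ g D l x : (Fin 12 → ℤ) → ℤ} (hK : IsPolyF K) (hN : IsPolyF N1)
    (hb : IsPolyF bJ) (ha : IsPolyF aJ) (hg : IsPolyF g) (hD : IsPolyF D) (hl : IsPolyF l) (hx : IsPolyF x) :
    IsPolyF (fun v => mR (K v) (N1 v) (bJ v) (aJ v) (g v) (D v) (l v) (x v)) := by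
  unfold mR
  repeat' first | assumption | with_reducible apply const | with_reducible apply add | with_reducible apply sub | with_reducible apply pow | with_reducible apply mul

def mQ (X Y b N1 bJ aJ g h k l w x y n s t : ℤ) : ℤ :=
  qQ (bA1 X Y b (8 * N1) l w h x y) (bA2 X Y b (8 * N1) l w k)
    (qA3 (bA1 X Y b (8 * N1) l w h x y) (bA2 X Y b (8 * N1) l w k)
      (mR (bK X Y b (8 * N1) l w k) N1 bJ aJ g
        (bC X Y b (8 * N1) l w h - bK X Y b (8 * N1) l w k * l * Y) l x) s t)
    (bS X Y b (8 * N1) l w) (bT X Y b (8 * N1) l w h) n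

theorem IsPolyF.mQ_isPoly {X Y b N1 bJ aJ g h k l w x y n s t : (Fin 12 → ℤ) → ℤ} (hX : IsPolyF X)
    (hY : IsPolyF Y) (hb : IsPolyF b) (hN : IsPolyF N1) (hbJ : IsPolyF bJ) (haJ : IsPolyF aJ)
    (hg : IsPolyF g) (hh : IsPolyF h) (hk : IsPolyF k) (hl : IsPolyF l) (hw : IsPolyF w) (hx : IsPolyF x)
    (hy : IsPolyF y) (hn : IsPolyF n) (hs : IsPolyF s) (ht : IsPolyF t) :
    IsPolyF (fun v => mQ (X v) (Y v) (b v) (N1 v) (bJ v) (aJ v) (g v) (h v) (k v) (l v) (w v) (x v) (y v)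
      (n v) (s v) (t v)) := by
  unfold mQ
  have hΘ : IsPolyF (fun v => 8 * N1 v) := mul (const 8) hN
  have hA1 := bA1_isPoly hX hY hb hΘ hl hw hh hx hy
  have hA2 := bA2_isPoly hX hY hb hΘ hl hw hk
  have hC := bC_isPoly hX hY hb hΘ hl hw hh
  have hK := bK_isPoly hX hY hb hΘ hl hw hk
  exact qQ_isPoly hA1 hA2 (qA3_isPoly hA1 hA2 (mR_isPoly hK hN hbJ haJ hg
    (sub hC (mul (mul hK hl) hY)) hl hx) hs ht) (bS_isPoly hX hY hb hΘ hl hw) (bT_isPoly hX hY hb hΘ hl hw hh) hn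

theorem mQ_pos (X : ℤ) {Y b Θ : ℤ} (h k l w x y : ℤ) (hY : 1 ≤ Y) (hb : 1 ≤ b) (hΘ : 1 ≤ Θ) :
    0 < bA1 X Y b Θ l w h x y ∧ 0 < bA2 X Y b Θ l w k ∧ 0 < bS X Y b Θ l w := by
  obtain ⟨h1, h2⟩ := b_pos X l w hY hb hΘ
  have ha : 1 ≤ ba X Y b Θ l w := by linarith
  refine ⟨?_, ?_, ?_⟩
  · unfold bA1
    have e1 := pD_pos ha (bC X Y b Θ l w h)
    have e2 := pF_pos ha (bC X Y b Θ l w h) x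
    have e3 := pI_pos ha (2 * X + 1) (bC X Y b Θ l w h) x y
    exact mul_pos (mul_pos (by linarith) (by linarith)) (by linarith)
  · unfold bA2
    have : 0 ≤ (ba' X Y b Θ l w) ^ 2 - 1 := by nlinarith
    positivity
  · unfold bS; linarith

theorem mQ_suff {X : ℤ} {Y b N1 bJ aJ g h k l w x y n s t : ℤ} (hY : 1 ≤ Y) (hb : 1 ≤ b) (hN : 1 ≤ N1)
    (hbJ : 0 < bJ) (haJ : 0 ≤ aJ) (hQ : mQ X Y b N1 bJ aJ g h k l w x y n s t = 0) :
    (0 ≤ g ∧ g < N1) ∧ aJ < bJ ∧ l ≠ 0 ∧ x ≠ 0 ∧ IsSquare (bA1 X Y b (8 * N1) l w h x y) ∧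
      IsSquare (bA2 X Y b (8 * N1) l w k) ∧ bS X Y b (8 * N1) l w ∣ bT X Y b (8 * N1) l w h ∧
      4 * (bC X Y b (8 * N1) l w h - bK X Y b (8 * N1) l w k * l * Y) ^ 2 < (bK X Y b (8 * N1) l w k) ^ 2 := by
  obtain ⟨p1, p2, p3⟩ := mQ_pos X h k l w x y hY hb (by linarith : 1 ≤ 8 * N1)
  obtain ⟨q1, q2, q3, q4⟩ := comb_suff p1 p2 p3 hQ
  obtain ⟨r1, r2, r3, r4, r5⟩ := mR_suff (by linarith) hbJ haJ q4
  exact ⟨r3, r4, r1, r2, q1, q2, q3, r5⟩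

theorem final_suff {ν δ γ E r s Q J : ℕ} {A : Finset (Fin (ν + 2) → ℕ)} {q : (Fin (ν + 2) → ℕ) → ℤ}
    (hQ : (∑ α ∈ A, |q α| * ∏ i, ((α i).factorial : ℤ)) = Q) (hδ : 1 ≤ δ) (hE : 1 ≤ E)
    (hA : ∀ α ∈ A, ∑ i, α i = δ) (hwE : ∀ α ∈ A, wt δ α ≤ E)
    (hr : r = (δ + 1) ^ (ν + 2)) (hs : s = E + 2 + (r + 2) * δ) (hγ : 2 ≤ γ) (hγQ1 : Q ≤ 2 ^ γ)
    (hγQ : 4 * Q * (ν + 2) ^ δ ≤ 2 ^ γ) {a b : ℕ} (hb : 1 ≤ b) {g h k l w x y n s' t : ℤ}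
    (h0 : mQ (concatZ ((cβ δ γ b) ^ (s + 2)) g (cM ν δ γ r b) (cK δ γ E s A q a b g) (cT δ γ E b))
      (((cβ δ γ b) ^ (s + 2)) ^ 4) b ((cβ δ γ b) ^ r) ((b : ℤ) ^ (2 * J)) ((a : ℤ) ^ (2 * J)) g h k l w x y n s' t = 0) :
    ∃ z : Fin ν → ℕ, ∑ α ∈ A, q α * ∏ i, (Fin.cons 1 (Fin.cons (a : ℤ) (fun i => (z i : ℤ)) : Fin (ν + 1) → ℤ) :
        Fin (ν + 2) → ℤ) i ^ α i = 0 := by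
  have hb' : (1 : ℤ) ≤ b := by exact_mod_cast hb
  have hβ : 1 ≤ cβ δ γ b := by
    unfold cβ; exact one_le_mul_of_one_le_of_one_le (one_le_pow₀ (by norm_num)) (one_le_pow₀ hb')
  have hN1 : 1 ≤ (cβ δ γ b) ^ r := one_le_pow₀ hβ
  obtain ⟨⟨g1, g2⟩, hJ, hl, hx, s1, s2, s3, s4⟩ := mQ_suff (one_le_pow₀ (one_le_pow₀ hβ)) hb' hN1 (by positivity)
    (by positivity) h0
  have hab : a < b := by
    have : (a : ℤ) < b := lt_of_pow_lt_pow_left₀ _ (by positivity) hJ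
    exact_mod_cast this
  obtain ⟨g, rfl⟩ := Int.eq_ofNat_of_zero_le g1
  obtain ⟨N, M, K, T, hN, hM, hK, hT, hgN, hMN, hKN, hTN, hX, hbX⟩ :=
    code_nat ν δ γ E r s A q hQ hδ hE hr hs hγ hγQ1 hab g2
  obtain ⟨N1, hN1'⟩ := Int.eq_ofNat_of_zero_le (a := (cβ δ γ b) ^ r) (by linarith)
  have hN0 : 1 ≤ N := by omega
  have hN1'' : 1 ≤ N1 := by rw [hN1'] at hN1; exact_mod_cast hN1
  rw [← hX, ← hN, hN1'] at s1 s2 s3 s4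
  have hh := bridge_suff (X := concatX N g M K T) (Y := N ^ 4) (b := b) (Θ := 8 * N1) (by omega)
    (Nat.one_le_pow _ _ hN0) hb (by omega) (h := h) (k := k) (l := l) (w := w) (x := x) (y := y) hl hx
    (by push_cast; exact s1) (by push_cast; exact s2) (by push_cast; exact s3) (by push_cast; exact s4)
  obtain ⟨j, _, hj⟩ := (Nat.dvd_prime_pow Nat.prime_two).1 hh.1
  obtain ⟨z, _, _, hz⟩ := (code_iff ν δ γ E r s A q hQ hδ hE hA hwE hr hs hγ hγQ hj hab g2 hN hM hK hT hgN hMN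
    hKN hTN).1 hh.2
  exact ⟨z, hz⟩

theorem final_bJ {c a b d : ℕ} (ha : a ^ 2 ≤ b) (hc : 4 * c ≤ b) :
    4 * (c * b ^ d) * a ^ (2 * (d + 1)) ≤ b ^ (2 * (d + 1)) := by
  calc 4 * (c * b ^ d) * a ^ (2 * (d + 1)) = (4 * c) * b ^ d * (a ^ 2) ^ (d + 1) := by rw [pow_mul]; ring
    _ ≤ b * b ^ d * b ^ (d + 1) := by gcongr
    _ = _ := by ring

theorem final_nec {ν δ γ E r s Q J : ℕ} {A : Finset (Fin (ν + 2) → ℕ)} {q : (Fin (ν + 2) → ℕ) → ℤ}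
    (hQ : (∑ α ∈ A, |q α| * ∏ i, ((α i).factorial : ℤ)) = Q) (hδ : 1 ≤ δ) (hE : 1 ≤ E)
    (hA : ∀ α ∈ A, ∑ i, α i = δ) (hwE : ∀ α ∈ A, wt δ α ≤ E)
    (hr : r = (δ + 1) ^ (ν + 2)) (hs : s = E + 2 + (r + 2) * δ) (hγ : 2 ≤ γ) (hγQ1 : Q ≤ 2 ^ γ)
    (hγQ : 4 * Q * (ν + 2) ^ δ ≤ 2 ^ γ) (hJ : J = (δ + 1) * r + 1) {a b j : ℕ} (hb : b = 2 ^ j)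
    (hab : a < b) (hab2 : a ^ 2 ≤ b) (hcb : 4 * 2 ^ (γ * r) ≤ b)
    (z : Fin ν → ℕ) (hzb : ∀ i, z i < b)
    (hz : ∑ α ∈ A, q α * ∏ i, (Fin.cons 1 (Fin.cons (a : ℤ) (fun i => (z i : ℤ)) : Fin (ν + 1) → ℤ) :
        Fin (ν + 2) → ℤ) i ^ α i = 0) :
    ∃ g h k l w x y n s' t : ℤ,
    mQ (concatZ ((cβ δ γ b) ^ (s + 2)) g (cM ν δ γ r b) (cK δ γ E s A q a b g) (cT δ γ E b))
      (((cβ δ γ b) ^ (s + 2)) ^ 4) b ((cβ δ γ b) ^ r) ((b : ℤ) ^ (2 * J)) ((a : ℤ) ^ (2 * J)) g h k l w x y n s' t = 0 := by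
  have hb1 : 1 ≤ b := by omega
  have hb' : (1 : ℤ) ≤ b := by exact_mod_cast hb1
  have hβ : 1 ≤ cβ δ γ b := by
    unfold cβ; exact one_le_mul_of_one_le_of_one_le (one_le_pow₀ (by norm_num)) (one_le_pow₀ hb')
  have hN1 : 1 ≤ (cβ δ γ b) ^ r := one_le_pow₀ hβ
  obtain ⟨qq, hqq⟩ : ∃ qq, qq = γ + j * (δ + 1) := ⟨_, rfl⟩
  have hβ2 : cβ δ γ b = ((2 ^ qq : ℕ) : ℤ) := by
    unfold cβ; rw [hb, hqq]; push_cast; rw [pow_add 2 γ, pow_mul]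
  have hjq : j ≤ qq := by rw [hqq]; nlinarith
  obtain ⟨g, hg⟩ : ∃ g : ℕ, g = ∑ i : Fin ν, z i * (2 ^ qq) ^ ((δ + 1) ^ ((i : ℕ) + 2)) := ⟨_, rfl⟩
  have hgZ : (g : ℤ) = ∑ i : Fin ν, (z i : ℤ) * (cβ δ γ b) ^ ((δ + 1) ^ ((i : ℕ) + 2)) := by
    rw [hβ2, hg]; push_cast; rfl
  have hg2 : (g : ℤ) < (cβ δ γ b) ^ r := by
    have := sum_digits_lt hjq (e := fun i => (δ + 1) ^ (i + 2))
      (by intro i i' hi; exact Nat.pow_lt_pow_right (by omega) (by omega))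
      (fun i => if h : i < ν then z ⟨i, h⟩ else 0)
      (by intro i; split_ifs with h
          · rw [← hb]; exact hzb _
          · positivity) ν
    rw [Finset.sum_range] at this
    simp only [Fin.is_lt, dite_true, Fin.eta] at this
    rw [← hg, ← hr] at this
    rw [hβ2]; exact_mod_cast this
  obtain ⟨N, M, K, T, hN, hM, hK, hT, hgN, hMN, hKN, hTN, hX, hbX⟩ :=
    code_nat ν δ γ E r s A q hQ hδ hE hr hs hγ hγQ1 hab hg2
  have hdv := (code_iff ν δ γ E r s A q hQ hδ hE hA hwE hr hs hγ hγQ hb hab hg2 hN hM hK hT hgN hMN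
    hKN hTN).2 ⟨z, hzb, hgZ, hz⟩
  have hbd : b ∣ 2 ^ (2 * concatX N g M K T + 1) := by
    rw [hb]; apply pow_dvd_pow
    have : j < 2 ^ j := Nat.lt_two_pow_self
    omega
  obtain ⟨N1, hN1'⟩ := Int.eq_ofNat_of_zero_le (a := (cβ δ γ b) ^ r) (by linarith)
  have hN0 : 1 ≤ N := by omega
  have hN1'' : 1 ≤ N1 := by rw [hN1'] at hN1; exact_mod_cast hN1
  obtain ⟨h, k, l, w, x, y, hl, hx, s1, s2, s3, s4⟩ := bridge_nec (X := concatX N g M K T) (Y := N ^ 4) (b := b)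
    (Θ := 8 * N1) (by omega) (Nat.one_le_pow _ _ hN0) hb1 (by omega) hbd hdv
  have hbJ : 4 * (N1 : ℤ) * (a : ℤ) ^ (2 * J) ≤ (b : ℤ) ^ (2 * J) := by
    have := final_bJ (d := (δ + 1) * r) hab2 hcb
    rw [← hJ] at this
    have e : N1 = 2 ^ (γ * r) * b ^ ((δ + 1) * r) := by
      have : (N1 : ℤ) = ((2 ^ (γ * r) * b ^ ((δ + 1) * r) : ℕ) : ℤ) := by
        rw [← hN1']; unfold cβ; push_cast; rw [mul_pow, ← pow_mul, ← pow_mul]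
      exact_mod_cast this
    rw [← e] at this
    exact_mod_cast this
  rw [← hN] at hX
  rw [hN1'] at hg2
  refine ⟨g, h, k, l, w, x, y, ?_⟩
  rw [← hN, ← hX, hN1']
  unfold mQ
  push_cast at s1 s2 s3 s4
  have hY : (1 : ℤ) ≤ (N : ℤ) ^ 4 := one_le_pow₀ (by exact_mod_cast hN0)
  have hN1z : (1 : ℤ) ≤ N1 := by exact_mod_cast hN1''
  obtain ⟨p1, p2, _⟩ := mQ_pos (concatX N g M K T : ℕ) h k l w x y hY hb' (by linarith : (1 : ℤ) ≤ 8 * N1)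
  obtain ⟨s', t, n, hf⟩ := comb_nec p1 p2 s1 s2 s3 (mR_nec (aJ := (a : ℤ) ^ (2 * J)) (bJ := (b : ℤ) ^ (2 * J))
    (g := g) (by linarith) (by positivity) hl hx
    (by positivity) hg2 hbJ s4)
  exact ⟨n, s', t, hf⟩

theorem final_main (ν : ℕ) (P : MvPolynomial (Fin (ν + 1)) ℤ) :
    ∃ Q : MvPolynomial (Fin 12) ℤ, ∀ a : ℕ,
      (∃ z : Fin ν → ℕ, MvPolynomial.eval (Fin.cons (a : ℤ) (fun i => (z i : ℤ))) P = 0) ↔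
      (∃ z : Fin 11 → ℤ, MvPolynomial.eval (Fin.cons (a : ℤ) z) Q = 0) := by
  obtain ⟨δ, γ, E, r, s, Q, A, q, hQ, hδ, hE, hA, hwE, hr, hs, hγ, hγQ1, hγQ, hP⟩ := code_params ν P
  obtain ⟨J, hJ⟩ : ∃ J, J = (δ + 1) * r + 1 := ⟨_, rfl⟩
  have hpoly : IsPolyF (fun v : Fin 12 → ℤ =>
      mQ (concatZ ((cβ δ γ ((3 * v 1 + 1) ^ 2)) ^ (s + 2)) (v 2) (cM ν δ γ r ((3 * v 1 + 1) ^ 2))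
          (cK δ γ E s A q (v 0) ((3 * v 1 + 1) ^ 2) (v 2)) (cT δ γ E ((3 * v 1 + 1) ^ 2)))
        (((cβ δ γ ((3 * v 1 + 1) ^ 2)) ^ (s + 2)) ^ 4) ((3 * v 1 + 1) ^ 2) ((cβ δ γ ((3 * v 1 + 1) ^ 2)) ^ r)
        (((3 * v 1 + 1) ^ 2) ^ (2 * J)) ((v 0) ^ (2 * J)) (v 2) (v 3) (v 4) (v 5) (v 6) (v 7) (v 8) (v 9)
        (v 10) (v 11)) := by
    have hb : IsPolyF (fun v : Fin 12 → ℤ => (3 * v 1 + 1) ^ 2) :=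
      .pow (.add (.mul (.const 3) (.coord 1)) (.const 1)) 2
    have hβ := IsPolyF.cβ_isPoly δ γ hb
    exact .mQ_isPoly (.concatZ_isPoly (hβ.pow _) (.coord 2) (.cM_isPoly _ _ _ _ hb)
      (.cK_isPoly _ _ _ _ _ _ (.coord 0) hb (.coord 2)) (.cT_isPoly _ _ _ hb)) ((hβ.pow _).pow _) hb (hβ.pow _)
      (hb.pow _) (.pow (.coord 0) _) (.coord 2) (.coord 3) (.coord 4) (.coord 5) (.coord 6) (.coord 7) (.coord 8)
      (.coord 9) (.coord 10) (.coord 11)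
  obtain ⟨p, hp⟩ := hpoly
  refine ⟨p, fun a => ⟨?_, ?_⟩⟩
  · rintro ⟨z, hz⟩
    rw [← hP] at hz
    obtain ⟨m, hm⟩ : ∃ m, m = a ^ 2 + a + 1 + 4 * 2 ^ (γ * r) + ∑ i, z i := ⟨_, rfl⟩
    have hmb : m < 2 ^ (2 * m) := lt_of_lt_of_le Nat.lt_two_pow_self (Nat.pow_le_pow_right (by norm_num) (by omega))
    obtain ⟨g, h, k, l, w, x, y, n, s', t, hf⟩ := final_nec hQ hδ hE hA hwE hr hs hγ hγQ1 hγQ hJ (a := a)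
      (b := 2 ^ (2 * m)) (j := 2 * m) rfl (by omega) (by omega) (by omega) z (by
        intro i
        have := Finset.single_le_sum (f := z) (fun _ _ => Nat.zero_le _) (Finset.mem_univ i)
        omega) hz
    obtain ⟨f, hfb⟩ : ∃ f : ℤ, (3 * f + 1) ^ 2 = ((2 ^ (2 * m) : ℕ) : ℤ) := by
      have : (2 ^ (2 * m) : ℕ) = ((4 : ℤ) ^ m) := by push_cast; rw [pow_mul]; norm_num
      rw [this]
      have h4 : ∃ c : ℤ, (2 : ℤ) ^ m = 3 * c + 1 ∨ -(2 : ℤ) ^ m = 3 * c + 1 := by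
        clear * -
        induction m with
        | zero => exact ⟨0, by simp⟩
        | succ k ih =>
          obtain ⟨c, h | h⟩ := ih
          · exact ⟨-2 * c - 1, Or.inr (by rw [pow_succ, h]; ring)⟩
          · refine ⟨-2 * c - 1, Or.inl ?_⟩
            rw [pow_succ]; linarith
      obtain ⟨c, hc | hc⟩ := h4
      · exact ⟨c, by rw [← hc, ← pow_mul, mul_comm, pow_mul]; norm_num⟩
      · exact ⟨c, by rw [← hc, neg_sq, ← pow_mul, mul_comm, pow_mul]; norm_num⟩
    refine ⟨![f, g, h, k, l, w, x, y, n, s', t], ?_⟩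
    rw [hp]
    rw [← hfb] at hf
    exact hf
  · rintro ⟨z, hz⟩
    rw [hp] at hz
    obtain ⟨b, hb⟩ := Int.eq_ofNat_of_zero_le (sq_nonneg (3 * z 0 + 1))
    have hb1 : 1 ≤ b := by
      have : 0 < (3 * z 0 + 1) ^ 2 := sq_pos_of_ne_zero (by omega)
      omega
    have e : (Fin.cons (a : ℤ) z : Fin 12 → ℤ) 1 = z 0 := rfl
    have e0 : (Fin.cons (a : ℤ) z : Fin 12 → ℤ) 0 = a := rfl
    beta_reduce at hz; rw [e, e0, hb] at hz
    obtain ⟨z2, hz2⟩ := final_suff hQ hδ hE hA hwE hr hs hγ hγQ1 hγQ hb1 hz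
    exact ⟨z2, by rw [← hP]; exact hz2⟩

/-- **Eleven unknowns over ℤ.** For every polynomial `P ∈ ℤ[a, z₁, …, z_ν]`
there is a polynomial `Q̃ ∈ ℤ[a, z₁, …, z₁₁]` such that, for every parameter
`a ∈ ℕ`, `P` has a solution in natural numbers iff `Q̃` has a solution in
integers. -/
theorem eleven_unknowns_over_int (ν : ℕ) (P : MvPolynomial (Fin (ν + 1)) ℤ) :
    ∃ Q : MvPolynomial (Fin 12) ℤ, ∀ a : ℕ,
      (∃ z : Fin ν → ℕ,
          MvPolynomial.eval (Fin.cons (a : ℤ) (fun i => (z i : ℤ))) P = 0) ↔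
      (∃ z : Fin 11 → ℤ, MvPolynomial.eval (Fin.cons (a : ℤ) z) Q = 0) := by
  exact final_main ν P
end

section
/- Let N be a power of 2 and let S, T ∈ ℕ with 0 ≤ S, T < N. Set R := (S + T + 1)·N + T + 1. Then τ(S, T) = 0 if and only if N² divides the binomial coefficient C(2(N−1)R, (N−1)R). -/
/-- `σ(a)`: the sum of the binary digits of `a`. -/
def binDigitSum (a : ℕ) : ℕ := (Nat.digits 2 a).sum

/-- `τ(a, b) = σ(a) + σ(b) − σ(a+b)`: the number of carries in the base-2
addition of `a` and `b`. -/
def carries (a b : ℕ) : ℤ :=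
  (binDigitSum a : ℤ) + (binDigitSum b : ℤ) - (binDigitSum (a + b) : ℤ)

theorem bds_rec (n : ℕ) : binDigitSum n = n % 2 + binDigitSum (n / 2) := by
  unfold binDigitSum
  rcases Nat.eq_zero_or_pos n with h | h
  · subst h; simp
  · rw [Nat.digits_def' (by norm_num) h]; simp

theorem bds_zero : binDigitSum 0 = 0 := by simp [binDigitSum]

theorem bds_add_mul (k : ℕ) : ∀ a b : ℕ, a < 2 ^ k →
    binDigitSum (b * 2 ^ k + a) = binDigitSum a + binDigitSum b := by
  induction k with
  | zero => intro a b h; have : a = 0 := by simpa using h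
            subst this; simp [bds_zero]
  | succ k ih =>
    intro a b h
    rw [pow_succ] at h
    rw [bds_rec, bds_rec a]
    have e : b * 2 ^ (k + 1) + a = 2 * (b * 2 ^ k) + a := by ring
    have e1 : (b * 2 ^ (k + 1) + a) % 2 = a % 2 := by omega
    have e2 : (b * 2 ^ (k + 1) + a) / 2 = b * 2 ^ k + a / 2 := by omega
    rw [e1, e2, ih _ _ (by omega)]
    ring

theorem bds_compl (k : ℕ) : ∀ a : ℕ, a < 2 ^ k →
    binDigitSum (2 ^ k - 1 - a) + binDigitSum a = k := by
  induction k with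
  | zero => intro a h; have : a = 0 := by simpa using h
            subst this; simp [bds_zero]
  | succ k ih =>
    intro a h
    rw [pow_succ] at h ⊢
    rw [bds_rec, bds_rec a]
    have e1 : (2 ^ k * 2 - 1 - a) / 2 = 2 ^ k - 1 - a / 2 := by omega
    have := ih (a / 2) (by omega)
    rw [e1]
    omega

theorem bds_add_le : ∀ (n a b c : ℕ), a + b < n → c ≤ 1 →
    binDigitSum (a + b + c) ≤ binDigitSum a + binDigitSum b + c := by
  intro n
  induction n with
  | zero => intro a b c h; omega
  | succ n ih =>
    intro a b c h hc
    by_cases h0 : a + b = 0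
    · obtain ⟨rfl, rfl⟩ : a = 0 ∧ b = 0 := by omega
      have : c = 0 ∨ c = 1 := by omega
      rcases this with rfl | rfl <;> simp [binDigitSum]
    · have := ih (a / 2) (b / 2) ((a % 2 + b % 2 + c) / 2) (by omega) (by omega)
      rw [bds_rec, bds_rec a, bds_rec b]
      have e : (a + b + c) / 2 = a / 2 + b / 2 + (a % 2 + b % 2 + c) / 2 := by omega
      rw [e]
      omega

/-- Let `N` be a power of 2 and `S, T < N`. With `R := (S+T+1)N + T + 1`,
`τ(S, T) = 0` iff `N² ∣ C(2(N−1)R, (N−1)R)`. -/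
theorem carries_eq_zero_iff_sq_dvd_choose (N S T : ℕ) (hN : ∃ k : ℕ, N = 2 ^ k)
    (hS : S < N) (hT : T < N) :
    carries S T = 0 ↔
      N ^ 2 ∣ Nat.choose (2 * ((N - 1) * ((S + T + 1) * N + T + 1)))
        ((N - 1) * ((S + T + 1) * N + T + 1)) := by
  obtain ⟨k, hk⟩ := hN
  have hm : (N - 1) * ((S + T + 1) * N + T + 1) =
      ((S + T) * N + (N - 1 - S)) * N + (N - 1 - T) := by
    obtain ⟨u, hu⟩ : ∃ u, N = S + u + 1 := ⟨N - 1 - S, by omega⟩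
    obtain ⟨v, hv⟩ : ∃ v, N = T + v + 1 := ⟨N - 1 - T, by omega⟩
    have h1 : N - 1 - S = u := by omega
    have h2 : N - 1 - T = v := by omega
    rw [h1, h2]
    have h3 : N - 1 = S + u := by omega
    rw [h3]
    zify at hu hv ⊢
    have hu' : (u : ℤ) = N - S - 1 := by linarith
    have hv' : (v : ℤ) = N - T - 1 := by linarith
    rw [hu', hv']
    ring
  set m := (N - 1) * ((S + T + 1) * N + T + 1) with hmdef
  have hσ : binDigitSum m + binDigitSum S + binDigitSum T = 2 * k + binDigitSum (S + T) := by
    have c1 := bds_compl k S (hk ▸ hS)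
    have c2 := bds_compl k T (hk ▸ hT)
    rw [hm, hk, bds_add_mul k _ _ (by omega), bds_add_mul k _ _ (by omega)]
    omega
  have hle := bds_add_le (S + T + 1) S T 0 (by omega) (by omega)
  haveI : Fact (Nat.Prime 2) := ⟨Nat.prime_two⟩
  have hv : padicValNat 2 (Nat.choose (2 * m) m) = binDigitSum m := by
    have h := sub_one_mul_padicValNat_choose_eq_sub_sum_digits' (p := 2) (k := m) (n := m)
    have h2 : binDigitSum (2 * m) = binDigitSum m := by
      rw [bds_rec]; simp
    rw [← two_mul m] at h
    change _ = binDigitSum m + binDigitSum m - binDigitSum (2 * m) at h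
    omega
  have hne : Nat.choose (2 * m) m ≠ 0 := (Nat.choose_pos (by omega)).ne'
  have hN2 : N ^ 2 = 2 ^ (2 * k) := by rw [hk, ← pow_mul, mul_comm]
  rw [hN2, padicValNat_dvd_iff_le hne, hv]
  unfold carries
  simp only [add_zero] at hle
  omega
end

section
/- Let A be an integer with A ≥ 3 and set d := A² − 4. Then a pair (X, Y) ∈ ℕ² satisfies Pell's equation X² − d·Y² = 4 if and only if there exists n ∈ ℤ such that X = χ_n(A) and Y = ψ_n(A). -/
/-- The Lucas sequence `ψ_n(A)` for natural indices:
`ψ_0 = 0`, `ψ_1 = 1`, `ψ_{n+2} = A·ψ_{n+1} − ψ_n`. -/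
def psiNat (A : ℤ) : ℕ → ℤ
  | 0 => 0
  | 1 => 1
  | n + 2 => A * psiNat A (n + 1) - psiNat A n

/-- The Lucas sequence `χ_n(A)` for natural indices:
`χ_0 = 2`, `χ_1 = A`, `χ_{n+2} = A·χ_{n+1} − χ_n`. -/
def chiNat (A : ℤ) : ℕ → ℤ
  | 0 => 2
  | 1 => A
  | n + 2 => A * chiNat A (n + 1) - chiNat A n

/-- The Lucas sequence `ψ_n(A)` for `n ∈ ℤ`: the unique solution of
`x_{n+1} = A·x_n − x_{n−1}` with `ψ_0 = 0`, `ψ_1 = 1`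
(for negative indices, `ψ_{−n} = −ψ_n`). -/
def psi (A : ℤ) : ℤ → ℤ
  | .ofNat n => psiNat A n
  | .negSucc n => -psiNat A (n + 1)

/-- The Lucas sequence `χ_n(A)` for `n ∈ ℤ`: the unique solution of
`x_{n+1} = A·x_n − x_{n−1}` with `χ_0 = 2`, `χ_1 = A`
(for negative indices, `χ_{−n} = χ_n`). -/
def chi (A : ℤ) : ℤ → ℤ
  | .ofNat n => chiNat A n
  | .negSucc n => chiNat A (n + 1)

theorem aux_step (A : ℤ) (n : ℕ) :
    2 * chiNat A (n + 1) = A * chiNat A n + (A ^ 2 - 4) * psiNat A n ∧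
    2 * psiNat A (n + 1) = A * psiNat A n + chiNat A n := by
  induction n with
  | zero => constructor <;> simp [chiNat, psiNat] <;> ring
  | succ n ih =>
    obtain ⟨h1, h2⟩ := ih
    have e1 : chiNat A (n + 1 + 1) = A * chiNat A (n + 1) - chiNat A n := rfl
    have e2 : psiNat A (n + 1 + 1) = A * psiNat A (n + 1) - psiNat A n := rfl
    rw [e1, e2]
    constructor
    · have : 2 * (2 * (A * chiNat A (n + 1) - chiNat A n)) =
        2 * (A * chiNat A (n + 1) + (A ^ 2 - 4) * psiNat A (n + 1)) := by
        linear_combination A * h1 - (A ^ 2 - 4) * h2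
      linarith
    · have : 2 * (2 * (A * psiNat A (n + 1) - psiNat A n)) =
        2 * (A * psiNat A (n + 1) + chiNat A (n + 1)) := by
        linear_combination A * h2 - h1
      linarith

theorem aux_eq (A : ℤ) (n : ℕ) :
    chiNat A n ^ 2 - (A ^ 2 - 4) * psiNat A n ^ 2 = 4 := by
  induction n with
  | zero => simp [chiNat, psiNat]
  | succ n ih =>
    obtain ⟨h1, h2⟩ := aux_step A n
    have : (2 * chiNat A (n + 1)) ^ 2 - (A ^ 2 - 4) * (2 * psiNat A (n + 1)) ^ 2 = 16 := by
      rw [h1, h2]; linear_combination 4 * ih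
    linarith

theorem aux_descent (A : ℤ) (hA : 3 ≤ A) (k : ℕ) : ∀ X Y : ℤ, 0 ≤ X → 0 ≤ Y → Y ≤ k →
    X ^ 2 - (A ^ 2 - 4) * Y ^ 2 = 4 → ∃ n : ℕ, X = chiNat A n ∧ Y = psiNat A n := by
  induction k with
  | zero =>
    intro X Y hX hY hk h
    have hY0 : Y = 0 := by push_cast at hk; omega
    subst hY0
    refine ⟨0, ?_, rfl⟩
    show X = 2
    nlinarith
  | succ k ih =>
    intro X Y hX hY hk h
    rcases hY.eq_or_lt with h0 | hpos
    · exact ih X Y hX hY (by omega) h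
    have hev : Even (A * Y - X) := by
      have : Even ((A * Y) ^ 2 - X ^ 2) := ⟨2 * Y ^ 2 - 2, by linear_combination -h⟩
      simpa [Int.even_sub, Int.even_pow] using this
    obtain ⟨t, ht⟩ := hev
    have hXt : X = A * Y - 2 * t := by linarith
    have ht0 : 0 ≤ t := by
      have : X ≤ A * Y := by
        apply le_of_pow_le_pow_left₀ two_ne_zero (by positivity)
        nlinarith
      linarith
    have htY : t < Y := by
      have : (A - 2) * Y < X := by
        apply lt_of_pow_lt_pow_left₀ 2 hX
        nlinarith [mul_pos hpos hpos]
      linarith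
    have hq : t ^ 2 - A * Y * t + Y ^ 2 = 1 := by
      rw [hXt] at h; linarith
    have hX' : 0 ≤ 2 * Y - A * t := by
      have : A * t ≤ 2 * Y := by
        by_contra hc
        push Not at hc
        nlinarith [mul_pos hpos hpos, mul_nonneg ht0 hpos.le]
      linarith
    obtain ⟨n, h1, h2⟩ := ih (2 * Y - A * t) t hX' ht0 (by push_cast at hk; omega)
      (by linear_combination 4 * hq)
    obtain ⟨s1, s2⟩ := aux_step A n
    rw [← h1, ← h2] at s1 s2
    refine ⟨n + 1, ?_, ?_⟩
    · linarith
    · linarith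

/-- **Pell's equation.** For an integer `A ≥ 3` and `d := A² − 4`, the
solutions `(X, Y) ∈ ℕ²` of `X² − d·Y² = 4` are exactly the pairs
`(χ_n(A), ψ_n(A))` for `n ∈ ℤ`. -/
theorem pell_solutions (A : ℤ) (hA : 3 ≤ A) (X Y : ℕ) :
    (X : ℤ) ^ 2 - (A ^ 2 - 4) * (Y : ℤ) ^ 2 = 4 ↔
      ∃ n : ℤ, (X : ℤ) = chi A n ∧ (Y : ℤ) = psi A n := by
  constructor
  · intro h
    obtain ⟨n, h1, h2⟩ := aux_descent A hA Y X Y (by positivity) (by positivity) le_rfl h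
    exact ⟨Int.ofNat n, h1, h2⟩
  · rintro ⟨n | n, h1, h2⟩
    · rw [h1, h2]; exact aux_eq A n
    · rw [h1, h2]
      have := aux_eq A (n + 1)
      simp only [chi, psi]
      linarith
end

section
/- Let A, n, k, r be integers with n, k, r ≥ 0. Then ψ_{nk+r}(A) = Σ_{i=0}^{n} C(n, i) · (ψ_{k+1}(A) − A·ψ_k(A))^{n−i} · ψ_k(A)^i · ψ_{r+i}(A). -/
theorem psiNat_add_aux (A : ℤ) (k : ℕ) : ∀ m : ℕ,
    psiNat A (k + m) = psiNat A k * psiNat A (m + 1)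
      + (psiNat A (k + 1) - A * psiNat A k) * psiNat A m
  | 0 => by simp [psiNat]
  | 1 => by simp [psiNat]; ring
  | m + 2 => by
    have h1 := psiNat_add_aux A k m
    have h2 := psiNat_add_aux A k (m + 1)
    have e1 : psiNat A (k + (m + 2)) = A * psiNat A (k + (m + 1)) - psiNat A (k + m) := rfl
    have e2 : psiNat A (m + 2 + 1) = A * psiNat A (m + 1 + 1) - psiNat A (m + 1) := rfl
    have e3 : psiNat A (m + 2) = A * psiNat A (m + 1) - psiNat A m := rfl
    rw [e1, e2, h1, h2]
    rw [show m + 1 + 1 = m + 2 from rfl, e3]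
    ring

theorem psiNat_expansion_aux (A : ℤ) (k n : ℕ) : ∀ r : ℕ,
    psiNat A (n * k + r) =
      ∑ i ∈ Finset.range (n + 1),
        (n.choose i : ℤ) * ((psiNat A (k + 1) - A * psiNat A k) ^ (n - i) *
          psiNat A k ^ i * psiNat A (r + i)) := by
  induction n with
  | zero => intro r; simp
  | succ n ih =>
    intro r
    have h := Finset.sum_choose_succ_mul (R := ℤ) (fun i j =>
      (psiNat A (k + 1) - A * psiNat A k) ^ j * psiNat A k ^ i * psiNat A (r + i)) n
    rw [show n + 1 + 1 = n + 2 from rfl, h,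
      show (n + 1) * k + r = n * k + (k + r) by ring, ih, ← Finset.sum_add_distrib]
    refine Finset.sum_congr rfl fun i hi => ?_
    have hi' : i ≤ n := Nat.lt_succ_iff.mp (Finset.mem_range.mp hi)
    rw [show k + r + i = k + (r + i) by ring, psiNat_add_aux A k (r + i),
      show n + 1 - i = n - i + 1 by omega, show r + (i + 1) = r + i + 1 by ring]
    ring

/-- For `n, k, r ≥ 0`:
`ψ_{nk+r}(A) = ∑_{i=0}^n C(n,i)·(ψ_{k+1}(A) − A·ψ_k(A))^{n−i}·ψ_k(A)^i·ψ_{r+i}(A)`. -/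
theorem psi_linear_expansion (A : ℤ) (n k r : ℕ) :
    psi A ((n * k + r : ℕ) : ℤ) =
      ∑ i ∈ Finset.range (n + 1),
        (n.choose i : ℤ) * (psi A ((k + 1 : ℕ) : ℤ) - A * psi A (k : ℤ)) ^ (n - i) *
          (psi A (k : ℤ)) ^ i * psi A ((r + i : ℕ) : ℤ) := by
  have h := psiNat_expansion_aux A k n r
  simp only [← mul_assoc] at h
  exact h
end

section
/- Let A, k, m be integers with |A| ≥ 2 and k > 0, and suppose ψ_k(A)² divides ψ_m(A). Then ψ_k(A) divides m. -/
theorem psiNat_rec (A : ℤ) (n : ℕ) : psiNat A (n + 2) = A * psiNat A (n + 1) - psiNat A n := rfl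

theorem psiNat_add (A : ℤ) (k j : ℕ) :
    psiNat A (k + j) = psiNat A (k + 1) * psiNat A j + psiNat A k * psiNat A (j + 1)
      - A * psiNat A k * psiNat A j ∧
    psiNat A (k + j + 1) = psiNat A (k + 1) * psiNat A (j + 1) - psiNat A k * psiNat A j := by
  induction j with
  | zero => simp [psiNat]
  | succ j ih =>
    obtain ⟨h1, h2⟩ := ih
    refine ⟨?_, ?_⟩
    · rw [← add_assoc, h2, psiNat_rec]; ring
    · rw [← add_assoc, psiNat_rec, h1, h2, psiNat_rec]; ring

theorem psiNat_pell (A : ℤ) (n : ℕ) :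
    psiNat A (n + 1) ^ 2 - A * psiNat A n * psiNat A (n + 1) + psiNat A n ^ 2 = 1 := by
  induction n with
  | zero => simp [psiNat]
  | succ n ih => rw [psiNat_rec]; linear_combination ih

theorem psiNat_coprime (A : ℤ) (n : ℕ) : IsCoprime (psiNat A n) (psiNat A (n + 1)) :=
  ⟨psiNat A n - A * psiNat A (n + 1), psiNat A (n + 1), by linear_combination psiNat_pell A n⟩

theorem psiNat_abs_lt_succ (A : ℤ) (hA : 2 ≤ |A|) (n : ℕ) :
    |psiNat A n| < |psiNat A (n + 1)| := by
  induction n with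
  | zero => simp [psiNat]
  | succ n ih =>
    rw [psiNat_rec]
    have h1 := abs_sub_abs_le_abs_sub (A * psiNat A (n + 1)) (psiNat A n)
    rw [abs_mul] at h1
    nlinarith [abs_nonneg (psiNat A (n + 1))]

theorem psiNat_abs_strictMono (A : ℤ) (hA : 2 ≤ |A|) : StrictMono fun n => |psiNat A n| :=
  strictMono_nat_of_lt_succ (psiNat_abs_lt_succ A hA)

theorem dvd_of_psiNat_dvd (A : ℤ) (hA : 2 ≤ |A|) (k : ℕ) (hk : 0 < k) (m : ℕ)
    (h : psiNat A k ∣ psiNat A m) : k ∣ m := by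
  induction m using Nat.strong_induction_on with
  | _ m ih =>
    rcases lt_or_ge m k with hm | hm
    · have h0 : psiNat A m = 0 :=
        Int.eq_zero_of_abs_lt_dvd ((abs_dvd _ _).2 h) (psiNat_abs_strictMono A hA hm)
      rcases Nat.eq_zero_or_pos m with h1 | h1
      · simp [h1]
      · have := psiNat_abs_strictMono A hA h1
        simp [h0, psiNat] at this
    · obtain ⟨j, rfl⟩ := Nat.exists_eq_add_of_le hm
      have h2 : psiNat A k ∣ psiNat A (k + 1) * psiNat A j := by
        have e : psiNat A (k + 1) * psiNat A j = psiNat A (k + j)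
            - psiNat A k * (psiNat A (j + 1) - A * psiNat A j) := by
          rw [(psiNat_add A k j).1]; ring
        rw [e]
        exact dvd_sub h (dvd_mul_right _ _)
      have h3 := ih j (by omega) ((psiNat_coprime A k).dvd_of_dvd_mul_left h2)
      exact (Nat.dvd_add_right (dvd_refl k)).2 h3

theorem psiNat_mul (A : ℤ) (k n : ℕ) : ∃ c d e : ℤ,
    psiNat A (k * n) = psiNat A k * c ∧
    psiNat A (k * n + 1) = psiNat A (k + 1) ^ n + psiNat A k * d ∧
    psiNat A (k + 1) * c = n * psiNat A (k + 1) ^ n + psiNat A k * e := by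
  induction n with
  | zero => exact ⟨0, 0, 0, by simp [psiNat]⟩
  | succ n ih =>
    obtain ⟨c, d, e, h1, h2, h3⟩ := ih
    obtain ⟨a1, a2⟩ := psiNat_add A k (k * n)
    rw [show k * (n + 1) = k + k * n by ring, a1, a2, h1, h2]
    generalize psiNat A k = p at *
    generalize psiNat A (k + 1) = u at *
    refine ⟨u * c + u ^ n + p * d - A * p * c, u * d - p * c, u * e + u * d - A * u * c, ?_, ?_, ?_⟩
    · ring
    · ring
    · push_cast
      linear_combination u * h3

theorem psiNat_main (A : ℤ) (hA : 2 ≤ |A|) (k m : ℕ) (hk : 0 < k)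
    (h : psiNat A k ^ 2 ∣ psiNat A m) : psiNat A k ∣ (m : ℤ) := by
  obtain ⟨n, rfl⟩ := dvd_of_psiNat_dvd A hA k hk m ((dvd_pow_self _ two_ne_zero).trans h)
  obtain ⟨c, d, e, h1, -, h3⟩ := psiNat_mul A k n
  have hp : psiNat A k ≠ 0 := by
    intro h0
    have := psiNat_abs_strictMono A hA hk
    simp [h0, psiNat] at this
  rw [h1, sq] at h
  have hc : psiNat A k ∣ c := Int.dvd_of_mul_dvd_mul_left hp h
  have h4 : psiNat A k ∣ n * psiNat A (k + 1) ^ n := by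
    rw [← sub_eq_iff_eq_add.2 h3]
    exact dvd_sub (hc.mul_left _) (dvd_mul_right _ _)
  have h5 := ((psiNat_coprime A k).pow_right (n := n)).dvd_of_dvd_mul_right h4
  push_cast
  exact h5.mul_left _

/-- If `|A| ≥ 2`, `k > 0` and `ψ_k(A)² ∣ ψ_m(A)`, then `ψ_k(A) ∣ m`. -/
theorem psi_sq_dvd_psi (A k m : ℤ) (hA : 2 ≤ |A|) (hk : 0 < k)
    (h : (psi A k) ^ 2 ∣ psi A m) :
    psi A k ∣ m := by
  match k, hk with
  | .ofNat k, hk =>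
    have hk' : 0 < k := by simpa using hk
    match m with
    | .ofNat m => exact psiNat_main A hA k m hk' h
    | .negSucc m =>
      have h' := psiNat_main A hA k (m + 1) hk' ((dvd_neg).1 h)
      rw [Int.negSucc_eq, dvd_neg]
      exact_mod_cast h'
end

section
/- Let A, n, k be integers with A > 2 and n > 3 such that χ_n(A) = 2k. Then the map Ψ : [−n, n] → ℤ/kℤ defined by Ψ(i) = ψ_i(A) mod k is injective; that is, for all integers i, j with −n ≤ i, j ≤ n, if ψ_i(A) ≡ ψ_j(A) (mod k) then i = j. -/
theorem psiNat_step (A : ℤ) (hA : 2 < A) (m : ℕ) :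
    0 ≤ psiNat A m ∧ 2 * psiNat A m + 1 ≤ psiNat A (m + 1) := by
  induction m with
  | zero => simp [psiNat]
  | succ m ih =>
    obtain ⟨h0, h1⟩ := ih
    have e : psiNat A (m + 1 + 1) = A * psiNat A (m + 1) - psiNat A m := rfl
    refine ⟨by linarith, ?_⟩
    rw [e]
    nlinarith

theorem chiNat_eq (A : ℤ) (m : ℕ) :
    chiNat A (m + 1) = A * psiNat A (m + 1) - 2 * psiNat A m ∧
    chiNat A (m + 2) = A * psiNat A (m + 2) - 2 * psiNat A (m + 1) := by
  induction m with
  | zero => constructor <;> simp [psiNat, chiNat]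
  | succ m ih =>
    obtain ⟨h0, h1⟩ := ih
    refine ⟨h1, ?_⟩
    have e : chiNat A (m + 1 + 2) = A * chiNat A (m + 2) - chiNat A (m + 1) := rfl
    have e1 : psiNat A (m + 1 + 2) = A * psiNat A (m + 2) - psiNat A (m + 1) := rfl
    have e2 : psiNat A (m + 1 + 1) = A * psiNat A (m + 1) - psiNat A m := rfl
    have e3 : psiNat A (m + 2) = A * psiNat A (m + 1) - psiNat A m := rfl
    rw [e, h0, h1, e1, e2]
    ring

theorem psi_natCast (A : ℤ) (m : ℕ) : psi A (m : ℤ) = psiNat A m := rfl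

theorem psi_neg' (A : ℤ) (x : ℤ) : psi A (-x) = - psi A x := by
  rcases x with m | m
  · cases m with
    | zero => simp [psi, psiNat]
    | succ m => rfl
  · have : -(Int.negSucc m) = ((m + 1 : ℕ) : ℤ) := rfl
    rw [this, psi_natCast]
    simp [psi]

theorem psi_strictMono (A : ℤ) (hA : 2 < A) : StrictMono (psi A) := by
  apply strictMono_int_of_lt_succ
  intro x
  rcases x with m | m
  · have h := psiNat_step A hA m
    have : (Int.ofNat m + 1) = ((m + 1 : ℕ) : ℤ) := rfl
    rw [this, psi_natCast]
    change psiNat A m < _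
    linarith
  · have h := psiNat_step A hA m
    have : (Int.negSucc m + 1) = -(m : ℤ) := by
      rw [Int.negSucc_eq]; ring
    rw [this, psi_neg', psi_natCast]
    change -psiNat A (m + 1) < _
    linarith

theorem psi_residues_aux (A n k : ℤ) (hA : 2 < A) (hn : 3 < n)
    (hchi : chi A n = 2 * k)
    (i j : ℤ) (hi₂ : i ≤ n) (hj₁ : -n ≤ j)
    (h : k ∣ psi A i - psi A j) (hij : j < i) : False := by
  obtain ⟨N, rfl⟩ : ∃ N : ℕ, n = ((N + 4 : ℕ) : ℤ) := ⟨(n - 4).toNat, by omega⟩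
  have hm := psi_strictMono A hA
  have hc : chiNat A (N + 4) = 2 * k := hchi
  rw [(chiNat_eq A (N + 2)).2] at hc
  have hb0 := (psiNat_step A hA N).1
  have hb := (psiNat_step A hA N).2
  have ha := (psiNat_step A hA (N + 1)).2
  have hcc := (psiNat_step A hA (N + 2)).2
  have hd := (psiNat_step A hA (N + 3)).2
  have ec : psiNat A (N + 3) = A * psiNat A (N + 2) - psiNat A (N + 1) := rfl
  have ed : psiNat A (N + 4) = A * psiNat A (N + 3) - psiNat A (N + 2) := rfl
  obtain ⟨l, rfl⟩ : ∃ l, j = -l := ⟨-j, by ring⟩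
  rw [psi_neg'] at h
  have hpos : 0 < psi A i + psi A l := by
    have := hm hij
    rw [psi_neg'] at this
    linarith
  have hl : l ≤ ((N + 4 : ℕ) : ℤ) := by linarith
  have top : ∀ x : ℤ, x ≤ ((N + 4 : ℕ) : ℤ) →
      psi A x = psiNat A (N + 4) ∨ psi A x = psiNat A (N + 3) ∨ psi A x = psiNat A (N + 2) ∨
        psi A x ≤ psiNat A (N + 1) := by
    intro x hx
    rcases (by push_cast at hx ⊢; omega : x = ((N + 4 : ℕ) : ℤ) ∨ x = ((N + 3 : ℕ) : ℤ) ∨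
      x = ((N + 2 : ℕ) : ℤ) ∨ x ≤ ((N + 1 : ℕ) : ℤ)) with e | e | e | e
    · left; rw [e]; rfl
    · right; left; rw [e]; rfl
    · right; right; left; rw [e]; rfl
    · right; right; right; exact hm.monotone e
  have ti := top i hi₂
  have tl := top l hl
  clear top
  obtain ⟨t, ht⟩ := h
  rw [sub_neg_eq_add] at ht
  generalize psi A i = u at *
  generalize psi A l = v at *
  change A * psiNat A (N + 4) - 2 * psiNat A (N + 3) = 2 * k at hc
  change 2 * psiNat A (N + 1) + 1 ≤ psiNat A (N + 2) at ha
  change 2 * psiNat A (N + 2) + 1 ≤ psiNat A (N + 3) at hcc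
  change 2 * psiNat A (N + 3) + 1 ≤ psiNat A (N + 4) at hd
  generalize psiNat A (N + 1) = b at *
  generalize psiNat A (N + 2) = a at *
  generalize psiNat A (N + 3) = c at *
  generalize psiNat A (N + 4) = d at *
  have hkd : d < k := by nlinarith
  have hu : u ≤ d := by rcases ti with e | e | e | e <;> linarith
  have hv : v ≤ d := by rcases tl with e | e | e | e <;> linarith
  have t1 : t = 1 := by
    have h1 : 0 < t := by
      by_contra hh
      nlinarith
    have h2 : t < 2 := by
      by_contra hh
      nlinarith
    omega
  subst t1
  rcases (by omega : A = 3 ∨ A = 4 ∨ 5 ≤ A) with e | e | e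
  · subst e; omega
  · subst e; omega
  · nlinarith

/-- Let `A > 2`, `n > 3` with `χ_n(A) = 2k`.  Then the residues
`ψ_i(A) mod k` for `i ∈ [−n, n]` are pairwise distinct: if
`ψ_i(A) ≡ ψ_j(A) (mod k)` for `i, j ∈ [−n, n]`, then `i = j`. -/
theorem psi_residues_injective (A n k : ℤ) (hA : 2 < A) (hn : 3 < n)
    (hchi : chi A n = 2 * k)
    (i j : ℤ) (hi₁ : -n ≤ i) (hi₂ : i ≤ n) (hj₁ : -n ≤ j) (hj₂ : j ≤ n)
    (h : psi A i ≡ psi A j [ZMOD k]) :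
    i = j := by
  rcases lt_trichotomy i j with hl | he | hg
  · exact (psi_residues_aux A n k hA hn hchi j i hj₂ hi₁ h.dvd hl).elim
  · exact he
  · exact (psi_residues_aux A n k hA hn hchi i j hi₂ hj₁ h.symm.dvd hg).elim
end
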